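/- For every permutation σ ∈ S₅, every connected component of the set BL_σ ⊂ Lo¹₅ is contractible. -/

import Mathlib

open Matrix

/-- The group `Lo¹_m` of real lower triangular `m × m` matrices with
all diagonal entries equal to `1`, viewed as a subset of the matrix space. -/
def Lo1 (m : ℕ) : Set (Matrix (Fin m) (Fin m) ℝ) :=
  {L | (∀ i, L i i = 1) ∧ ∀ i j : Fin m, i < j → L i j = 0}

/-- The set of invertible real upper triangular `m × m` matrices. -/
def UpInv (m : ℕ) : Set (Matrix (Fin m) (Fin m) ℝ) :=
  {U | (∀ i j : Fin m, j < i → U i j = 0) ∧ IsUnit U.det}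

/-- The permutation matrix of `σ`, with `(P_σ)_{i, σ(i)} = 1` and `0` otherwise. -/
def permMat (m : ℕ) (σ : Equiv.Perm (Fin m)) : Matrix (Fin m) (Fin m) ℝ :=
  fun i j => if σ i = j then 1 else 0

/-- The Bruhat cell `Bru_σ^GL = { U₀ P_σ U₁ : U₀, U₁ upper triangular invertible }`. -/
def Bru (m : ℕ) (σ : Equiv.Perm (Fin m)) : Set (Matrix (Fin m) (Fin m) ℝ) :=
  {M | ∃ U₀ ∈ UpInv m, ∃ U₁ ∈ UpInv m, M = U₀ * permMat m σ * U₁}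

/-- `BL_σ = Lo¹ ∩ Bru_σ^GL`. -/
def BL (m : ℕ) (σ : Equiv.Perm (Fin m)) : Set (Matrix (Fin m) (Fin m) ℝ) :=
  Lo1 m ∩ Bru m σ


section helpers
open Set Topology


/-- Discrete homotopy type (set level). -/
def DC {A : Type*} [TopologicalSpace A] (S : Set A) : Prop :=
  ∃ H : A × ℝ → A, ContinuousOn H (S ×ˢ Icc (0:ℝ) 1) ∧
    (∀ x ∈ S, ∀ t ∈ Icc (0:ℝ) 1, H (x, t) ∈ S) ∧ (∀ x ∈ S, H (x, 0) = x) ∧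
    (∀ x ∈ S, ∀ᶠ y in 𝓝[S] x, H (y, 1) = H (x, 1))

/-- Contractible (set level), to a chosen point. -/
def Contr {A : Type*} [TopologicalSpace A] (S : Set A) : Prop :=
  ∃ x0 ∈ S, ∃ H : A × ℝ → A, ContinuousOn H (S ×ˢ Icc (0:ℝ) 1) ∧
    (∀ x ∈ S, ∀ t ∈ Icc (0:ℝ) 1, H (x, t) ∈ S) ∧ (∀ x ∈ S, H (x, 0) = x) ∧
    (∀ x ∈ S, H (x, 1) = x0)

theorem Contr.dc {A : Type*} [TopologicalSpace A] {S : Set A} (h : Contr S) : DC S := by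
  obtain ⟨x0, -, H, h1, h2, h3, h4⟩ := h
  refine ⟨H, h1, h2, h3, fun x hx => ?_⟩
  filter_upwards [self_mem_nhdsWithin] with y hy
  rw [h4 y hy, h4 x hx]

theorem DC_empty {A : Type*} [TopologicalSpace A] : DC (∅ : Set A) :=
  ⟨fun p => p.1, by simp, by simp, by simp, by simp⟩

/-- retracts -/
theorem DC.retract {A B : Type*} [TopologicalSpace A] [TopologicalSpace B] {S : Set A} {T : Set B}
    (hT : DC T) (f : A → B) (g : B → A) (hf : ContinuousOn f S) (hg : ContinuousOn g T)
    (hfm : MapsTo f S T) (hgm : MapsTo g T S) (hgf : ∀ x ∈ S, g (f x) = x) : DC S := by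
  obtain ⟨H, h1, h2, h3, h4⟩ := hT
  refine ⟨fun p => g (H (f p.1, p.2)), ?_, ?_, ?_, ?_⟩
  · refine hg.comp (h1.comp (ContinuousOn.prodMk (hf.comp continuousOn_fst ?_) continuousOn_snd) ?_) ?_
    · intro p hp; exact hp.1
    · intro p hp; exact ⟨hfm hp.1, hp.2⟩
    · intro p hp; exact h2 _ (hfm hp.1) _ hp.2
  · intro x hx t ht; exact hgm (h2 _ (hfm hx) _ ht)
  · intro x hx; simp only; rw [h3 _ (hfm hx), hgf x hx]
  · intro x hx
    have := (hf x hx).tendsto_nhdsWithin hfm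
    filter_upwards [this.eventually (h4 _ (hfm hx))] with y hy
    simp only [hy]

/-- retracts -/
theorem Contr.retract {A B : Type*} [TopologicalSpace A] [TopologicalSpace B] {S : Set A} {T : Set B}
    (hT : Contr T) (f : A → B) (g : B → A) (hf : ContinuousOn f S) (hg : ContinuousOn g T)
    (hfm : MapsTo f S T) (hgm : MapsTo g T S) (hgf : ∀ x ∈ S, g (f x) = x) : Contr S := by
  obtain ⟨x0, hx0, H, h1, h2, h3, h4⟩ := hT
  refine ⟨g x0, hgm hx0, fun p => g (H (f p.1, p.2)), ?_, ?_, ?_, ?_⟩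
  · refine hg.comp (h1.comp (ContinuousOn.prodMk (hf.comp continuousOn_fst ?_) continuousOn_snd) ?_) ?_
    · intro p hp; exact hp.1
    · intro p hp; exact ⟨hfm hp.1, hp.2⟩
    · intro p hp; exact h2 _ (hfm hp.1) _ hp.2
  · intro x hx t ht; exact hgm (h2 _ (hfm hx) _ ht)
  · intro x hx; simp only; rw [h3 _ (hfm hx), hgf x hx]
  · intro x hx
    simp only [h4 _ (hfm hx)]

/-- disjoint unions of relatively open pieces, given by a locally constant label -/
theorem DC_label {A ι : Type*} [TopologicalSpace A] {S : Set A} (l : A → ι)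
    (hl : ∀ x ∈ S, ∀ᶠ y in 𝓝[S] x, l y = l x) (h : ∀ i, DC {x ∈ S | l x = i}) : DC S := by
  choose H h1 h2 h3 h4 using h
  have key : ∀ x ∈ S, 𝓝[S] x = 𝓝[{y ∈ S | l y = l x}] x := by
    intro x hx
    apply le_antisymm
    · rw [nhdsWithin, nhdsWithin]
      refine le_inf inf_le_left ?_
      rw [Filter.le_principal_iff]
      filter_upwards [hl x hx, self_mem_nhdsWithin] with y hy hy'
      exact ⟨hy', hy⟩
    · exact nhdsWithin_mono _ (fun y hy => hy.1)
  refine ⟨fun p => H (l p.1) p, ?_, ?_, ?_, ?_⟩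
  · rintro ⟨x, t⟩ ⟨hx, ht⟩
    have c := h1 (l x) (x, t) ⟨⟨hx, rfl⟩, ht⟩
    have e : 𝓝[S ×ˢ Icc (0:ℝ) 1] (x, t) = 𝓝[{y ∈ S | l y = l x} ×ˢ Icc (0:ℝ) 1] (x, t) := by
      rw [nhdsWithin_prod_eq, nhdsWithin_prod_eq, key x hx]
    rw [ContinuousWithinAt, e]
    refine Filter.Tendsto.congr' ?_ c
    filter_upwards [self_mem_nhdsWithin] with y hy
    rw [hy.1.2]
  · intro x hx t ht; exact (h2 (l x) x ⟨hx, rfl⟩ t ht).1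
  · intro x hx; exact h3 (l x) x ⟨hx, rfl⟩
  · intro x hx
    have := h4 (l x) x ⟨hx, rfl⟩
    rw [key x hx]
    filter_upwards [this, self_mem_nhdsWithin] with y hy hy'
    simp only [hy'.2, hy]

theorem DC_sign {A : Type*} [TopologicalSpace A] {S : Set A} (h : A → ℝ)
    (hc : ContinuousOn h S) (h0 : ∀ x ∈ S, h x ≠ 0)
    (hp : ∀ e : ℝ, (e = 1 ∨ e = -1) → DC {x ∈ S | 0 < e * h x}) : DC S := by
  apply DC_label (fun x => decide (0 < h x))
  · intro x hx
    rcases lt_or_gt_of_ne (h0 x hx) with h' | h'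
    · filter_upwards [(hc x hx).eventually (gt_mem_nhds h')] with y hy
      simp [not_lt.2 hy.le, not_lt.2 h'.le]
    · filter_upwards [(hc x hx).eventually (lt_mem_nhds h')] with y hy
      simp [hy, h']
  · intro b
    cases b
    · convert hp (-1) (Or.inr rfl) using 1
      ext x
      simp only [mem_setOf_eq, decide_eq_false_iff_not, not_lt]
      constructor
      · rintro ⟨a, b⟩; exact ⟨a, by have := lt_of_le_of_ne b (h0 x a); linarith⟩
      · rintro ⟨a, b⟩; exact ⟨a, by linarith⟩
    · convert hp 1 (Or.inl rfl) using 1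
      ext x; simp

theorem DC.contractible {A : Type*} [TopologicalSpace A] {S : Set A} (h : DC S) (x : S) :
    ContractibleSpace (connectedComponent x) := by
  obtain ⟨H, h1, h2, h3, h4⟩ := h
  -- the homotopy on the subtype
  let F : S × unitInterval → S := fun p => ⟨H (p.1, p.2), h2 _ p.1.2 _ p.2.2⟩
  have hF : Continuous F := by
    refine Continuous.subtype_mk ?_ _
    have : Continuous (fun p : S × unitInterval =>
        (⟨((p.1 : A), (p.2 : ℝ)), ⟨p.1.2, p.2.2⟩⟩ : (S ×ˢ Icc (0:ℝ) 1 : Set (A × ℝ)))) := by fun_prop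
    exact (continuousOn_iff_continuous_restrict.1 h1).comp this
  have hF0 : ∀ y, F (y, 0) = y := fun y => Subtype.ext (h3 y y.2)
  have hloc : IsLocallyConstant (fun y => F (y, 1)) := by
    rw [IsLocallyConstant.iff_eventually_eq]
    intro y
    have := h4 y y.2
    rw [nhdsWithin_eq_map_subtype_coe y.2, Filter.eventually_map] at this
    filter_upwards [this] with z hz
    exact Subtype.ext hz
  have hmem : ∀ y ∈ connectedComponent x, ∀ t, F (y, t) ∈ connectedComponent x := by
    intro y hy t
    have hpre : IsPreconnected (range (fun t => F (y, t))) :=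
      isPreconnected_range (hF.comp (by fun_prop))
    have : range (fun t => F (y, t)) ⊆ connectedComponent y :=
      hpre.subset_connectedComponent ⟨0, hF0 y⟩
    rw [← connectedComponent_eq hy] at this
    exact this ⟨t, rfl⟩
  have hconst : ∀ y ∈ connectedComponent x, F (y, 1) = F (x, 1) := by
    intro y hy
    exact hloc.apply_eq_of_isPreconnected isPreconnected_connectedComponent hy mem_connectedComponent
  rw [contractible_iff_id_nullhomotopic]
  refine ⟨⟨F (x, 1), hmem _ mem_connectedComponent _⟩, ⟨⟨⟨fun p => ⟨F (p.2, p.1), hmem _ p.2.2 _⟩, ?_⟩, ?_, ?_⟩⟩⟩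
  · refine Continuous.subtype_mk ?_ _
    exact hF.comp (by fun_prop)
  · intro y; exact Subtype.ext (hF0 _)
  · intro y; exact Subtype.ext (hconst _ y.2)

/-- eliminating a variable occurring linearly in one strict inequality -/
theorem DC_elim {A : Type*} [TopologicalSpace A] {S : Set A} (a b : A → ℝ)
    (ha : ContinuousOn a S) (hb : ContinuousOn b S)
    (h : DC {x ∈ S | a x ≠ 0 ∨ 0 < b x}) :
    DC {p : A × ℝ | p.1 ∈ S ∧ 0 < b p.1 + p.2 * a p.1} := by
  obtain ⟨H, h1, h2, h3, h4⟩ := h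
  set T := {x ∈ S | a x ≠ 0 ∨ 0 < b x} with hTdef
  set X := {p : A × ℝ | p.1 ∈ S ∧ 0 < b p.1 + p.2 * a p.1} with hXdef
  let s : A → ℝ := fun x => a x * (max 0 (-b x) / (a x)^2 + 1)
  have hTS : T ⊆ S := fun x hx => hx.1
  have hXT : ∀ p ∈ X, p.1 ∈ T := by
    rintro ⟨x, t⟩ ⟨hx, ht⟩
    refine ⟨hx, ?_⟩
    by_contra hcon
    push Not at hcon
    simp only at ht
    rw [hcon.1] at ht
    linarith [hcon.2]
  have hs : ∀ x ∈ T, 0 < b x + s x * a x := by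
    rintro x ⟨hx, h⟩
    simp only [s]
    by_cases h0 : a x = 0
    · simp only [h0, ne_eq, not_true_eq_false, false_or] at h; simp [h0, h]
    · have : b x + a x * (max 0 (-b x) / (a x)^2 + 1) * a x = (b x + max 0 (-b x)) + (a x)^2 := by
        field_simp
        ring
      rw [this]
      have := le_max_right 0 (-b x)
      have : 0 < (a x)^2 := by positivity
      linarith
  have hsc : ContinuousOn s T := by
    intro x hx
    have hax := (ha x hx.1).mono hTS
    have hbx := (hb x hx.1).mono hTS
    refine hax.mul (ContinuousWithinAt.add ?_ continuousWithinAt_const)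
    by_cases h0 : a x = 0
    · have hb0 : 0 < b x := by rcases hx.2 with h | h; exacts [absurd h0 h, h]
      have : ∀ᶠ y in 𝓝[T] x, max 0 (-b y) / (a y)^2 = 0 := by
        filter_upwards [hbx.eventually (lt_mem_nhds hb0)] with y hy
        rw [max_eq_left (by linarith)]; simp
      refine (continuousWithinAt_const (b := (0:ℝ))).congr_of_eventuallyEq this ?_
      rw [max_eq_left (by linarith)]; simp
    · refine ContinuousWithinAt.div ?_ (hax.pow 2) (by positivity)
      exact continuousWithinAt_const.max hbx.neg
  let c : ℝ → ℝ := fun t => max 0 (2*t-1)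
  let d : ℝ → ℝ := fun t => min 1 (2*t)
  have hc : ∀ t ∈ Icc (0:ℝ) 1, c t ∈ Icc (0:ℝ) 1 := by
    intro t ht; exact ⟨le_max_left _ _, max_le (by norm_num) (by linarith [ht.2])⟩
  have hd : ∀ t ∈ Icc (0:ℝ) 1, d t ∈ Icc (0:ℝ) 1 := by
    intro t ht; exact ⟨le_min (by norm_num) (by linarith [ht.1]), min_le_left _ _⟩
  have hcc : Continuous c := by fun_prop
  have hdc : Continuous d := by fun_prop
  have hG : ContinuousOn (fun q : (A × ℝ) × ℝ => H (q.1.1, c q.2)) (X ×ˢ Icc (0:ℝ) 1) := by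
    refine h1.comp (by fun_prop) ?_
    intro q hq; exact ⟨hXT q.1 hq.1, hc _ hq.2⟩
  have hGm : MapsTo (fun q : (A × ℝ) × ℝ => H (q.1.1, c q.2)) (X ×ˢ Icc (0:ℝ) 1) T := by
    intro q hq; exact h2 _ (hXT q.1 hq.1) _ (hc _ hq.2)
  refine ⟨fun q => (H (q.1.1, c q.2), (1 - d q.2) * q.1.2 + d q.2 * s (H (q.1.1, c q.2))), ?_, ?_, ?_, ?_⟩
  · refine hG.prodMk (ContinuousOn.add (by fun_prop) (ContinuousOn.mul (by fun_prop) ?_))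
    exact hsc.comp hG hGm
  · rintro ⟨x, τ⟩ hx t ht
    have hm : H (x, c t) ∈ T := hGm (x := ((x, τ), t)) ⟨hx, ht⟩
    refine ⟨hm.1, ?_⟩
    simp only
    rcases le_total t (1/2) with h' | h'
    · have : c t = 0 := max_eq_left (by linarith)
      rw [this, h3 x (hXT _ hx)]
      have e1 := hs x (hXT _ hx)
      have e2 : 0 < b x + τ * a x := hx.2
      have e3 := hd t ht
      rcases eq_or_lt_of_le e3.1 with e | e
      · rw [← e]; simpa using e2
      · nlinarith [mul_pos e e1, mul_nonneg (sub_nonneg.2 e3.2) e2.le]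
    · have : d t = 1 := min_eq_left (by linarith)
      rw [this]
      simpa using hs _ hm
  · rintro ⟨x, τ⟩ hx
    have hc0 : c 0 = 0 := by simp [c]
    have hd0 : d 0 = 0 := by simp [d]
    simp [hc0, hd0, h3 x (hXT _ hx)]
  · rintro ⟨x, τ⟩ hx
    have hc1 : c 1 = 1 := by simp only [c]; norm_num
    have hd1 : d 1 = 1 := by simp only [d]; norm_num
    have : Filter.Tendsto (fun p : A × ℝ => p.1) (𝓝[X] (x, τ)) (𝓝[T] x) :=
      (continuous_fst.continuousWithinAt).tendsto_nhdsWithin (fun p hp => hXT p hp)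
    filter_upwards [this.eventually (h4 x (hXT _ hx))] with y hy
    simp only [hc1, hd1, hy]
    simp

theorem DC.clopen {A : Type*} [TopologicalSpace A] {S : Set A} (h : DC S) (D : A → ℝ)
    (hD : ContinuousOn D S) (h0 : ∀ x ∈ S, D x ≠ 0) : DC {x ∈ S | 0 < D x} := by
  obtain ⟨H, h1, h2, h3, h4⟩ := h
  have hD' : ∀ x ∈ S, ∀ t ∈ Icc (0:ℝ) 1, 0 < D x → 0 < D (H (x,t)) := by
    intro x hx t ht hp
    by_contra hcon
    push Not at hcon
    have hcont : ContinuousOn (fun t => D (H (x, t))) (Icc 0 t) := by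
      refine (hD.comp (h1.comp (by fun_prop) ?_) ?_)
      · intro s hs; exact ⟨hx, ⟨hs.1, hs.2.trans ht.2⟩⟩
      · intro s hs; exact h2 _ hx _ ⟨hs.1, hs.2.trans ht.2⟩
    have := intermediate_value_Icc' ht.1 hcont
    have hm : (0:ℝ) ∈ Icc (D (H (x, t))) (D (H (x, 0))) :=
      ⟨hcon, by rw [h3 x hx]; exact hp.le⟩
    obtain ⟨s, hs, hs'⟩ := this hm
    exact h0 _ (h2 x hx s ⟨hs.1, hs.2.trans ht.2⟩) hs'
  refine ⟨H, h1.mono (prod_mono_left (fun x hx => hx.1)), ?_, fun x hx => h3 x hx.1, ?_⟩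
  · intro x hx t ht; exact ⟨h2 x hx.1 t ht, hD' x hx.1 t ht hx.2⟩
  · intro x hx; exact (h4 x hx.1).filter_mono (nhdsWithin_mono _ (fun x hx => hx.1))

theorem DC.prod {A B : Type*} [TopologicalSpace A] [TopologicalSpace B] {S : Set A} {T : Set B}
    (hS : DC S) (hT : DC T) : DC (S ×ˢ T) := by
  obtain ⟨H, h1, h2, h3, h4⟩ := hS
  obtain ⟨K, k1, k2, k3, k4⟩ := hT
  refine ⟨fun p => (H (p.1.1, p.2), K (p.1.2, p.2)), ?_, ?_, ?_, ?_⟩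
  · refine (h1.comp (by fun_prop) ?_).prodMk (k1.comp (by fun_prop) ?_)
    · intro p hp; exact ⟨hp.1.1, hp.2⟩
    · intro p hp; exact ⟨hp.1.2, hp.2⟩
  · intro x hx t ht; exact ⟨h2 _ hx.1 _ ht, k2 _ hx.2 _ ht⟩
  · intro x hx; simp [h3 _ hx.1, k3 _ hx.2]
  · rintro ⟨x, y⟩ ⟨hx, hy⟩
    rw [nhdsWithin_prod_eq]
    filter_upwards [(h4 x hx).prod_mk (k4 y hy)] with p hp
    simp [hp.1, hp.2]

/-- convex sets, up to a constraint -/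
theorem Contr_convex {S : Set ℝ} (hS : Convex ℝ S) {x0 : ℝ} (h : x0 ∈ S) : Contr S := by
  refine ⟨x0, h, fun p => (1 - p.2) * p.1 + p.2 * x0, by fun_prop, ?_, by simp, by simp⟩
  intro x hx t ht
  have := hS hx h (sub_nonneg.2 ht.2) ht.1 (by ring)
  simpa using this

theorem DC_univ : DC (univ : Set ℝ) := (Contr_convex convex_univ (mem_univ 0)).dc

theorem DC_ne : DC {x : ℝ | x ≠ 0} := by
  apply DC_sign (fun x => x) (by fun_prop) (fun x hx => hx)
  intro e he
  refine (Contr_convex (x0 := e) ?_ ?_).dc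
  · intro x hx y hy a b ha hb hab
    have h1 : 0 < e * x := hx.2
    have h2 : 0 < e * y := hy.2
    have : 0 < e * (a • x + b • y) := by
      simp only [smul_eq_mul]
      have : e * (a * x + b * y) = a * (e * x) + b * (e * y) := by ring
      rw [this]
      rcases eq_or_lt_of_le ha with h | h
      · have : b = 1 := by linarith
        rw [← h, this]; simpa using h2
      · have := mul_pos h h1
        have := mul_nonneg hb h2.le
        linarith
    exact ⟨fun h => by rw [h] at this; simp at this, this⟩
  · rcases he with rfl | rfl
    · exact ⟨by show (1:ℝ) ≠ 0; norm_num, by norm_num⟩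
    · exact ⟨by show (-1:ℝ) ≠ 0; norm_num, by norm_num⟩

/-- product step `D - x y` -/
theorem DC_prodstep {A : Type*} [TopologicalSpace A] {S : Set A} (D : A → ℝ)
    (hD : ContinuousOn D S) (h0 : ∀ x ∈ S, D x ≠ 0) (h : DC S) :
    DC {p : (A × ℝ) × ℝ | p.1.1 ∈ S ∧ D p.1.1 - p.1.2 * p.2 ≠ 0} := by
  have hc : ContinuousOn (fun p : (A × ℝ) × ℝ => D p.1.1 - p.1.2 * p.2)
      {p : (A × ℝ) × ℝ | p.1.1 ∈ S ∧ D p.1.1 - p.1.2 * p.2 ≠ 0} :=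
    (hD.comp (by fun_prop) (fun p hp => hp.1)).sub (by fun_prop)
  apply DC_sign (fun p : (A × ℝ) × ℝ => D p.1.1 - p.1.2 * p.2) hc (fun p hp => hp.2)
  intro e he
  have e0 : e ≠ 0 := by rcases he with rfl | rfl <;> norm_num
  have hbase : DC {q : A × ℝ | q ∈ S ×ˢ (univ : Set ℝ) ∧ (- (e * q.2) ≠ 0 ∨ 0 < e * D q.1)} := by
    apply DC_sign (fun q : A × ℝ => e * D q.1)
      (continuousOn_const.mul (hD.comp continuousOn_fst (fun q hq => hq.1.1)))
      (fun q hq => mul_ne_zero e0 (h0 _ hq.1.1))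
    intro e' he'
    have e0' : e' ≠ 0 := by rcases he' with rfl | rfl <;> norm_num
    have hS' := h.clopen (fun x => e' * (e * D x)) (continuousOn_const.mul (continuousOn_const.mul hD))
      (fun x hx => mul_ne_zero e0' (mul_ne_zero e0 (h0 x hx)))
    rcases he' with rfl | rfl
    · convert hS'.prod DC_univ using 1
      ext ⟨x, t⟩
      simp
      tauto
    · convert hS'.prod DC_ne using 1
      ext ⟨x, t⟩
      simp [e0]
      constructor
      · rintro ⟨⟨h0, h | h⟩, h'⟩
        · exact ⟨⟨h0, h'⟩, h⟩
        · linarith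
      · rintro ⟨⟨h0, h1⟩, h2⟩; exact ⟨⟨h0, Or.inl h2⟩, h1⟩
  have := DC_elim (S := S ×ˢ (univ : Set ℝ)) (fun q => - (e * q.2)) (fun q => e * D q.1)
    (by fun_prop) (continuousOn_const.mul (hD.comp continuousOn_fst (fun q hq => hq.1))) hbase
  convert this using 1
  ext ⟨⟨x, s⟩, t⟩
  have : e * D x + t * -(e * s) = e * (D x - s * t) := by ring
  constructor
  · rintro ⟨⟨h1, h2⟩, h3⟩
    exact ⟨⟨h1, mem_univ _⟩, this.symm ▸ h3⟩
  · rintro ⟨⟨h1, h2⟩, h3⟩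
    have h3' : 0 < e * (D x - s * t) := this ▸ h3
    refine ⟨⟨h1, fun h2 => ?_⟩, h3'⟩
    simp only at h2
    rw [h2] at h3'; simp at h3'


/-- planar cross product -/
def cr (a b : ℂ) : ℝ := a.re * b.im - a.im * b.re

/-- `S` is contractible compatibly with a continuous choice `θ` of argument of `v`. -/
structure AngH {A : Type*} [TopologicalSpace A] (S : Set A) (v : A → ℂ) (θ : A → ℝ) : Prop where
  cv : ContinuousOn v S
  cθ : ContinuousOn θ S
  ne : ∀ x ∈ S, v x ≠ 0
  eq : ∀ x ∈ S, v x = ‖v x‖ * Complex.exp (θ x * Complex.I)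
  hm : ∀ s0 ∈ S, ∃ m : A × ℝ → A, ContinuousOn m (S ×ˢ Icc (0:ℝ) 1) ∧
    (∀ x ∈ S, ∀ t ∈ Icc (0:ℝ) 1, m (x, t) ∈ S) ∧ (∀ x ∈ S, m (x, 0) = x) ∧
    (∀ x ∈ S, m (x, 1) = s0) ∧ (∀ x ∈ S, ∀ t ∈ Icc (0:ℝ) 1, θ (m (x,t)) = (1 - t) * θ x + t * θ s0)

def Ang {A : Type*} [TopologicalSpace A] (S : Set A) (v : A → ℂ) : Prop := ∃ θ, AngH S v θ

theorem cr_eq_im_div {a b : ℂ} (ha : a ≠ 0) : cr a b = ‖a‖^2 * (b / a).im := by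
  have h : ‖a‖^2 = a.re^2 + a.im^2 := by rw [← Complex.normSq_eq_norm_sq, Complex.normSq_apply]; ring
  have h' : Complex.normSq a ≠ 0 := by rwa [Ne, Complex.normSq_eq_zero]
  rw [Complex.div_im, cr]
  rw [← Complex.normSq_eq_norm_sq]
  field_simp

theorem cr_continuousOn {A : Type*} [TopologicalSpace A] {S : Set A} {f g : A → ℂ}
    (hf : ContinuousOn f S) (hg : ContinuousOn g S) : ContinuousOn (fun x => cr (f x) (g x)) S := by
  unfold cr
  exact ((Complex.continuous_re.comp_continuousOn hf).mul (Complex.continuous_im.comp_continuousOn hg)).sub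
    ((Complex.continuous_im.comp_continuousOn hf).mul (Complex.continuous_re.comp_continuousOn hg))

theorem AngH.const {c : ℂ} (hc : c ≠ 0) : AngH (univ : Set Unit) (fun _ => c) (fun _ => c.arg) where
  cv := continuousOn_const
  cθ := continuousOn_const
  ne := fun _ _ => hc
  eq := fun _ _ => (Complex.norm_mul_exp_arg_mul_I c).symm
  hm := fun s0 _ => ⟨fun p => p.1, by fun_prop, by simp, by simp, by simp, by intros; ring⟩

theorem AngH.empty {A : Type*} [TopologicalSpace A] (v : A → ℂ) (θ : A → ℝ) : AngH (∅ : Set A) v θ where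
  cv := by simp
  cθ := by simp
  ne := by simp
  eq := by simp
  hm := by simp

theorem convex_comb_pos {a b t : ℝ} (ha : 0 < a) (hb : 0 < b) (ht : t ∈ Icc (0:ℝ) 1) :
    0 < (1 - t) * a + t * b := by
  rcases eq_or_lt_of_le ht.1 with h | h
  · rw [← h]; simpa
  · have := mul_pos h hb
    have := mul_nonneg (sub_nonneg.2 ht.2) ha.le
    linarith

theorem sign_arg {e : ℝ} (he : e = 1 ∨ e = -1) (z : ℂ) :
    0 < e * z.im ↔ (0 < e * z.arg ∧ 0 < Real.pi - e * z.arg) := by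
  have h1 : 0 < z.im ↔ (0 < z.arg ∧ z.arg < Real.pi) := by
    constructor
    · intro h
      have h2 : 0 ≤ z.arg := Complex.arg_nonneg_iff.2 h.le
      refine ⟨lt_of_le_of_ne h2 ?_, lt_of_le_of_ne (Complex.arg_le_pi z) ?_⟩
      · intro h3
        have := (Complex.arg_eq_zero_iff.1 h3.symm).2
        linarith
      · intro h3
        have := (Complex.arg_eq_pi_iff.1 h3).2
        linarith
    · rintro ⟨h, h'⟩
      have h2 := Complex.arg_nonneg_iff.1 h.le
      refine lt_of_le_of_ne h2 (fun h3 => ?_)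
      rcases le_or_gt 0 z.re with h4 | h4
      · have := Complex.arg_eq_zero_iff.2 ⟨h4, h3.symm⟩
        linarith
      · have := Complex.arg_eq_pi_iff.2 ⟨h4, h3.symm⟩
        linarith
  rcases he with rfl | rfl
  · simp [h1]
  · have := Complex.neg_pi_lt_arg z
    have := @Complex.arg_neg_iff z
    constructor
    · intro h
      have := this.2 (by linarith)
      constructor <;> linarith
    · intro h
      have := this.1 (by linarith [h.1])
      linarith

theorem AngH.step {A : Type*} [TopologicalSpace A] {S : Set A} {v : A → ℂ} {θ : A → ℝ}
    (h : AngH S v θ) {e : ℝ} (he : e = 1 ∨ e = -1) :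
    AngH {p : A × ℂ | p.1 ∈ S ∧ 0 < e * cr (v p.1) p.2} (fun p => p.2)
      (fun p => θ p.1 + (p.2 / v p.1).arg) := by
  set X := {p : A × ℂ | p.1 ∈ S ∧ 0 < e * cr (v p.1) p.2} with hX
  have hi : ∀ p ∈ X, 0 < e * (p.2 / v p.1).im := by
    intro p hp
    have h1 := hp.2
    rw [cr_eq_im_div (h.ne _ hp.1)] at h1
    have : 0 < ‖v p.1‖^2 := by have := norm_pos_iff.2 (h.ne _ hp.1); positivity
    by_contra hcon
    push Not at hcon
    have : e * (‖v p.1‖^2 * (p.2 / v p.1).im) = ‖v p.1‖^2 * (e * (p.2 / v p.1).im) := by ring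
    rw [this] at h1
    nlinarith
  have hi' : ∀ σ ∈ S, ∀ u : ℂ, 0 < e * (u / v σ).im → (σ, u) ∈ X := by
    intro σ hσ u hu
    refine ⟨hσ, ?_⟩
    simp only
    rw [cr_eq_im_div (h.ne _ hσ)]
    have : 0 < ‖v σ‖^2 := by have := norm_pos_iff.2 (h.ne _ hσ); positivity
    have := mul_pos this hu
    linarith
  have hslit : ∀ p ∈ X, p.2 / v p.1 ∈ Complex.slitPlane := by
    intro p hp
    right
    intro h0
    have := hi p hp
    rw [h0] at this; simp at this
  have hcv : ContinuousOn (fun p : A × ℂ => v p.1) X := h.cv.comp continuousOn_fst (fun p hp => hp.1)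
  have hcd : ContinuousOn (fun p : A × ℂ => p.2 / v p.1) X :=
    continuousOn_snd.div hcv (fun p hp => h.ne _ hp.1)
  have hpol : ∀ z : ℂ, z ≠ 0 → z = ‖z‖ * Complex.exp (z.arg * Complex.I) := fun z _ =>
    (Complex.norm_mul_exp_arg_mul_I z).symm
  refine ⟨continuousOn_snd, ?_, ?_, ?_, ?_⟩
  · refine (h.cθ.comp continuousOn_fst (fun p hp => hp.1)).add ?_
    intro p hp
    exact ContinuousAt.comp_continuousWithinAt (f := fun p : A × ℂ => p.2 / v p.1) (Complex.continuousAt_arg (hslit p hp)) (hcd p hp)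
  · intro p hp h0
    have := hp.2
    rw [h0] at this
    simp [cr] at this
  · intro p hp
    have h1 := h.ne _ hp.1
    have h2 := Complex.norm_mul_exp_arg_mul_I (p.2 / v p.1)
    push_cast
    rw [add_mul, Complex.exp_add]
    have h3 := h.eq _ hp.1
    have h4 : (‖p.2‖ : ℂ) = ‖v p.1‖ * ‖p.2 / v p.1‖ := by
      rw [norm_div]
      have : (‖v p.1‖ : ℂ) ≠ 0 := by exact_mod_cast norm_ne_zero_iff.2 h1
      push_cast
      field_simp
    rw [h4]
    calc p.2 = v p.1 * (p.2 / v p.1) := by field_simp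
      _ = (‖v p.1‖ * Complex.exp (θ p.1 * Complex.I)) * (‖p.2 / v p.1‖ * Complex.exp ((p.2 / v p.1).arg * Complex.I)) := by
        rw [← h3, h2]
      _ = _ := by ring
  · rintro ⟨σ0, u0⟩ hp0
    obtain ⟨m, m1, m2, m3, m4, m5⟩ := h.hm σ0 hp0.1
    set L0 := Complex.log (u0 / v σ0) with hL0
    let L : (A × ℂ) × ℝ → ℂ := fun q => (1 - q.2 : ℝ) * Complex.log (q.1.2 / v q.1.1) + (q.2 : ℝ) * L0
    have hmS : ∀ q ∈ X ×ˢ Icc (0:ℝ) 1, m (q.1.1, q.2) ∈ S := fun q hq => m2 _ hq.1.1 _ hq.2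
    have hmc : ContinuousOn (fun q : (A × ℂ) × ℝ => m (q.1.1, q.2)) (X ×ˢ Icc (0:ℝ) 1) :=
      m1.comp (by fun_prop) (fun q hq => ⟨hq.1.1, hq.2⟩)
    have hLim : ∀ p ∈ X, ∀ t, (L (p, t)).im = (1 - t) * (p.2 / v p.1).arg + t * (u0 / v σ0).arg := by
      intro p hp t
      simp [L, hL0, Complex.log_im, Complex.add_im, Complex.mul_im]
    have hLe : ∀ p ∈ X, ∀ t ∈ Icc (0:ℝ) 1, 0 < e * (L (p, t)).im ∧ 0 < Real.pi - e * (L (p, t)).im := by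
      intro p hp t ht
      obtain ⟨a1, a2⟩ := (sign_arg he _).1 (hi p hp)
      obtain ⟨b1, b2⟩ := (sign_arg he _).1 (hi (σ0, u0) hp0)
      rw [hLim p hp]
      constructor
      · have := convex_comb_pos a1 b1 ht
        linarith
      · have := convex_comb_pos a2 b2 ht
        linarith
    have harg : ∀ p ∈ X, ∀ t ∈ Icc (0:ℝ) 1, (Complex.exp (L (p, t))).arg = (L (p, t)).im := by
      intro p hp t ht
      have := hLe p hp t ht
      rw [Complex.arg_exp, toIocMod_eq_self]
      rcases he with rfl | rfl
      · constructor <;> linarith [Real.pi_pos]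
      · constructor <;> linarith [Real.pi_pos]
    refine ⟨fun q => (m (q.1.1, q.2), v (m (q.1.1, q.2)) * Complex.exp (L q)), ?_, ?_, ?_, ?_, ?_⟩
    · refine hmc.prodMk ((h.cv.comp hmc hmS).mul ?_)
      refine Complex.continuous_exp.comp_continuousOn ?_
      refine ContinuousOn.add (ContinuousOn.mul (by fun_prop) ?_) (by fun_prop)
      intro q hq
      refine ContinuousWithinAt.clog ?_ (hslit q.1 hq.1)
      exact hcd.comp continuousOn_fst (fun q hq => hq.1) q hq
    · intro p hp t ht
      have hs := m2 _ hp.1 _ ht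
      refine hi' _ hs _ ?_
      simp only
      rw [mul_div_cancel_left₀ _ (h.ne _ hs), sign_arg he, harg p hp t ht]
      exact hLe p hp t ht
    · intro p hp
      simp only [L, m3 _ hp.1]
      have : p.2 / v p.1 ≠ 0 := Complex.slitPlane_ne_zero (hslit p hp)
      have h1 := h.ne _ hp.1
      simp [Complex.exp_log this]
      ext1 <;> simp
      field_simp
    · intro p hp
      simp only [L, m4 _ hp.1]
      have : u0 / v σ0 ≠ 0 := Complex.slitPlane_ne_zero (hslit _ hp0)
      have h1 := h.ne _ hp0.1
      simp [hL0, Complex.exp_log this]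
      field_simp
    · intro p hp t ht
      have hs := m2 _ hp.1 _ ht
      simp only
      rw [mul_div_cancel_left₀ _ (h.ne _ hs), harg p hp t ht, m5 _ hp.1 _ ht, hLim p hp]
      ring

theorem AngH.clopen {A : Type*} [TopologicalSpace A] {S : Set A} {v : A → ℂ} {θ : A → ℝ}
    (h : AngH S v θ) (D : A → ℝ) (hD : ContinuousOn D S) (h0 : ∀ x ∈ S, D x ≠ 0) :
    AngH {x ∈ S | 0 < D x} v θ where
  cv := h.cv.mono (fun x hx => hx.1)
  cθ := h.cθ.mono (fun x hx => hx.1)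
  ne := fun x hx => h.ne x hx.1
  eq := fun x hx => h.eq x hx.1
  hm := by
    intro s0 hs0
    obtain ⟨m, m1, m2, m3, m4, m5⟩ := h.hm s0 hs0.1
    refine ⟨m, m1.mono (prod_mono_left (fun x hx => hx.1)), ?_, fun x hx => m3 x hx.1,
      fun x hx => m4 x hx.1, fun x hx => m5 x hx.1⟩
    intro x hx t ht
    refine ⟨m2 x hx.1 t ht, ?_⟩
    by_contra hcon
    push Not at hcon
    have hcont : ContinuousOn (fun t => D (m (x, t))) (Icc 0 t) := by
      refine (hD.comp (m1.comp (by fun_prop) ?_) ?_)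
      · intro s hs; exact ⟨hx.1, ⟨hs.1, hs.2.trans ht.2⟩⟩
      · intro s hs; exact m2 _ hx.1 _ ⟨hs.1, hs.2.trans ht.2⟩
    have := intermediate_value_Icc' ht.1 hcont
    have hm : (0:ℝ) ∈ Icc (D (m (x, t))) (D (m (x, 0))) :=
      ⟨hcon, by rw [m3 x hx.1]; exact hx.2.le⟩
    obtain ⟨s, hs, hs'⟩ := this hm
    exact h0 _ (m2 x hx.1 s ⟨hs.1, hs.2.trans ht.2⟩) hs'

theorem AngH.im {A : Type*} [TopologicalSpace A] {S : Set A} {v : A → ℂ} {θ : A → ℝ}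
    (h : AngH S v θ) {x : A} (hx : x ∈ S) : (v x).im = ‖v x‖ * Real.sin (θ x) := by
  conv_lhs => rw [h.eq x hx]
  simp [Complex.exp_ofReal_mul_I_im]

theorem AngH.re {A : Type*} [TopologicalSpace A] {S : Set A} {v : A → ℂ} {θ : A → ℝ}
    (h : AngH S v θ) {x : A} (hx : x ∈ S) : (v x).re = ‖v x‖ * Real.cos (θ x) := by
  conv_lhs => rw [h.eq x hx]
  simp [Complex.exp_ofReal_mul_I_re]

theorem floor_loc {A : Type*} [TopologicalSpace A] {S : Set A} {f : A → ℝ} {x : A}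
    (hf : ContinuousWithinAt f S x) (h : ∀ n : ℤ, f x ≠ n) : ∀ᶠ y in 𝓝[S] x, ⌊f y⌋ = ⌊f x⌋ := by
  have h1 : (⌊f x⌋ : ℝ) < f x := lt_of_le_of_ne (Int.floor_le _) (h _).symm
  have h2 := Int.lt_floor_add_one (f x)
  filter_upwards [hf.eventually (lt_mem_nhds h1), hf.eventually (gt_mem_nhds h2)] with y hy hy'
  rw [Int.floor_eq_iff]
  exact ⟨hy.le, hy'⟩

theorem AngH.close {A : Type*} [TopologicalSpace A] {S : Set A} {v : A → ℂ} {θ : A → ℝ}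
    (h : AngH S v θ) : DC {x ∈ S | (v x).im ≠ 0} := by
  have hne : ∀ x ∈ S, ((v x).im ≠ 0 ↔ ∀ n : ℤ, θ x / Real.pi ≠ n) := by
    intro x hx
    rw [h.im hx, mul_ne_zero_iff, Real.sin_ne_zero_iff]
    have : ‖v x‖ ≠ 0 := norm_ne_zero_iff.2 (h.ne x hx)
    constructor
    · rintro ⟨_, h2⟩ n hn
      apply h2 n
      rw [div_eq_iff Real.pi_ne_zero] at hn
      exact hn.symm
    · intro h2
      refine ⟨this, fun n hn => h2 n ?_⟩
      rw [div_eq_iff Real.pi_ne_zero, hn]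
  apply DC_label (fun x => ⌊θ x / Real.pi⌋)
  · intro x hx
    refine floor_loc ?_ ((hne x hx.1).1 hx.2)
    exact ((h.cθ x hx.1).mono (fun x hx => hx.1)).div_const _
  · intro n
    have hset : {x | x ∈ {x | x ∈ S ∧ (v x).im ≠ 0} ∧ ⌊θ x / Real.pi⌋ = n} =
        {x ∈ S | 0 < θ x - n * Real.pi ∧ 0 < (n + 1) * Real.pi - θ x} := by
      ext x
      constructor
      · rintro ⟨⟨hx, hx'⟩, h2⟩
        rw [Int.floor_eq_iff] at h2
        have h3 := (hne x hx).1 hx' n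
        have h4 := lt_of_le_of_ne h2.1 h3.symm
        rw [lt_div_iff₀ Real.pi_pos] at h4
        have h5 := h2.2
        rw [div_lt_iff₀ Real.pi_pos] at h5
        exact ⟨hx, by linarith, by linarith⟩
      · rintro ⟨hx, h2, h3⟩
        have h4 : (n:ℝ) < θ x / Real.pi := by rw [lt_div_iff₀ Real.pi_pos]; linarith
        have h5 : θ x / Real.pi < n + 1 := by rw [div_lt_iff₀ Real.pi_pos]; linarith
        refine ⟨⟨hx, (hne x hx).2 fun k hk => ?_⟩, ?_⟩
        · rw [hk] at h4 h5
          have : n < k := by exact_mod_cast h4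
          have : k < n + 1 := by exact_mod_cast h5
          lia
        · rw [Int.floor_eq_iff]; exact ⟨h4.le, h5⟩
    rw [hset]
    rcases eq_empty_or_nonempty {x ∈ S | 0 < θ x - n * Real.pi ∧ 0 < (n + 1) * Real.pi - θ x} with he | ⟨s0, hs0⟩
    · rw [he]; exact DC_empty
    · obtain ⟨m, m1, m2, m3, m4, m5⟩ := h.hm s0 hs0.1
      refine Contr.dc ⟨s0, hs0, m, m1.mono (prod_mono_left (fun x hx => hx.1)), ?_,
        fun x hx => m3 x hx.1, fun x hx => m4 x hx.1⟩
      intro x hx t ht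
      refine ⟨m2 x hx.1 t ht, ?_⟩
      rw [m5 x hx.1 t ht]
      have h1 := convex_comb_pos hx.2.1 hs0.2.1 ht
      have h2 := convex_comb_pos hx.2.2 hs0.2.2 ht
      constructor
      · linarith
      · linarith

/-- a locally constant decomposition into `Ang` pieces -/
def MA {A : Type*} [TopologicalSpace A] (S : Set A) (v : A → ℂ) : Prop :=
  ContinuousOn v S ∧ ∃ l : A → List Bool, (∀ x ∈ S, ∀ᶠ y in 𝓝[S] x, l y = l x) ∧
    ∀ i, Ang {x ∈ S | l x = i} v

theorem MA.const {c : ℂ} (hc : c ≠ 0) : MA (univ : Set Unit) (fun _ => c) := by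
  refine ⟨continuousOn_const, fun _ => [], by simp, fun i => ?_⟩
  by_cases h : i = []
  · subst h
    refine ⟨fun _ => c.arg, ?_⟩
    · convert AngH.const hc
      ext; simp
  · refine ⟨fun _ => 0, ?_⟩
    convert AngH.empty _ _
    ext; simp; exact h

theorem sign_loc {A : Type*} [TopologicalSpace A] {S : Set A} {h : A → ℝ} {x : A}
    (hc : ContinuousWithinAt h S x) (h0 : h x ≠ 0) :
    ∀ᶠ y in 𝓝[S] x, decide (0 < h y) = decide (0 < h x) := by
  rcases lt_or_gt_of_ne h0 with h' | h'
  · filter_upwards [hc.eventually (gt_mem_nhds h')] with y hy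
    simp [not_lt.2 hy.le, not_lt.2 h'.le]
  · filter_upwards [hc.eventually (lt_mem_nhds h')] with y hy
    simp [hy, h']

theorem sign_dec {r : ℝ} (hr : r ≠ 0) (b : Bool) : decide (0 < r) = b ↔ 0 < (if b then 1 else -1) * r := by
  cases b
  · simp; constructor
    · intro h; exact lt_of_le_of_ne h hr
    · intro h; exact h.le
  · simp

theorem MA.clopen {A : Type*} [TopologicalSpace A] {S : Set A} {v : A → ℂ} (h : MA S v)
    (D : A → ℝ) (hD : ContinuousOn D S) (h0 : ∀ x ∈ S, D x ≠ 0) : MA {x ∈ S | 0 < D x} v := by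
  obtain ⟨h1, l, h2, h3⟩ := h
  refine ⟨h1.mono (fun x hx => hx.1), l, ?_, ?_⟩
  · intro x hx
    exact (h2 x hx.1).filter_mono (nhdsWithin_mono _ (fun x hx => hx.1))
  · intro i
    obtain ⟨θ, hθ⟩ := h3 i
    have := hθ.clopen D (hD.mono (fun x hx => hx.1)) (fun x hx => h0 x hx.1)
    refine ⟨θ, ?_⟩
    convert this using 1
    ext x; simp; tauto

theorem MA.step {A : Type*} [TopologicalSpace A] {S : Set A} {v : A → ℂ} (h : MA S v) :
    MA {p : A × ℂ | p.1 ∈ S ∧ cr (v p.1) p.2 ≠ 0} (fun p => p.2) := by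
  obtain ⟨h1, l, h2, h3⟩ := h
  have hc : ContinuousOn (fun p : A × ℂ => cr (v p.1) p.2) {p : A × ℂ | p.1 ∈ S ∧ cr (v p.1) p.2 ≠ 0} :=
    cr_continuousOn (h1.comp continuousOn_fst (fun p hp => hp.1)) continuousOn_snd
  refine ⟨continuousOn_snd, fun p => decide (0 < cr (v p.1) p.2) :: l p.1, ?_, ?_⟩
  · intro p hp
    have : Filter.Tendsto (fun p : A × ℂ => p.1) (𝓝[{p : A × ℂ | p.1 ∈ S ∧ cr (v p.1) p.2 ≠ 0}] p) (𝓝[S] p.1) :=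
      (continuous_fst.continuousWithinAt).tendsto_nhdsWithin (fun p hp => hp.1)
    filter_upwards [this.eventually (h2 p.1 hp.1), sign_loc (hc p hp) hp.2] with y hy1 hy2
    rw [hy1, hy2]
  · intro i
    cases i with
    | nil => exact ⟨fun _ => 0, by convert AngH.empty _ _; ext; simp⟩
    | cons b i =>
      obtain ⟨θ, hθ⟩ := h3 i
      have := hθ.step (e := if b then 1 else -1) (by cases b <;> simp)
      refine ⟨fun p => θ p.1 + (p.2 / v p.1).arg, ?_⟩
      convert this using 1
      ext p
      constructor
      · rintro ⟨⟨a1, a2⟩, a3⟩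
        simp only [List.cons.injEq] at a3
        exact ⟨⟨a1, a3.2⟩, (sign_dec a2 b).1 a3.1⟩
      · rintro ⟨⟨a1, a2⟩, a3⟩
        have a4 : cr (v p.1) p.2 ≠ 0 := by intro h; rw [h] at a3; simp at a3
        refine ⟨⟨a1, a4⟩, ?_⟩
        show decide (0 < cr (v p.1) p.2) :: l p.1 = b :: i
        rw [(sign_dec a4 b).2 a3, a2]

theorem MA.step' {A : Type*} [TopologicalSpace A] {S : Set A} {v : A → ℂ} (h : MA S v)
    (D : A → ℝ) (hD : ContinuousOn D S) (h0 : ∀ x ∈ S, D x ≠ 0) :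
    MA {p : A × ℂ | p.1 ∈ S ∧ 0 < D p.1 * cr (v p.1) p.2} (fun p => p.2) := by
  have := h.step.clopen (fun p => D p.1 * cr (v p.1) p.2)
    ((hD.comp continuousOn_fst (fun p hp => hp.1)).mul
      (cr_continuousOn (h.1.comp continuousOn_fst (fun p hp => hp.1)) continuousOn_snd))
    (fun p hp => mul_ne_zero (h0 _ hp.1) hp.2)
  convert this using 1
  ext p
  constructor
  · rintro ⟨a, b⟩
    exact ⟨⟨a, fun h => by rw [h] at b; simp at b⟩, b⟩
  · rintro ⟨a, b⟩; exact ⟨a.1, b⟩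

theorem MA.close {A : Type*} [TopologicalSpace A] {S : Set A} {v : A → ℂ} (h : MA S v) :
    DC {x ∈ S | (v x).im ≠ 0} := by
  obtain ⟨h1, l, h2, h3⟩ := h
  refine DC_label l (fun x hx => (h2 x hx.1).filter_mono (nhdsWithin_mono _ (fun x hx => hx.1))) ?_
  intro i
  obtain ⟨θ, hθ⟩ := h3 i
  convert hθ.close using 1
  ext x; simp; tauto

theorem MA.baseIm : MA {p : Unit × ℂ | p.2.im ≠ 0} (fun p => p.2) := by
  convert (MA.const (c := 1) (by simp)).step using 1
  ext p; simp [cr]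

theorem MA.baseRe : MA {p : Unit × ℂ | p.2.re ≠ 0} (fun p => p.2) := by
  convert (MA.const (c := -Complex.I) (by simp)).step using 1
  ext p; simp [cr]


theorem contOn_ite {B C : Type*} [TopologicalSpace B] [TopologicalSpace C] {s : Set B} {ψ : B → ℝ}
    {f g : B → C} (hψ : ContinuousOn ψ s) (hf : ContinuousOn f s) (hg : ContinuousOn g s)
    (h : ∀ x ∈ s, ψ x = 0 → f x = g x) : ContinuousOn (fun x => if 0 ≤ ψ x then f x else g x) s := by
  intro x hx
  rcases lt_trichotomy (ψ x) 0 with h0 | h0 | h0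
  · refine (hg x hx).congr_of_eventuallyEq ?_ (if_neg (not_le.2 h0))
    filter_upwards [(hψ x hx).eventually (gt_mem_nhds h0)] with y hy
    exact if_neg (not_le.2 hy)
  · have e : s = (s ∩ {y | 0 ≤ ψ y}) ∪ (s ∩ {y | ψ y ≤ 0}) := by
      ext y
      simp only [mem_union, mem_inter_iff, mem_setOf_eq, ← and_or_left]
      exact ⟨fun h => ⟨h, le_total _ _⟩, fun h => h.1⟩
    rw [e]
    refine ContinuousWithinAt.union ?_ ?_
    · refine ((hf x hx).mono inter_subset_left).congr ?_ ?_
      · intro y hy; exact if_pos hy.2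
      · exact if_pos h0.ge
    · have hh : ∀ y ∈ s ∩ {y | ψ y ≤ 0}, (if 0 ≤ ψ y then f y else g y) = g y := by
        intro y hy
        split_ifs with h1
        · exact h y hy.1 (le_antisymm hy.2 h1)
        · rfl
      exact ((hg x hx).mono inter_subset_left).congr hh (hh x ⟨hx, h0.le⟩)
  · refine (hf x hx).congr_of_eventuallyEq ?_ (if_pos h0.le)
    filter_upwards [(hψ x hx).eventually (lt_mem_nhds h0)] with y hy
    exact if_pos hy.le

theorem glue_aux {A : Type*} [TopologicalSpace A] {V W : Set A} (hWV : W ⊆ V) (hV : Contr V)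
    {w0 : A} (hw0 : w0 ∈ W) (h : A × ℝ → A) (h1 : ContinuousOn h (W ×ˢ Icc (0:ℝ) 1))
    (h2 : ∀ x ∈ W, ∀ t ∈ Icc (0:ℝ) 1, h (x, t) ∈ W) (h3 : ∀ x ∈ W, h (x, 0) = x)
    (h4 : ∀ x ∈ W, h (x, 1) = w0) :
    ∃ (κ : A × ℝ → A) (Γ : (A × ℝ) × ℝ → A), ContinuousOn κ (V ×ˢ Icc (0:ℝ) 1) ∧
      (∀ x ∈ V, ∀ t ∈ Icc (0:ℝ) 1, κ (x, t) ∈ V) ∧ (∀ x ∈ V, κ (x, 0) = x) ∧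
      (∀ x ∈ V, κ (x, 1) = w0) ∧
      ContinuousOn Γ ((W ×ˢ Icc (0:ℝ) 1) ×ˢ Icc (0:ℝ) 1) ∧
      (∀ x ∈ W, ∀ t ∈ Icc (0:ℝ) 1, ∀ s ∈ Icc (0:ℝ) 1, Γ ((x, t), s) ∈ V) ∧
      (∀ x ∈ W, ∀ t ∈ Icc (0:ℝ) 1, Γ ((x, t), 0) = h (x, t)) ∧
      (∀ x ∈ W, ∀ t ∈ Icc (0:ℝ) 1, Γ ((x, t), 1) = κ (x, t)) ∧
      (∀ x ∈ W, ∀ s ∈ Icc (0:ℝ) 1, Γ ((x, 0), s) = x) ∧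
      (∀ x ∈ W, ∀ s ∈ Icc (0:ℝ) 1, Γ ((x, 1), s) = w0) := by
  obtain ⟨p, hp, c, c1, c2, c3, c4⟩ := hV
  have hw0V := hWV hw0
  let a : ℝ → ℝ := fun t => max 0 (min 1 (3 * t))
  let b : ℝ → ℝ := fun t => max 0 (min 1 (3 - 3 * t))
  let d : ℝ → ℝ := fun t => max 0 (min 1 (3 * t - 1))
  have ha : Continuous a := by fun_prop
  have hb : Continuous b := by fun_prop
  have hd : Continuous d := by fun_prop
  have cl : ∀ r : ℝ, max 0 (min 1 r) ∈ Icc (0:ℝ) 1 := fun r =>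
    ⟨le_max_left _ _, max_le (by norm_num) (min_le_left _ _)⟩
  have haI : ∀ t, a t ∈ Icc (0:ℝ) 1 := fun t => cl _
  have hbI : ∀ t, b t ∈ Icc (0:ℝ) 1 := fun t => cl _
  have hdI : ∀ t, d t ∈ Icc (0:ℝ) 1 := fun t => cl _
  have ge1 : ∀ r : ℝ, 1 ≤ r → max 0 (min 1 r) = 1 := fun r hr => by rw [min_eq_left hr]; norm_num
  have le0 : ∀ r : ℝ, r ≤ 0 → max 0 (min 1 r) = 0 := fun r hr =>
    max_eq_left ((min_le_right _ _).trans hr)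
  let T : ℝ × ℝ → ℝ := fun q => (1 - q.2) * q.1 + q.2 * d q.1
  let E : ℝ × ℝ → ℝ := fun q => q.2 * (a q.1 * b q.1)
  have mulI : ∀ x ∈ Icc (0:ℝ) 1, ∀ y ∈ Icc (0:ℝ) 1, x * y ∈ Icc (0:ℝ) 1 := fun x hx y hy =>
    ⟨mul_nonneg hx.1 hy.1, mul_le_one₀ hx.2 hy.1 hy.2⟩
  have hTI : ∀ t ∈ Icc (0:ℝ) 1, ∀ s ∈ Icc (0:ℝ) 1, T (t, s) ∈ Icc (0:ℝ) 1 := by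
    intro t ht s hs
    have := (convex_Icc (0:ℝ) 1) ht (hdI t) (sub_nonneg.2 hs.2) hs.1 (by ring)
    simpa [T] using this
  have hEI : ∀ t ∈ Icc (0:ℝ) 1, ∀ s ∈ Icc (0:ℝ) 1, E (t, s) ∈ Icc (0:ℝ) 1 := fun t ht s hs =>
    mulI _ hs _ (mulI _ (haI t) _ (hbI t))
  have hTc : Continuous T := by fun_prop
  have hEc : Continuous E := by fun_prop
  refine ⟨fun q => if 0 ≤ 1/2 - q.2 then c (q.1, a q.2) else c (w0, b q.2),
    fun q => c (h (q.1.1, T (q.1.2, q.2)), E (q.1.2, q.2)), ?_, ?_, ?_, ?_, ?_, ?_, ?_, ?_, ?_, ?_⟩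
  · refine contOn_ite (by fun_prop) (c1.comp (by fun_prop) ?_) (c1.comp (by fun_prop) ?_) ?_
    · intro q hq; exact ⟨hq.1, haI _⟩
    · intro q hq; exact ⟨hw0V, hbI _⟩
    · intro q hq h0
      have : q.2 = 1/2 := by linarith
      simp only [this, a, b]
      rw [ge1 _ (by norm_num), ge1 _ (by norm_num), c4 _ hq.1, c4 _ hw0V]
  · intro x hx t ht
    simp only
    split_ifs
    · exact c2 _ hx _ (haI _)
    · exact c2 _ hw0V _ (hbI _)
  · intro x hx
    simp only
    rw [if_pos (by norm_num)]
    simp [a, c3 x hx]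
  · intro x hx
    simp only
    rw [if_neg (by norm_num)]
    simp [b, c3 _ hw0V]
  · have hh : ContinuousOn (fun q : (A × ℝ) × ℝ => h (q.1.1, T (q.1.2, q.2))) ((W ×ˢ Icc (0:ℝ) 1) ×ˢ Icc (0:ℝ) 1) :=
      h1.comp (by fun_prop) (fun q hq => ⟨hq.1.1, hTI _ hq.1.2 _ hq.2⟩)
    refine c1.comp (hh.prodMk (by fun_prop)) ?_
    intro q hq
    exact ⟨hWV (h2 _ hq.1.1 _ (hTI _ hq.1.2 _ hq.2)), hEI _ hq.1.2 _ hq.2⟩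
  · intro x hx t ht s hs
    exact c2 _ (hWV (h2 _ hx _ (hTI _ ht _ hs))) _ (hEI _ ht _ hs)
  · intro x hx t ht
    have e1 : T (t, 0) = t := by simp [T]
    have e2 : E (t, 0) = 0 := by simp [E]
    simp only [e1, e2]
    exact c3 _ (hWV (h2 _ hx _ ht))
  · intro x hx t ht
    have e1 : T (t, 1) = d t := by simp [T]
    have e2 : E (t, 1) = a t * b t := by simp [E]
    simp only [e1, e2]
    rcases le_total t (1/3) with h5 | h5
    · rw [if_pos (by linarith), show d t = 0 from le0 _ (by linarith), h3 x hx,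
        show b t = 1 from ge1 _ (by linarith), mul_one]
    · rw [show a t = 1 from ge1 _ (by linarith), one_mul]
      rcases le_total t (2/3) with h6 | h6
      · rw [show b t = 1 from ge1 _ (by linarith), c4 _ (hWV (h2 _ hx _ (hdI _))), c4 _ (hWV hx), c4 _ hw0V]
        simp
      · rw [show d t = 1 from ge1 _ (by linarith), h4 x hx, if_neg (by linarith)]
  · intro x hx s hs
    have e1 : T (0, s) = 0 := by simp [T, d]
    have e2 : E (0, s) = 0 := by simp [E, a]
    simp only [e1, e2, h3 x hx, c3 _ (hWV hx)]
  · intro x hx s hs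
    have e1 : T (1, s) = 1 := by simp [T, show d 1 = 1 from ge1 _ (by norm_num)]
    have e2 : E (1, s) = 0 := by simp [E, b]
    simp only [e1, e2, h4 x hx, c3 _ hw0V]

theorem urysohn_set {A : Type*} [TopologicalSpace A] [TopologicalSpace.MetrizableSpace A] {X U V : Set A}
    (hX : X = U ∪ V) (hU : ∀ x ∈ U, U ∈ 𝓝[X] x) (hV : ∀ x ∈ V, V ∈ 𝓝[X] x) :
    ∃ φ : A → ℝ, ContinuousOn φ X ∧ (∀ x ∈ X, x ∉ U → φ x = 1) ∧ (∀ x ∈ X, x ∉ V → φ x = -1) := by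
  have op : ∀ U : Set A, U ⊆ X → (∀ x ∈ U, U ∈ 𝓝[X] x) → IsOpen (Subtype.val ⁻¹' U : Set X) := by
    intro U hUX hU
    rw [isOpen_iff_mem_nhds]
    rintro ⟨x, hx⟩ hxU
    exact (preimage_coe_mem_nhds_subtype).2 (hU x hxU)
  have oU := op U (hX ▸ subset_union_left) hU
  have oV := op V (hX ▸ subset_union_right) hV
  obtain ⟨f, f0, f1, -⟩ := exists_continuous_zero_one_of_isClosed oV.isClosed_compl oU.isClosed_compl (by
    rw [Set.disjoint_left]
    rintro ⟨x, hx⟩ h1 h2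
    simp only [mem_compl_iff, mem_preimage] at h1 h2
    rw [hX] at hx
    exact hx.elim h2 h1)
  classical
  refine ⟨fun x => if hx : x ∈ X then 2 * f ⟨x, hx⟩ - 1 else 0, ?_, ?_, ?_⟩
  · rw [continuousOn_iff_continuous_domRestrict]
    have : X.domRestrict (fun x => if hx : x ∈ X then 2 * f ⟨x, hx⟩ - 1 else 0) = fun x => 2 * f x - 1 := by
      ext ⟨x, hx⟩; simp [hx]
    rw [this]; fun_prop
  · intro x hx hxU
    have := f1 (x := ⟨x, hx⟩) hxU
    simp only [Pi.one_apply] at this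
    simp [hx, this]; norm_num
  · intro x hx hxU
    have := f0 (x := ⟨x, hx⟩) hxU
    simp only [Pi.zero_apply] at this
    simp [hx, this]

theorem Contr.glue {A : Type*} [TopologicalSpace A] [TopologicalSpace.MetrizableSpace A] {X U V : Set A}
    (hX : X = U ∪ V) (hU : ∀ x ∈ U, U ∈ 𝓝[X] x) (hV : ∀ x ∈ V, V ∈ 𝓝[X] x)
    (cU : Contr U) (cV : Contr V) (cW : Contr (U ∩ V)) : Contr X := by
  obtain ⟨φ, φc, φ1, φ2⟩ := urysohn_set hX hU hV
  obtain ⟨w0, hw0, h, h1, h2, h3, h4⟩ := cW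
  obtain ⟨κ, Γ, k1, k2, k3, k4, g1, g2, g3, g4, g5, g6⟩ := glue_aux inter_subset_right cV hw0 h h1 h2 h3 h4
  obtain ⟨κ', Γ', k1', k2', k3', k4', g1', g2', g3', g4', g5', g6'⟩ := glue_aux inter_subset_left cU hw0 h h1 h2 h3 h4
  have hUX : U ⊆ X := hX ▸ subset_union_left
  have hVX : V ⊆ X := hX ▸ subset_union_right
  have hWX : U ∩ V ⊆ X := inter_subset_left.trans hUX
  let cl : ℝ → ℝ := fun r => max 0 (min 1 (2 * r))
  have clI : ∀ r, cl r ∈ Icc (0:ℝ) 1 := fun r =>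
    ⟨le_max_left _ _, max_le (by norm_num) (min_le_left _ _)⟩
  have clc : Continuous cl := by fun_prop
  have cl1 : ∀ r, 1/2 ≤ r → cl r = 1 := fun r hr => by
    simp only [cl]; rw [min_eq_left (by linarith)]; norm_num
  have cl0 : cl 0 = 0 := by simp [cl]
  classical
  let K : A × ℝ → A := fun q => if 0 ≤ φ q.1 then Γ (q, cl (φ q.1)) else Γ' (q, cl (-φ q.1))
  let H : A × ℝ → A := fun q => if q.1 ∈ U ∩ V then K q else if q.1 ∈ V then κ q else κ' q
  have hK : ContinuousOn K ((U ∩ V) ×ˢ Icc (0:ℝ) 1) := by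
    have hφ : ContinuousOn (fun q : A × ℝ => φ q.1) ((U ∩ V) ×ˢ Icc (0:ℝ) 1) :=
      φc.comp continuousOn_fst (fun q hq => hWX hq.1)
    refine contOn_ite hφ (g1.comp (continuousOn_id.prodMk (clc.comp_continuousOn hφ)) ?_)
      (g1'.comp (continuousOn_id.prodMk (clc.comp_continuousOn hφ.neg)) ?_) ?_
    · intro q hq; exact ⟨hq, clI _⟩
    · intro q hq; exact ⟨hq, clI _⟩
    · intro q hq h0
      simp only [h0, neg_zero, cl0]
      rw [g3 _ hq.1 _ hq.2, g3' _ hq.1 _ hq.2]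
  refine ⟨w0, hWX hw0, H, ?_, ?_, ?_, ?_⟩
  · rintro ⟨x, t⟩ ⟨hx, ht⟩
    simp only at hx ht
    by_cases hxW : x ∈ U ∩ V
    · have hn : U ∩ V ∈ 𝓝[X] x := Filter.inter_mem (hU x hxW.1) (hV x hxW.2)
      have hn' : (U ∩ V) ×ˢ Icc (0:ℝ) 1 ∈ 𝓝[X ×ˢ Icc (0:ℝ) 1] (x, t) := by
        rw [nhdsWithin_prod_eq]; exact Filter.prod_mem_prod hn self_mem_nhdsWithin
      have : ContinuousWithinAt K (X ×ˢ Icc (0:ℝ) 1) (x, t) := (hK (x,t) ⟨hxW, ht⟩).mono_of_mem_nhdsWithin hn'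
      refine this.congr_of_eventuallyEq ?_ (if_pos hxW)
      filter_upwards [hn'] with y hy
      exact if_pos hy.1
    · have hφ' : ContinuousWithinAt (fun q : A × ℝ => φ q.1) (X ×ˢ Icc (0:ℝ) 1) (x, t) :=
        φc.comp continuousOn_fst (fun q hq => hq.1) (x, t) ⟨hx, ht⟩
      by_cases hxV : x ∈ V
      · have hxU : x ∉ U := fun h => hxW ⟨h, hxV⟩
        have hn' : V ×ˢ Icc (0:ℝ) 1 ∈ 𝓝[X ×ˢ Icc (0:ℝ) 1] (x, t) := by
          rw [nhdsWithin_prod_eq]; exact Filter.prod_mem_prod (hV x hxV) self_mem_nhdsWithin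
        have : ContinuousWithinAt κ (X ×ˢ Icc (0:ℝ) 1) (x, t) := (k1 (x,t) ⟨hxV, ht⟩).mono_of_mem_nhdsWithin hn'
        refine this.congr_of_eventuallyEq ?_ (by simp only [H]; rw [if_neg hxW, if_pos hxV])
        have h5 : (1/2 : ℝ) < φ x := by rw [φ1 x hx hxU]; norm_num
        filter_upwards [hn', hφ'.eventually (lt_mem_nhds h5)] with y hy hy2
        simp only [H]
        split_ifs with h6 h7
        · simp only [K]; rw [if_pos (by linarith), cl1 _ hy2.le]
          exact g4 _ h6 _ hy.2
        · rfl
        · exact absurd hy.1 h7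
      · have hxU : x ∈ U := by rw [hX] at hx; exact hx.resolve_right hxV
        have hn' : U ×ˢ Icc (0:ℝ) 1 ∈ 𝓝[X ×ˢ Icc (0:ℝ) 1] (x, t) := by
          rw [nhdsWithin_prod_eq]; exact Filter.prod_mem_prod (hU x hxU) self_mem_nhdsWithin
        have : ContinuousWithinAt κ' (X ×ˢ Icc (0:ℝ) 1) (x, t) := (k1' (x,t) ⟨hxU, ht⟩).mono_of_mem_nhdsWithin hn'
        refine this.congr_of_eventuallyEq ?_ (by simp only [H]; rw [if_neg hxW, if_neg hxV])
        have h5 : φ x < -1/2 := by rw [φ2 x hx hxV]; norm_num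
        filter_upwards [hn', hφ'.eventually (gt_mem_nhds h5)] with y hy hy2
        simp only [H]
        split_ifs with h6 h7
        · simp only [K]; rw [if_neg (by linarith), cl1 _ (by linarith)]
          exact g4' _ h6 _ hy.2
        · exact absurd ⟨hy.1, h7⟩ h6
        · rfl
  · intro x hx t ht
    simp only [H, K]
    split_ifs with h5 h6 h6
    · exact hVX (g2 x h5 t ht _ (clI _))
    · exact hUX (g2' x h5 t ht _ (clI _))
    · exact hVX (k2 x h6 t ht)
    · rw [hX] at hx; exact hUX (k2' x (hx.resolve_right h6) t ht)
  · intro x hx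
    simp only [H, K]
    split_ifs with h5 h6 h6
    · exact (g5 x h5 _ (clI _))
    · exact (g5' x h5 _ (clI _))
    · exact (k3 x h6)
    · rw [hX] at hx; exact (k3' x (hx.resolve_right h6))
  · intro x hx
    simp only [H, K]
    split_ifs with h5 h6 h6
    · exact (g6 x h5 _ (clI _))
    · exact (g6' x h5 _ (clI _))
    · exact (k4 x h6)
    · rw [hX] at hx; exact (k4' x (hx.resolve_right h6))


theorem DC_iUnion {A ι : Type*} [TopologicalSpace A] {B : Set A} (Y : ι → Set A) (hB : ∀ i, Y i ⊆ B)
    (ho : ∀ i, ∀ x ∈ Y i, Y i ∈ 𝓝[B] x) (hd : ∀ i j x, x ∈ Y i → x ∈ Y j → i = j)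
    (h : ∀ i, DC (Y i)) : DC (⋃ i, Y i) := by
  classical
  by_cases hne : Nonempty ι
  · let l : A → ι := fun x => if hx : ∃ i, x ∈ Y i then hx.choose else Classical.arbitrary ι
    have hl : ∀ i, ∀ x ∈ Y i, l x = i := by
      intro i x hx
      have hx' : ∃ i, x ∈ Y i := ⟨i, hx⟩
      simp only [l, dif_pos hx']
      exact hd _ _ x hx'.choose_spec hx
    apply DC_label l
    · intro x hx
      obtain ⟨i, hi⟩ := mem_iUnion.1 hx
      have : Y i ∈ 𝓝[⋃ i, Y i] x := nhdsWithin_mono _ (iUnion_subset hB) (ho i x hi)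
      filter_upwards [this] with y hy
      rw [hl i x hi, hl i y hy]
    · intro i
      convert h i using 1
      ext x
      constructor
      · rintro ⟨hx, hx'⟩
        obtain ⟨j, hj⟩ := mem_iUnion.1 hx
        rw [hl j x hj] at hx'
        exact hx' ▸ hj
      · intro hx
        exact ⟨mem_iUnion.2 ⟨i, hx⟩, hl i x hx⟩
  · convert DC_empty (A := A)
    ext x
    simp only [mem_iUnion, mem_empty_iff_false, iff_false]
    rintro ⟨i, _⟩
    exact hne ⟨i⟩

theorem Contr.glue_finset {A ι : Type*} [TopologicalSpace A] [TopologicalSpace.MetrizableSpace A]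
    {B P : Set A} (O : ι → Set A) (hPB : P ⊆ B) (hB : ∀ i, O i ⊆ B) (hP : ∀ x ∈ P, P ∈ 𝓝[B] x)
    (ho : ∀ i, ∀ x ∈ O i, O i ∈ 𝓝[B] x) (hd : ∀ i j x, x ∈ O i → x ∈ O j → i = j)
    (cP : Contr P) (cO : ∀ i, Contr (O i)) (cI : ∀ i, Contr (P ∩ O i)) (F : Finset ι) :
    Contr (P ∪ ⋃ i ∈ F, O i) := by
  classical
  induction F using Finset.induction_on with
  | empty => simpa using cP
  | insert j F hj ih =>
    have hsub : P ∪ ⋃ i ∈ F, O i ⊆ B := union_subset hPB (iUnion₂_subset fun i _ => hB i)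
    refine Contr.glue (U := P ∪ ⋃ i ∈ F, O i) (V := O j) ?_ ?_ ?_ ih (cO j) ?_
    · rw [Finset.set_biUnion_insert]
      ext x; simp only [mem_union]; tauto
    · intro x hx
      have hXB : P ∪ ⋃ i ∈ insert j F, O i ⊆ B := union_subset hPB (iUnion₂_subset fun i _ => hB i)
      refine nhdsWithin_mono _ hXB ?_
      rcases hx with hx | hx
      · exact Filter.mem_of_superset (hP x hx) subset_union_left
      · obtain ⟨i, hi, hx⟩ := mem_iUnion₂.1 hx
        refine Filter.mem_of_superset (ho i x hx) ?_
        exact (subset_biUnion_of_mem (u := O) hi).trans subset_union_right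
    · intro x hx
      have hXB : P ∪ ⋃ i ∈ insert j F, O i ⊆ B := union_subset hPB (iUnion₂_subset fun i _ => hB i)
      exact nhdsWithin_mono _ hXB (ho j x hx)
    · convert cI j using 1
      ext x
      constructor
      · rintro ⟨hx | hx, hx'⟩
        · exact ⟨hx, hx'⟩
        · obtain ⟨i, hi, hx⟩ := mem_iUnion₂.1 hx
          have := hd i j x hx hx'
          subst this; exact absurd hi hj
      · rintro ⟨hx, hx'⟩; exact ⟨Or.inl hx, hx'⟩

/-- contractions to any point along which `d` is affine -/
structure Dir {A : Type*} [TopologicalSpace A] (S : Set A) (d : A → ℝ) : Prop where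
  cd : ContinuousOn d S
  hm : ∀ s0 ∈ S, ∃ m : A × ℝ → A, ContinuousOn m (S ×ˢ Icc (0:ℝ) 1) ∧
    (∀ x ∈ S, ∀ t ∈ Icc (0:ℝ) 1, m (x, t) ∈ S) ∧ (∀ x ∈ S, m (x, 0) = x) ∧
    (∀ x ∈ S, m (x, 1) = s0) ∧ (∀ x ∈ S, ∀ t ∈ Icc (0:ℝ) 1, d (m (x,t)) = (1 - t) * d x + t * d s0)

theorem Dir.affine {A : Type*} [TopologicalSpace A] {S : Set A} {d : A → ℝ} (h : Dir S d) (a b : ℝ) :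
    Dir S (fun x => a * d x + b) where
  cd := (continuousOn_const.mul h.cd).add continuousOn_const
  hm := by
    intro s0 hs0
    obtain ⟨m, m1, m2, m3, m4, m5⟩ := h.hm s0 hs0
    refine ⟨m, m1, m2, m3, m4, fun x hx t ht => ?_⟩
    rw [m5 x hx t ht]; ring

theorem AngH.dir {A B : Type*} [TopologicalSpace A] [TopologicalSpace B] {S : Set A} {T : Set B}
    {w : A → ℂ} {v : B → ℂ} {θ : A → ℝ} {η : B → ℝ} (h : AngH S w θ) (k : AngH T v η) :
    Dir (S ×ˢ T) (fun p => η p.2 - θ p.1) where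
  cd := (k.cθ.comp continuousOn_snd (fun p hp => hp.2)).sub (h.cθ.comp continuousOn_fst (fun p hp => hp.1))
  hm := by
    rintro ⟨s0, t0⟩ ⟨hs0, ht0⟩
    obtain ⟨m, m1, m2, m3, m4, m5⟩ := h.hm s0 hs0
    obtain ⟨n, n1, n2, n3, n4, n5⟩ := k.hm t0 ht0
    refine ⟨fun q => (m (q.1.1, q.2), n (q.1.2, q.2)), ?_, ?_, ?_, ?_, ?_⟩
    · exact (m1.comp (by fun_prop) (fun q hq => ⟨hq.1.1, hq.2⟩)).prodMk
        (n1.comp (by fun_prop) (fun q hq => ⟨hq.1.2, hq.2⟩))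
    · intro x hx t ht; exact ⟨m2 _ hx.1 _ ht, n2 _ hx.2 _ ht⟩
    · intro x hx; simp [m3 _ hx.1, n3 _ hx.2]
    · intro x hx; simp [m4 _ hx.1, n4 _ hx.2]
    · intro x hx t ht
      simp only [m5 _ hx.1 _ ht, n5 _ hx.2 _ ht]; ring

theorem Dir.dc {A : Type*} [TopologicalSpace A] {S : Set A} {d : A → ℝ} (h : Dir S d) : DC S := by
  rcases eq_empty_or_nonempty S with rfl | ⟨s0, hs0⟩
  · exact DC_empty
  · obtain ⟨m, m1, m2, m3, m4, m5⟩ := h.hm s0 hs0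
    exact Contr.dc ⟨s0, hs0, m, m1, m2, m3, m4⟩

theorem DC_im : DC {z : ℂ | z.im ≠ 0} := by
  have h2 := MA.baseIm.close
  refine h2.retract (fun z => ((), z)) (fun p => p.2) (by fun_prop) (by fun_prop) ?_ ?_ ?_
  · intro z hz; exact ⟨hz, hz⟩
  · intro p hp; exact hp.1
  · intro x _; rfl

/-- `Q`, mixed signs -/
theorem Q_mixed {A : Type*} [TopologicalSpace A] {S : Set A} {d : A → ℝ} (h : Dir S d) :
    DC {p : A × ℂ | p.1 ∈ S ∧ (p.2.re * Real.sin (d p.1) - p.2.im * Real.cos (d p.1) ≠ 0 ∨ 0 < Real.sin (d p.1)) ∧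
      (p.2.im ≠ 0 ∨ 0 < - Real.sin (d p.1))} := by
  let F : ℝ → ℝ := fun d => (d - Real.arccos (Real.cos d)) / 2
  have hF : Continuous F := by
    have := Real.continuous_arccos.comp Real.continuous_cos
    simp only [F]; exact (continuous_id.sub this).div_const 2
  have key : ∀ (d : ℝ) (z : ℂ), ((z.re * Real.sin d - z.im * Real.cos d ≠ 0 ∨ 0 < Real.sin d) ∧
      (z.im ≠ 0 ∨ 0 < - Real.sin d)) ↔ z.im * Real.cos (F d) - z.re * Real.sin (F d) ≠ 0 := by
    intro d z
    have ha0 := Real.arccos_nonneg (Real.cos d)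
    have ha1 := Real.arccos_le_pi (Real.cos d)
    have ha : Real.cos (Real.arccos (Real.cos d)) = Real.cos d :=
      Real.cos_arccos (Real.neg_one_le_cos d) (Real.cos_le_one d)
    have hsa := Real.sin_nonneg_of_nonneg_of_le_pi ha0 ha1
    have hcs := Real.sin_sq_add_cos_sq d
    obtain ⟨k, hk⟩ := Real.cos_eq_cos_iff.1 ha
    simp only [F]
    set a := Real.arccos (Real.cos d) with hadef
    rcases hk with hk | hk
    · have e1 : (d - a) / 2 = k * Real.pi := by rw [hk]; ring
      have e2 : Real.sin d = Real.sin a := by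
        rw [hk, add_comm, show 2 * (k:ℝ) * Real.pi = k * (2 * Real.pi) by ring, Real.sin_add_int_mul_two_pi]
      have e4 : Real.cos (k * Real.pi) ≠ 0 := by
        have h4 := Real.sin_sq_add_cos_sq (k * Real.pi)
        rw [Real.sin_int_mul_pi] at h4
        intro h; rw [h] at h4; norm_num at h4
      rw [e1, Real.sin_int_mul_pi]
      constructor
      · rintro ⟨_, h | h⟩
        · simpa using ⟨h, e4⟩
        · rw [e2] at h; linarith
      · intro h
        have h' : z.im ≠ 0 := by intro h0; apply h; rw [h0]; ring
        refine ⟨?_, Or.inl h'⟩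
        rcases eq_or_lt_of_le hsa with h5 | h5
        · left
          rw [e2, ← h5]
          rw [e2, ← h5] at hcs
          have : Real.cos d ≠ 0 := by intro h; rw [h] at hcs; norm_num at hcs
          simpa using ⟨h', this⟩
        · right; rwa [e2]
    · have e1 : (d - a) / 2 = d - k * Real.pi := by
        have : a = 2 * k * Real.pi - d := by linarith
        rw [this]; ring
      have e2 : Real.sin d = - Real.sin a := by
        rw [hk, show 2 * (k:ℝ) * Real.pi - a = -a + k * (2 * Real.pi) by ring, Real.sin_add_int_mul_two_pi, Real.sin_neg]
      have e4 : Real.cos (k * Real.pi) ≠ 0 := by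
        have h4 := Real.sin_sq_add_cos_sq (k * Real.pi)
        rw [Real.sin_int_mul_pi] at h4
        intro h; rw [h] at h4; norm_num at h4
      rw [e1, Real.sin_sub, Real.cos_sub, Real.sin_int_mul_pi]
      have e5 : z.im * (Real.cos d * Real.cos (k * Real.pi) + Real.sin d * 0) - z.re *
        (Real.sin d * Real.cos (k * Real.pi) - Real.cos d * 0) =
          -(z.re * Real.sin d - z.im * Real.cos d) * Real.cos (k * Real.pi) := by ring
      rw [e5, neg_mul, neg_ne_zero, mul_ne_zero_iff]
      constructor
      · rintro ⟨h | h, _⟩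
        · exact ⟨h, e4⟩
        · rw [e2] at h; linarith
      · rintro ⟨h, _⟩
        refine ⟨Or.inl h, ?_⟩
        rcases eq_or_lt_of_le hsa with h5 | h5
        · left
          intro h0; apply h; rw [h0, e2, ← h5]; ring
        · right; rw [e2]; linarith
  refine (h.dc.prod DC_im).retract (fun p => (p.1, p.2 * Complex.exp (-(F (d p.1)) * Complex.I)))
    (fun p => (p.1, p.2 * Complex.exp ((F (d p.1)) * Complex.I))) ?_ ?_ ?_ ?_ ?_
  · refine continuousOn_fst.prodMk (continuousOn_snd.mul (Complex.continuous_exp.comp_continuousOn ?_))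
    refine ContinuousOn.mul (ContinuousOn.neg (Complex.continuous_ofReal.comp_continuousOn (hF.comp_continuousOn ?_))) continuousOn_const
    exact h.cd.comp continuousOn_fst (fun p hp => hp.1)
  · refine continuousOn_fst.prodMk (continuousOn_snd.mul (Complex.continuous_exp.comp_continuousOn ?_))
    refine ContinuousOn.mul (Complex.continuous_ofReal.comp_continuousOn (hF.comp_continuousOn ?_)) continuousOn_const
    exact h.cd.comp continuousOn_fst (fun p hp => hp.1)
  · rintro ⟨s, z⟩ ⟨hs, hz⟩
    refine ⟨hs, ?_⟩
    have := (key _ _).1 hz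
    have e : Complex.exp (-(F (d s)) * Complex.I) = Real.cos (F (d s)) - Real.sin (F (d s)) * Complex.I := by
      rw [Complex.exp_mul_I]; simp
      ring
    simp only [mem_setOf_eq, e]
    simp only [Complex.mul_im, Complex.sub_re, Complex.sub_im, Complex.ofReal_re, Complex.ofReal_im, Complex.mul_re,
      Complex.I_re, Complex.I_im]
    convert this using 1
    ring
  · rintro ⟨s, z⟩ ⟨hs, hz⟩
    refine ⟨hs, ?_⟩
    simp only
    rw [key]
    have e : Complex.exp ((F (d s)) * Complex.I) = Real.cos (F (d s)) + Real.sin (F (d s)) * Complex.I := by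
      rw [Complex.exp_mul_I]; simp
    rw [e]
    simp only [Complex.mul_im, Complex.add_re, Complex.add_im, Complex.ofReal_re, Complex.ofReal_im, Complex.mul_re,
      Complex.I_re, Complex.I_im]
    have h1 := Real.sin_sq_add_cos_sq (F (d s))
    have : z.im ≠ 0 := hz
    convert this using 1
    linear_combination z.im * h1
  · rintro ⟨s, z⟩ ⟨hs, hz⟩
    ext1
    · rfl
    · simp only [mul_assoc, ← Complex.exp_add]
      simp


/-- the general affine piece -/
theorem Dir.piece {A : Type*} [TopologicalSpace A] {S : Set A} {d : A → ℝ} (h : Dir S d)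
    {e : ℝ} (he : e = 1 ∨ e = -1) {C : Set (ℝ × ℝ)} (hC : Convex ℝ C) :
    {p : A × ℂ | p.1 ∈ S ∧ 0 < e * p.2.im ∧ (d p.1, (e * p.2).arg) ∈ C} = ∅ ∨
    Contr {p : A × ℂ | p.1 ∈ S ∧ 0 < e * p.2.im ∧ (d p.1, (e * p.2).arg) ∈ C} := by
  set Y := {p : A × ℂ | p.1 ∈ S ∧ 0 < e * p.2.im ∧ (d p.1, (e * p.2).arg) ∈ C} with hY
  rcases eq_empty_or_nonempty Y with h0 | ⟨⟨s0, z0⟩, hp0⟩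
  · exact Or.inl h0
  right
  have e2 : e * e = 1 := by rcases he with rfl | rfl <;> norm_num
  have e2' : (e:ℂ) * e = 1 := by exact_mod_cast e2
  have him : ∀ z : ℂ, (e * z).im = e * z.im := by intro z; simp
  obtain ⟨m, m1, m2, m3, m4, m5⟩ := h.hm s0 hp0.1
  let L : (A × ℂ) × ℝ → ℂ := fun q => (1 - q.2 : ℝ) * Complex.log (e * q.1.2) + (q.2 : ℝ) * Complex.log (e * z0)
  have hslit : ∀ p ∈ Y, (e:ℂ) * p.2 ∈ Complex.slitPlane := by
    intro p hp
    right
    rw [him]; exact hp.2.1.ne'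
  have hpos : ∀ z : ℂ, 0 < e * z.im → 0 < (e * z).arg ∧ 0 < Real.pi - (e * z).arg := by
    intro z hz
    have := (sign_arg (e := 1) (Or.inl rfl) (e * z)).1 (by rw [him]; linarith)
    simpa using this
  have hLim : ∀ p ∈ Y, ∀ t, (L (p, t)).im = (1 - t) * (e * p.2).arg + t * (e * z0).arg := by
    intro p hp t
    simp [L, Complex.log_im, Complex.add_im, Complex.mul_im]
  have hLe : ∀ p ∈ Y, ∀ t ∈ Icc (0:ℝ) 1, 0 < (L (p, t)).im ∧ 0 < Real.pi - (L (p, t)).im := by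
    intro p hp t ht
    obtain ⟨a1, a2⟩ := hpos _ hp.2.1
    obtain ⟨b1, b2⟩ := hpos _ hp0.2.1
    rw [hLim p hp]
    constructor
    · have := convex_comb_pos a1 b1 ht
      linarith
    · have := convex_comb_pos a2 b2 ht
      linarith
  have harg : ∀ p ∈ Y, ∀ t ∈ Icc (0:ℝ) 1, (Complex.exp (L (p, t))).arg = (L (p, t)).im := by
    intro p hp t ht
    have := hLe p hp t ht
    rw [Complex.arg_exp, toIocMod_eq_self]
    constructor <;> linarith [Real.pi_pos]
  refine ⟨(s0, z0), hp0, fun q => (m (q.1.1, q.2), e * Complex.exp (L q)), ?_, ?_, ?_, ?_⟩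
  · refine ContinuousOn.prodMk (m1.comp (by fun_prop) (fun q hq => ⟨hq.1.1, hq.2⟩)) (continuousOn_const.mul ?_)
    refine Complex.continuous_exp.comp_continuousOn ?_
    refine ContinuousOn.add (ContinuousOn.mul (by fun_prop) ?_) (by fun_prop)
    intro q hq
    refine ContinuousWithinAt.clog ?_ (hslit q.1 hq.1)
    fun_prop
  · intro p hp t ht
    refine ⟨m2 _ hp.1 _ ht, ?_, ?_⟩
    · simp only
      have := (sign_arg (e := 1) (Or.inl rfl) (Complex.exp (L (p, t)))).2
        (by rw [harg p hp t ht]; simpa using hLe p hp t ht)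
      rw [him, ← mul_assoc, e2]; exact this
    · simp only
      rw [← mul_assoc, e2', one_mul, harg p hp t ht, hLim p hp, m5 _ hp.1 _ ht]
      have := hC hp.2.2 hp0.2.2 (sub_nonneg.2 ht.2) ht.1 (by ring)
      simpa using this
  · intro p hp
    simp only [L, m3 _ hp.1]
    have := Complex.slitPlane_ne_zero (hslit p hp)
    ext1
    · rfl
    · simp [Complex.exp_log this, ← mul_assoc, e2']
  · intro p hp
    simp only [L, m4 _ hp.1]
    have := Complex.slitPlane_ne_zero (hslit _ hp0)
    simp only [] at this
    simp [Complex.exp_log this, ← mul_assoc, e2']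

def sg (b : Bool) : ℝ := if b then 1 else -1

theorem sg_cases (b : Bool) : sg b = 1 ∨ sg b = -1 := by cases b <;> simp [sg]

/-- pieces of `Q` -/
def QP {A : Type*} (S : Set A) (d : A → ℝ) : Set (A × ℂ) :=
  {p | p.1 ∈ S ∧ 0 < d p.1 ∧ d p.1 < Real.pi}

def QO {A : Type*} (S : Set A) (d : A → ℝ) (i : Bool × Bool) : Set (A × ℂ) :=
  {p | p.1 ∈ S ∧ 0 < sg i.1 * p.2.im ∧ 0 < sg i.2 * (d p.1 - (sg i.1 * p.2).arg) ∧
    sg i.2 * (d p.1 - (sg i.1 * p.2).arg) < Real.pi}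

theorem QP_open {A : Type*} [TopologicalSpace A] {S : Set A} {d : A → ℝ} (h : ContinuousOn d S) :
    ∀ x ∈ QP S d, QP S d ∈ 𝓝[S ×ˢ univ] x := by
  intro x hx
  have : ContinuousWithinAt (fun p : A × ℂ => d p.1) (S ×ˢ univ) x :=
    h.comp continuousOn_fst (fun p hp => hp.1) x ⟨hx.1, mem_univ _⟩
  filter_upwards [this.eventually (lt_mem_nhds hx.2.1), this.eventually (gt_mem_nhds hx.2.2),
    self_mem_nhdsWithin] with y h1 h2 h3
  exact ⟨h3.1, h1, h2⟩

theorem QO_open {A : Type*} [TopologicalSpace A] {S : Set A} {d : A → ℝ} (h : ContinuousOn d S) (i) :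
    ∀ x ∈ QO S d i, QO S d i ∈ 𝓝[S ×ˢ univ] x := by
  intro x hx
  have hd : ContinuousWithinAt (fun p : A × ℂ => d p.1) (S ×ˢ univ) x :=
    h.comp continuousOn_fst (fun p hp => hp.1) x ⟨hx.1, mem_univ _⟩
  have hi : ContinuousWithinAt (fun p : A × ℂ => sg i.1 * p.2.im) (S ×ˢ univ) x := by
    have : Continuous (fun p : A × ℂ => sg i.1 * p.2.im) := by fun_prop
    exact this.continuousWithinAt
  have ha : ContinuousWithinAt (fun p : A × ℂ => ((sg i.1 : ℂ) * p.2).arg) (S ×ˢ univ) x := by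
    refine ContinuousAt.comp_continuousWithinAt (f := fun p : A × ℂ => (sg i.1 : ℂ) * p.2)
      (Complex.continuousAt_arg ?_) ?_
    · right; simpa using ⟨left_ne_zero_of_mul hx.2.1.ne', right_ne_zero_of_mul hx.2.1.ne'⟩
    · have : Continuous (fun p : A × ℂ => (sg i.1 : ℂ) * p.2) := by fun_prop
      exact this.continuousWithinAt
  have hb := (hd.sub ha).const_mul (sg i.2)
  filter_upwards [hi.eventually (lt_mem_nhds hx.2.1), hb.eventually (lt_mem_nhds hx.2.2.1),
    hb.eventually (gt_mem_nhds hx.2.2.2), self_mem_nhdsWithin] with y h1 h2 h3 h4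
  exact ⟨h4.1, h1, h2, h3⟩

theorem QO_disj {A : Type*} {S : Set A} {d : A → ℝ} (i j : Bool × Bool) (x : A × ℂ)
    (hi : x ∈ QO S d i) (hj : x ∈ QO S d j) : i = j := by
  have sgd : ∀ b c : Bool, ∀ r, 0 < sg b * r → 0 < sg c * r → b = c := by
    intro b c r h1 h2
    cases b <;> cases c <;> simp [sg] at * <;> linarith
  have h1 := sgd _ _ _ hi.2.1 hj.2.1
  have h2 := hi.2.2.1
  rw [h1] at h2
  exact Prod.ext h1 (sgd _ _ _ h2 hj.2.2.1)

theorem arg_pos {e : ℝ} {z : ℂ} (h : 0 < e * z.im) : 0 < (e * z).arg ∧ (e * z).arg < Real.pi := by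
  have := (sign_arg (e := 1) (Or.inl rfl) (e * z)).1 (by simpa using h)
  simpa using this

theorem Y_dc {A : Type*} [TopologicalSpace A] [TopologicalSpace.MetrizableSpace A] {S : Set A} {d : A → ℝ}
    (h : Dir S d) : DC (QP S d ∪ ⋃ i, QO S d i) := by
  have hPB : QP S d ⊆ S ×ˢ univ := fun x hx => ⟨hx.1, mem_univ _⟩
  have hOB : ∀ i, QO S d i ⊆ S ×ˢ univ := fun i x hx => ⟨hx.1, mem_univ _⟩
  have hOc : ∀ i, QO S d i = ∅ ∨ Contr (QO S d i) := by
    intro i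
    have hC : Convex ℝ {q : ℝ × ℝ | 0 < sg i.2 * (q.1 - q.2) ∧ sg i.2 * (q.1 - q.2) < Real.pi} := by
      have : IsLinearMap ℝ (fun q : ℝ × ℝ => sg i.2 * (q.1 - q.2)) :=
        ⟨fun x y => by simp; ring, fun c x => by simp; ring⟩
      exact (convex_halfSpace_gt this 0).inter (convex_halfSpace_lt this _)
    exact h.piece (sg_cases i.1) hC
  have hIc : ∀ i, QP S d ∩ QO S d i = ∅ ∨ Contr (QP S d ∩ QO S d i) := by
    intro i
    have hC : Convex ℝ {q : ℝ × ℝ | (0 < q.1 ∧ q.1 < Real.pi) ∧ 0 < sg i.2 * (q.1 - q.2) ∧ sg i.2 * (q.1 - q.2) < Real.pi} := by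
      have : IsLinearMap ℝ (fun q : ℝ × ℝ => sg i.2 * (q.1 - q.2)) :=
        ⟨fun x y => by simp; ring, fun c x => by simp; ring⟩
      have t2 : IsLinearMap ℝ (fun q : ℝ × ℝ => q.1) := ⟨fun x y => rfl, fun c x => rfl⟩
      exact ((convex_halfSpace_gt t2 0).inter (convex_halfSpace_lt t2 _)).inter
        ((convex_halfSpace_gt this 0).inter (convex_halfSpace_lt this _))
    have e : QP S d ∩ QO S d i = {p : A × ℂ | p.1 ∈ S ∧ 0 < sg i.1 * p.2.im ∧ (d p.1, (sg i.1 * p.2).arg) ∈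
        {q : ℝ × ℝ | (0 < q.1 ∧ q.1 < Real.pi) ∧ 0 < sg i.2 * (q.1 - q.2) ∧ sg i.2 * (q.1 - q.2) < Real.pi}} := by
      ext p
      simp only [QP, QO, mem_inter_iff, mem_setOf_eq]
      tauto
    rw [e]
    exact h.piece (sg_cases i.1) hC
  rcases eq_empty_or_nonempty (QP S d) with h0 | ⟨⟨s0, z0⟩, hp0⟩
  · rw [h0, empty_union]
    refine DC_iUnion _ hOB (QO_open h.cd) QO_disj (fun i => ?_)
    rcases hOc i with h1 | h1
    · rw [h1]; exact DC_empty
    · exact h1.dc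
  · have hne : ∀ i, (QP S d ∩ QO S d i).Nonempty := by
      intro i
      obtain ⟨h1, h2, h3⟩ := hp0
      simp only at h1 h2 h3
      let ζ : ℝ := if i.2 then d s0 / 2 else (d s0 + Real.pi) / 2
      have hζ : 0 < ζ ∧ ζ < Real.pi ∧ 0 < sg i.2 * (d s0 - ζ) ∧ sg i.2 * (d s0 - ζ) < Real.pi := by
        simp only [ζ, sg]
        split_ifs <;> refine ⟨?_, ?_, ?_, ?_⟩ <;> linarith
      have e2 : (sg i.1 : ℂ) * sg i.1 = 1 := by rcases sg_cases i.1 with h | h <;> rw [h] <;> norm_num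
      have e2' : sg i.1 * sg i.1 = 1 := by exact_mod_cast e2
      refine ⟨(s0, sg i.1 * Complex.exp (ζ * Complex.I)), ⟨h1, h2, h3⟩, h1, ?_, ?_⟩
      · simp only [Complex.mul_im, Complex.ofReal_re, Complex.ofReal_im, zero_mul, add_zero,
          Complex.exp_ofReal_mul_I_im]
        rw [← mul_assoc, e2', one_mul]
        exact Real.sin_pos_of_pos_of_lt_pi hζ.1 hζ.2.1
      · simp only
        rw [← mul_assoc, e2, one_mul, Complex.arg_exp_mul_I, (toIocMod_eq_self _).2 ⟨by linarith [hζ.1, Real.pi_pos], by linarith [hζ.2.1]⟩]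
        exact hζ.2.2
    have cP : Contr (QP S d) := by
      obtain ⟨m, m1, m2, m3, m4, m5⟩ := h.hm s0 hp0.1
      refine ⟨(s0, z0), hp0, fun q => (m (q.1.1, q.2), (1 - q.2 : ℝ) * q.1.2 + (q.2 : ℝ) * z0), ?_, ?_, ?_, ?_⟩
      · exact (m1.comp (by fun_prop) (fun q hq => ⟨hq.1.1, hq.2⟩)).prodMk (by fun_prop)
      · intro p hp t ht
        have g1 := convex_comb_pos hp.2.1 hp0.2.1 ht
        have g2 := convex_comb_pos (sub_pos.2 hp.2.2) (sub_pos.2 hp0.2.2) ht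
        refine ⟨m2 _ hp.1 _ ht, ?_, ?_⟩ <;> simp only [m5 _ hp.1 _ ht] <;> simp only at g1 g2 <;> linarith
      · intro p hp; simp [m3 _ hp.1]
      · intro p hp; simp [m4 _ hp.1]
    have := Contr.glue_finset (QO S d) hPB hOB (QP_open h.cd) (QO_open h.cd) QO_disj cP
      (fun i => (hOc i).resolve_left (fun h => by
        have h1 := hne i; rw [h] at h1; simp at h1))
      (fun i => (hIc i).resolve_left (hne i).ne_empty) Finset.univ
    simpa using this.dc

theorem int_eq_of {k l : ℤ} {x y : ℝ} (h : x + k * (2 * Real.pi) = y + l * (2 * Real.pi))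
    (h1 : x - y < 2 * Real.pi) (h2 : y - x < 2 * Real.pi) : k = l := by
  have hp := Real.two_pi_pos
  have h3 : ((l - k : ℤ) : ℝ) * (2 * Real.pi) = x - y := by push_cast; linarith
  have h4 : ((l - k : ℤ) : ℝ) < 1 := by by_contra hc; push Not at hc; nlinarith
  have h5 : (-1 : ℝ) < ((l - k : ℤ) : ℝ) := by by_contra hc; push Not at hc; nlinarith
  have h6 : l - k < 1 := by exact_mod_cast h4
  have h7 : -1 < l - k := by exact_mod_cast h5
  lia

theorem exists_mod (x : ℝ) : ∃ k : ℤ, -Real.pi < x - k * (2 * Real.pi) ∧ x - k * (2 * Real.pi) ≤ Real.pi := by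
  have := toIocMod_mem_Ioc Real.two_pi_pos (-Real.pi) x
  refine ⟨toIocDiv Real.two_pi_pos (-Real.pi) x, ?_⟩
  have e : x - toIocDiv Real.two_pi_pos (-Real.pi) x * (2 * Real.pi) = toIocMod Real.two_pi_pos (-Real.pi) x := by
    rw [← zsmul_eq_mul]; exact self_sub_toIocDiv_zsmul _ _ _
  rw [e]
  exact ⟨this.1, by linarith [this.2]⟩

theorem g_eq {e : ℝ} (he : e = 1 ∨ e = -1) (z : ℂ) (d : ℝ) :
    z.re * Real.sin d - z.im * Real.cos d = e * ‖z‖ * Real.sin (d - (e * z).arg) := by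
  have e2 : e * e = 1 := by rcases he with rfl | rfl <;> norm_num
  have hn : ‖(e:ℂ) * z‖ = ‖z‖ := by rcases he with rfl | rfl <;> simp
  have h1 : e * z.re = ‖z‖ * Real.cos ((e * z).arg) := by
    rw [← hn, Complex.norm_mul_cos_arg]; simp
  have h2 : e * z.im = ‖z‖ * Real.sin ((e * z).arg) := by
    rw [← hn, Complex.norm_mul_sin_arg]; simp
  rw [Real.sin_sub]
  linear_combination (e * Real.sin d) * h1 - e * Real.cos d * h2 - (z.re * Real.sin d - z.im * Real.cos d) * e2

/-- `Q`, both signs `+` -/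
theorem Q_pp {A : Type*} [TopologicalSpace A] [TopologicalSpace.MetrizableSpace A] {S : Set A} {d : A → ℝ}
    (h : Dir S d) :
    DC {p : A × ℂ | p.1 ∈ S ∧ (p.2.re * Real.sin (d p.1) - p.2.im * Real.cos (d p.1) ≠ 0 ∨ 0 < Real.sin (d p.1)) ∧
      (p.2.im ≠ 0 ∨ 0 < Real.sin (d p.1))} := by
  let Y : ℤ → Set (A × ℂ) := fun k => QP S (fun x => 1 * d x + -(k * (2 * Real.pi))) ∪
    ⋃ i, QO S (fun x => 1 * d x + -(k * (2 * Real.pi))) i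
  have hdir : ∀ k : ℤ, Dir S (fun x => 1 * d x + -(k * (2 * Real.pi))) := fun k => h.affine _ _
  have hYd : ∀ k, DC (Y k) := fun k => Y_dc (hdir k)
  have hpi := Real.pi_pos
  have hB : ∀ k, Y k ⊆ S ×ˢ univ := by
    rintro k x (hx | hx)
    · exact ⟨hx.1, mem_univ _⟩
    · obtain ⟨i, hi⟩ := mem_iUnion.1 hx
      exact ⟨hi.1, mem_univ _⟩
  have hO : ∀ k, ∀ x ∈ Y k, Y k ∈ 𝓝[S ×ˢ univ] x := by
    rintro k x (hx | hx)
    · exact Filter.mem_of_superset (QP_open (hdir k).cd x hx) subset_union_left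
    · obtain ⟨i, hi⟩ := mem_iUnion.1 hx
      exact Filter.mem_of_superset (QO_open (hdir k).cd i x hi) ((subset_iUnion _ i).trans subset_union_right)
  have hcore : ∀ k, ∀ x ∈ Y k, (0 < d x.1 - k * (2 * Real.pi) ∧ d x.1 - k * (2 * Real.pi) < Real.pi) ∨
      ∃ b : Bool, 0 < sg b * x.2.im ∧ -Real.pi < d x.1 - k * (2 * Real.pi) - (sg b * x.2).arg ∧
        d x.1 - k * (2 * Real.pi) - (sg b * x.2).arg < Real.pi := by
    rintro k x (hx | hx)
    · left
      obtain ⟨_, h1, h2⟩ := hx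
      constructor <;> linarith
    · right
      obtain ⟨⟨b, c⟩, _, h1, h2, h3⟩ := mem_iUnion.1 hx
      simp only at h1 h2 h3
      refine ⟨b, h1, ?_⟩
      cases c <;> simp only [sg] at h2 h3 ⊢ <;> simp only [Bool.false_eq_true, if_false, if_true] at h2 h3 <;>
        constructor <;> linarith
  have hdisj : ∀ k l x, x ∈ Y k → x ∈ Y l → k = l := by
    intro k l x hk hl
    rcases hcore k x hk with ⟨a1, a2⟩ | ⟨b, a0, a1, a2⟩ <;> rcases hcore l x hl with ⟨b1, b2⟩ | ⟨c, b0, b1, b2⟩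
    · refine int_eq_of (x := d x.1 - k * (2 * Real.pi)) (y := d x.1 - l * (2 * Real.pi)) ?_ ?_ ?_ <;> linarith
    · have := arg_pos b0
      refine int_eq_of (x := d x.1 - k * (2 * Real.pi)) (y := d x.1 - l * (2 * Real.pi)) ?_ ?_ ?_ <;> linarith
    · have := arg_pos a0
      refine int_eq_of (x := d x.1 - k * (2 * Real.pi)) (y := d x.1 - l * (2 * Real.pi)) ?_ ?_ ?_ <;> linarith
    · have hbc : b = c := by
        cases b <;> cases c <;> simp [sg] at a0 b0 ⊢ <;> linarith
      subst hbc
      refine int_eq_of (x := d x.1 - k * (2 * Real.pi)) (y := d x.1 - l * (2 * Real.pi)) ?_ ?_ ?_ <;> linarith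
  convert DC_iUnion Y hB hO hdisj hYd using 1
  ext ⟨s, z⟩
  constructor
  · rintro ⟨hs, h1, h2⟩
    simp only at hs h1 h2
    rw [mem_iUnion]
    by_cases hsin : 0 < Real.sin (d s)
    · obtain ⟨k, k1, k2⟩ := exists_mod (d s)
      refine ⟨k, Or.inl ⟨hs, ?_⟩⟩
      simp only
      have e : Real.sin (d s - k * (2 * Real.pi)) = Real.sin (d s) := Real.sin_sub_int_mul_two_pi _ _
      have h3 : 0 < d s - k * (2 * Real.pi) := by
        by_contra hc; push Not at hc
        have := Real.sin_nonpos_of_nonpos_of_neg_pi_le hc k1.le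
        linarith
      have h4 : d s - k * (2 * Real.pi) < Real.pi := by
        refine lt_of_le_of_ne k2 (fun hc => ?_)
        rw [hc, Real.sin_pi] at e; linarith
      constructor <;> linarith
    · have h1 := h1.resolve_right hsin
      have h2 := h2.resolve_right hsin
      obtain ⟨b, hb⟩ : ∃ b, 0 < sg b * z.im := by
        rcases lt_or_gt_of_ne h2 with h3 | h3
        · exact ⟨false, by simp [sg, h3]⟩
        · exact ⟨true, by simp [sg, h3]⟩
      obtain ⟨k, k1, k2⟩ := exists_mod (d s - (sg b * z).arg)
      rw [g_eq (sg_cases b) z] at h1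
      have h3 := right_ne_zero_of_mul h1
      have e := Real.sin_sub_int_mul_two_pi (d s - (sg b * z).arg) k
      rw [← e] at h3
      refine ⟨k, Or.inr (mem_iUnion.2 ?_)⟩
      have h4 : d s - (sg b * z).arg - k * (2 * Real.pi) ≠ 0 := by intro h; rw [h] at h3; simp at h3
      have h5 : d s - (sg b * z).arg - k * (2 * Real.pi) ≠ Real.pi := by intro h; rw [h] at h3; simp at h3
      have h6 := lt_of_le_of_ne k2 h5
      rcases lt_or_gt_of_ne h4 with h7 | h7
      · refine ⟨(b, false), hs, hb, ?_⟩
        simp only [sg, Bool.false_eq_true, if_false] at *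
        constructor <;> linarith
      · refine ⟨(b, true), hs, hb, ?_⟩
        simp only [sg, if_true] at *
        constructor <;> linarith
  · intro hx
    obtain ⟨k, hk⟩ := mem_iUnion.1 hx
    refine ⟨(hB k hk).1, ?_⟩
    rcases hk with hk | hk
    · obtain ⟨_, h1, h2⟩ := hk
      have : 0 < Real.sin (d s) := by
        rw [← Real.sin_sub_int_mul_two_pi _ k]
        refine Real.sin_pos_of_pos_of_lt_pi ?_ ?_ <;> simp only at h1 h2 <;> linarith
      exact ⟨Or.inr this, Or.inr this⟩
    · obtain ⟨⟨b, c⟩, _, h1, h2, h3⟩ := mem_iUnion.1 hk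
      simp only at h1 h2 h3
      refine ⟨Or.inl ?_, Or.inl (right_ne_zero_of_mul h1.ne')⟩
      simp only
      rw [g_eq (sg_cases b) z]
      have hz : ‖z‖ ≠ 0 := by
        rw [norm_ne_zero_iff]; intro h0; rw [h0] at h1; simp at h1
      refine mul_ne_zero (mul_ne_zero (left_ne_zero_of_mul h1.ne') hz) ?_
      rw [← Real.sin_sub_int_mul_two_pi _ k]
      rcases sg_cases c with hc | hc <;> rw [hc] at h2 h3
      · exact (Real.sin_pos_of_pos_of_lt_pi (by linarith) (by linarith)).ne'
      · exact (Real.sin_neg_of_neg_of_neg_pi_lt (by linarith) (by linarith)).ne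

/-- conjugation symmetry -/
theorem Q_all {A : Type*} [TopologicalSpace A] [TopologicalSpace.MetrizableSpace A] {S : Set A} {d : A → ℝ}
    (h : Dir S d) {e f : ℝ} (he : e = 1 ∨ e = -1) (hf : f = 1 ∨ f = -1) :
    DC {p : A × ℂ | p.1 ∈ S ∧ (p.2.re * Real.sin (d p.1) - p.2.im * Real.cos (d p.1) ≠ 0 ∨ 0 < e * Real.sin (d p.1)) ∧
      (p.2.im ≠ 0 ∨ 0 < f * Real.sin (d p.1))} := by
  have flip : ∀ e f : ℝ, DC {p : A × ℂ | p.1 ∈ S ∧ (p.2.re * Real.sin (-1 * d p.1 + 0) - p.2.im * Real.cos (-1 * d p.1 + 0) ≠ 0 ∨ 0 < e * Real.sin (-1 * d p.1 + 0)) ∧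
      (p.2.im ≠ 0 ∨ 0 < f * Real.sin (-1 * d p.1 + 0))} →
      DC {p : A × ℂ | p.1 ∈ S ∧ (p.2.re * Real.sin (d p.1) - p.2.im * Real.cos (d p.1) ≠ 0 ∨ 0 < -e * Real.sin (d p.1)) ∧
      (p.2.im ≠ 0 ∨ 0 < -f * Real.sin (d p.1))} := by
    intro e f hd
    have key : ∀ p : A × ℂ, (p.2.re * Real.sin (-1 * d p.1 + 0) - p.2.im * Real.cos (-1 * d p.1 + 0) ≠ 0 ∨ 0 < e * Real.sin (-1 * d p.1 + 0)) ∧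
      (p.2.im ≠ 0 ∨ 0 < f * Real.sin (-1 * d p.1 + 0)) ↔ (p.2.re * Real.sin (d p.1) - -p.2.im * Real.cos (d p.1) ≠ 0 ∨ 0 < -e * Real.sin (d p.1)) ∧
      (-p.2.im ≠ 0 ∨ 0 < -f * Real.sin (d p.1)) := by
      intro p
      simp only [add_zero, neg_one_mul, Real.sin_neg, Real.cos_neg, neg_ne_zero]
      have : p.2.re * -Real.sin (d p.1) - p.2.im * Real.cos (d p.1) =
        -(p.2.re * Real.sin (d p.1) - -p.2.im * Real.cos (d p.1)) := by ring
      rw [this, neg_ne_zero]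
      simp only [mul_neg, neg_mul]
    refine hd.retract (fun p => (p.1, (starRingEnd ℂ) p.2)) (fun p => (p.1, (starRingEnd ℂ) p.2)) ?_ ?_ ?_ ?_ ?_
    · exact continuousOn_fst.prodMk (Complex.continuous_conj.comp_continuousOn continuousOn_snd)
    · exact continuousOn_fst.prodMk (Complex.continuous_conj.comp_continuousOn continuousOn_snd)
    · rintro ⟨s, z⟩ ⟨hs, hz⟩
      refine ⟨hs, ?_⟩
      rw [key]
      simpa using hz
    · rintro ⟨s, z⟩ ⟨hs, hz⟩
      refine ⟨hs, ?_⟩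
      have := (key (s, z)).1 hz
      simpa using this
    · rintro ⟨s, z⟩ _; simp
  rcases he with rfl | rfl <;> rcases hf with rfl | rfl
  · simpa using Q_pp h
  · simpa using Q_mixed h
  · have := flip 1 (-1) (by simpa using Q_mixed (h.affine (-1) 0))
    simpa using this
  · have := flip 1 1 (by simpa using Q_pp (h.affine (-1) 0))
    simpa using this

theorem AngH.cr_eq {A B : Type*} [TopologicalSpace A] [TopologicalSpace B] {S : Set A} {T : Set B}
    {w : A → ℂ} {v : B → ℂ} {θ : A → ℝ} {η : B → ℝ} (h : AngH S w θ) (k : AngH T v η) {a b} (ha : a ∈ S) (hb : b ∈ T) :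
    cr (w a) (v b) = ‖w a‖ * ‖v b‖ * Real.sin (η b - θ a) := by
  rw [cr, h.re ha, h.im ha, k.re hb, k.im hb, Real.sin_sub]; ring

/-- the `Q` lemma -/
theorem AngH.Q {A B : Type*} [TopologicalSpace A] [TopologicalSpace B] [TopologicalSpace.MetrizableSpace A]
    [TopologicalSpace.MetrizableSpace B] {S : Set A} {T : Set B}
    {w : A → ℂ} {v : B → ℂ} {θ : A → ℝ} {η : B → ℝ} (h : AngH S w θ) (k : AngH T v η) {e f : ℝ}
    (he : e = 1 ∨ e = -1) (hf : f = 1 ∨ f = -1) :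
    DC {p : (A × B) × ℂ | p.1 ∈ S ×ˢ T ∧ (cr p.2 (v p.1.2) ≠ 0 ∨ 0 < e * cr (w p.1.1) (v p.1.2)) ∧
      (cr (w p.1.1) p.2 ≠ 0 ∨ 0 < f * cr (w p.1.1) (v p.1.2))} := by
  have hq := Q_all (h.dir k) he hf
  have rot : ∀ (z : ℂ) (t : ℝ), (z * Complex.exp (-t * Complex.I)).re = z.re * Real.cos t + z.im * Real.sin t ∧
      (z * Complex.exp (-t * Complex.I)).im = z.im * Real.cos t - z.re * Real.sin t := by
    intro z t
    have e : Complex.exp (-t * Complex.I) = Real.cos t - Real.sin t * Complex.I := by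
      rw [Complex.exp_mul_I]; simp; ring
    rw [e]
    constructor <;> simp [Complex.mul_re, Complex.mul_im, -Complex.ofReal_cos, -Complex.ofReal_sin] <;> ring
  have key : ∀ (p : A × B) (z : ℂ), p ∈ S ×ˢ T → (((cr z (v p.2) ≠ 0 ∨ 0 < e * cr (w p.1) (v p.2)) ∧
      (cr (w p.1) z ≠ 0 ∨ 0 < f * cr (w p.1) (v p.2))) ↔
      ((z * Complex.exp (-(θ p.1) * Complex.I)).re * Real.sin (η p.2 - θ p.1) - (z * Complex.exp (-(θ p.1) * Complex.I)).im * Real.cos (η p.2 - θ p.1) ≠ 0 ∨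
        0 < e * Real.sin (η p.2 - θ p.1)) ∧ ((z * Complex.exp (-(θ p.1) * Complex.I)).im ≠ 0 ∨ 0 < f * Real.sin (η p.2 - θ p.1))) := by
    rintro ⟨a, b⟩ z ⟨ha, hb⟩
    simp only at ha hb
    simp only [(rot _ _).1, (rot _ _).2]
    have na := norm_pos_iff.2 (h.ne a ha)
    have nb := norm_pos_iff.2 (k.ne b hb)
    have e1 : cr z (v b) = ‖v b‖ * ((z.re * Real.cos (θ a) + z.im * Real.sin (θ a)) * Real.sin (η b - θ a) -
      (z.im * Real.cos (θ a) - z.re * Real.sin (θ a)) * Real.cos (η b - θ a)) := by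
      have := Real.sin_sq_add_cos_sq (θ a)
      rw [cr, k.re hb, k.im hb, Real.sin_sub, Real.cos_sub]
      linear_combination (-‖v b‖ * (z.re * Real.sin (η b) - z.im * Real.cos (η b))) * this
    have e2 : cr (w a) z = ‖w a‖ * (z.im * Real.cos (θ a) - z.re * Real.sin (θ a)) := by
      rw [cr, h.re ha, h.im ha]; ring
    have e3 : ∀ e : ℝ, 0 < e * cr (w a) (v b) ↔ 0 < e * Real.sin (η b - θ a) := by
      intro e
      rw [h.cr_eq k ha hb]
      have : e * (‖w a‖ * ‖v b‖ * Real.sin (η b - θ a)) = (‖w a‖ * ‖v b‖) * (e * Real.sin (η b - θ a)) := by ring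
      rw [this, mul_pos_iff_of_pos_left (mul_pos na nb)]
    rw [e3, e3, e1, e2, mul_ne_zero_iff_left nb.ne', mul_ne_zero_iff_left na.ne']
  refine hq.retract (fun p => (p.1, p.2 * Complex.exp (-(θ p.1.1) * Complex.I)))
    (fun p => (p.1, p.2 * Complex.exp ((θ p.1.1) * Complex.I))) ?_ ?_ ?_ ?_ ?_
  · refine continuousOn_fst.prodMk (continuousOn_snd.mul (Complex.continuous_exp.comp_continuousOn ?_))
    refine ContinuousOn.mul (ContinuousOn.neg (Complex.continuous_ofReal.comp_continuousOn ?_)) continuousOn_const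
    exact h.cθ.comp (by fun_prop) (fun p hp => hp.1.1)
  · refine continuousOn_fst.prodMk (continuousOn_snd.mul (Complex.continuous_exp.comp_continuousOn ?_))
    refine ContinuousOn.mul (Complex.continuous_ofReal.comp_continuousOn ?_) continuousOn_const
    exact h.cθ.comp (by fun_prop) (fun p hp => hp.1.1)
  · rintro ⟨p, z⟩ ⟨hp, hz⟩
    exact ⟨hp, (key p z hp).1 hz⟩
  · rintro ⟨p, z⟩ ⟨hp, hz⟩
    refine ⟨hp, (key p _ hp).2 ?_⟩
    have : z * Complex.exp (θ p.1 * Complex.I) * Complex.exp (-(θ p.1) * Complex.I) = z := by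
      rw [mul_assoc, ← Complex.exp_add]; simp
    rw [this]
    exact hz
  · rintro ⟨p, z⟩ _
    ext1
    · rfl
    · simp only [mul_assoc, ← Complex.exp_add]
      simp

theorem MA.Q {A B : Type*} [TopologicalSpace A] [TopologicalSpace B] [TopologicalSpace.MetrizableSpace A]
    [TopologicalSpace.MetrizableSpace B] {S : Set A} {T : Set B}
    {w : A → ℂ} {v : B → ℂ} (h : MA S w) (k : MA T v) {e f : ℝ}
    (he : e = 1 ∨ e = -1) (hf : f = 1 ∨ f = -1) :
    DC {p : (A × B) × ℂ | p.1 ∈ S ×ˢ T ∧ (cr p.2 (v p.1.2) ≠ 0 ∨ 0 < e * cr (w p.1.1) (v p.1.2)) ∧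
      (cr (w p.1.1) p.2 ≠ 0 ∨ 0 < f * cr (w p.1.1) (v p.1.2))} := by
  obtain ⟨h1, l, h2, h3⟩ := h
  obtain ⟨k1, j, k2, k3⟩ := k
  apply DC_label (fun p => (l p.1.1, j p.1.2))
  · intro p hp
    have t1 := (continuous_fst.comp (continuous_fst (X := A × B) (Y := ℂ))).continuousWithinAt.tendsto_nhdsWithin
      (s := {p : (A × B) × ℂ | p.1 ∈ S ×ˢ T ∧ (cr p.2 (v p.1.2) ≠ 0 ∨ 0 < e * cr (w p.1.1) (v p.1.2)) ∧
      (cr (w p.1.1) p.2 ≠ 0 ∨ 0 < f * cr (w p.1.1) (v p.1.2))}) (t := S) (x := p) (fun p hp => hp.1.1)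
    have t2 := (continuous_snd.comp (continuous_fst (X := A × B) (Y := ℂ))).continuousWithinAt.tendsto_nhdsWithin
      (s := {p : (A × B) × ℂ | p.1 ∈ S ×ˢ T ∧ (cr p.2 (v p.1.2) ≠ 0 ∨ 0 < e * cr (w p.1.1) (v p.1.2)) ∧
      (cr (w p.1.1) p.2 ≠ 0 ∨ 0 < f * cr (w p.1.1) (v p.1.2))}) (t := T) (x := p) (fun p hp => hp.1.2)
    filter_upwards [t1.eventually (h2 _ hp.1.1), t2.eventually (k2 _ hp.1.2)] with y hy1 hy2
    simp only [Function.comp] at hy1 hy2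
    rw [hy1, hy2]
  · rintro ⟨i1, i2⟩
    obtain ⟨θ, hθ⟩ := h3 i1
    obtain ⟨η, hη⟩ := k3 i2
    convert hθ.Q hη he hf using 1
    ext p
    simp only [mem_setOf_eq, mem_prod, Prod.mk.injEq]
    tauto


theorem UpInv_mul {m : ℕ} {U V : Matrix (Fin m) (Fin m) ℝ} (hU : U ∈ UpInv m) (hV : V ∈ UpInv m) :
    U * V ∈ UpInv m := by
  refine ⟨?_, by rw [det_mul]; exact hU.2.mul hV.2⟩
  have h1 : U.BlockTriangular id := fun i j h => hU.1 i j h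
  have h2 : V.BlockTriangular id := fun i j h => hV.1 i j h
  exact fun i j h => (h1.mul h2) h

theorem UpInv_inv {m : ℕ} {U : Matrix (Fin m) (Fin m) ℝ} (hU : U ∈ UpInv m) : U⁻¹ ∈ UpInv m := by
  refine ⟨?_, by rw [det_nonsing_inv]; exact hU.2.ringInverse⟩
  have h1 : U.BlockTriangular id := fun i j h => hU.1 i j h
  have := Matrix.invertibleOfIsUnitDet U hU.2
  exact fun i j h => (blockTriangular_inv_of_blockTriangular h1) h

theorem UpInv_diag {m : ℕ} {U : Matrix (Fin m) (Fin m) ℝ} (hU : U ∈ UpInv m) (i : Fin m) : U i i ≠ 0 := by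
  have h1 : U.IsUpperTriangular := fun i j h => hU.1 i j h
  have := hU.2
  rw [det_of_isUpperTriangular h1, isUnit_iff_ne_zero, Finset.prod_ne_zero_iff] at this
  exact this i (Finset.mem_univ _)

theorem UpInv_mul_inv {m : ℕ} {U : Matrix (Fin m) (Fin m) ℝ} (hU : U ∈ UpInv m) : U * U⁻¹ = 1 :=
  mul_nonsing_inv _ hU.2

theorem UpInv_inv_mul {m : ℕ} {U : Matrix (Fin m) (Fin m) ℝ} (hU : U ∈ UpInv m) : U⁻¹ * U = 1 :=
  nonsing_inv_mul _ hU.2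

theorem Lo1_det {m : ℕ} {L : Matrix (Fin m) (Fin m) ℝ} (h : L ∈ Lo1 m) : L.det = 1 := by
  rw [det_of_isLowerTriangular L (fun i j hij => h.2 i j hij)]
  exact Finset.prod_eq_one (fun i _ => h.1 i)

theorem Lo1_inv {m : ℕ} {L : Matrix (Fin m) (Fin m) ℝ} (h : L ∈ Lo1 m) : L.adjugate ∈ Lo1 m := by
  have hd := Lo1_det h
  have := Matrix.invertibleOfIsUnitDet L (by simp [hd])
  have e : L⁻¹ = L.adjugate := by rw [inv_def, hd]; simp
  have h1 : L.BlockTriangular OrderDual.toDual := fun i j hij => h.2 i j hij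
  have h2 := blockTriangular_inv_of_blockTriangular h1
  rw [e] at h2
  refine ⟨fun i => ?_, fun i j hij => h2 hij⟩
  have h3 : (L * L.adjugate) i i = 1 := by rw [mul_adjugate, hd]; simp
  rw [mul_apply, Finset.sum_eq_single i] at h3
  · simpa [h.1 i] using h3
  · intro j _ hj
    rcases lt_or_gt_of_ne hj with hj | hj
    · rw [h2 (show OrderDual.toDual i < OrderDual.toDual j from hj), mul_zero]
    · rw [h.2 i j hj, zero_mul]
  · simp

/-- leading blocks -/
def lead {m : ℕ} (A : Matrix (Fin m) (Fin m) ℝ) (k : ℕ) (hk : k ≤ m) : Matrix (Fin k) (Fin k) ℝ :=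
  A.submatrix (Fin.castLE hk) (Fin.castLE hk)

theorem sub_mul_lead {m n k : ℕ} (hk : k ≤ m) (L : Matrix (Fin m) (Fin m) ℝ) {U : Matrix (Fin m) (Fin m) ℝ}
    (hU : U ∈ UpInv m) (r : Fin n → Fin m) :
    (L * U).submatrix r (Fin.castLE hk) = (L.submatrix r (Fin.castLE hk)) * lead U k hk := by
  ext i j
  simp only [submatrix_apply, mul_apply, lead]
  symm
  apply Fintype.sum_of_injective (Fin.castLE hk) (Fin.castLE_injective hk)
  · intro s hs
    rw [hU.1 s, mul_zero]
    rw [Fin.range_castLE] at hs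
    simp only [Set.mem_setOf_eq, not_lt] at hs
    exact lt_of_lt_of_le (b := (k : ℕ)) j.2 hs
  · intro s; rfl

theorem lead_up {m k : ℕ} (hk : k ≤ m) {U : Matrix (Fin m) (Fin m) ℝ}
    (hU : U ∈ UpInv m) : (lead U k hk).det ≠ 0 := by
  rw [det_of_isUpperTriangular (M := lead U k hk) (fun i j h => hU.1 _ _ h), Finset.prod_ne_zero_iff]
  intro i _
  exact UpInv_diag hU _

theorem lead_lo {m k : ℕ} (hk : k ≤ m) {L : Matrix (Fin m) (Fin m) ℝ}
    (hU : L ∈ Lo1 m) : (lead L k hk).det = 1 := by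
  rw [det_of_isLowerTriangular (lead L k hk) (fun i j h => hU.2 _ _ h)]
  exact Finset.prod_eq_one (fun i _ => hU.1 _)

def LUx {m : ℕ} (A : Matrix (Fin m) (Fin m) ℝ) : Prop := ∃ L ∈ Lo1 m, ∃ U ∈ UpInv m, A = L * U

theorem LUx.minors {m : ℕ} {A : Matrix (Fin m) (Fin m) ℝ} (h : LUx A) (k : ℕ) (hk : k ≤ m) :
    (lead A k hk).det ≠ 0 := by
  obtain ⟨L, hL, U, hU, rfl⟩ := h
  have := sub_mul_lead hk L hU (Fin.castLE hk)
  rw [lead, this, det_mul]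
  exact mul_ne_zero (by have := lead_lo hk hL; rw [lead] at this; rw [this]; simp) (lead_up hk hU)

theorem LUx.of_minors {m : ℕ} {A : Matrix (Fin m) (Fin m) ℝ}
    (h : ∀ (k : ℕ) (hk : k ≤ m), (lead A k hk).det ≠ 0) : LUx A := by
  have hc : ∀ c : Fin m, c.val + 1 ≤ m := fun c => c.2
  let T : Matrix (Fin m) (Fin m) ℝ := fun s c =>
    if hs : s ≤ c then (lead A (c.val+1) (hc c))⁻¹ ⟨s.val, Nat.lt_succ_of_le hs⟩ (Fin.last _) else 0
  have hT : ∀ s c : Fin m, c < s → T s c = 0 := fun s c hs => by simp [T, not_le.2 hs]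
  have key : ∀ i c : Fin m, i ≤ c → (A * T) i c = if i = c then 1 else 0 := by
    intro i c hic
    have h1 : (lead A (c.val+1) (hc c)) * (lead A (c.val+1) (hc c))⁻¹ = 1 :=
      mul_nonsing_inv _ (isUnit_iff_ne_zero.2 (h _ _))
    have h2 := congrFun (congrFun h1 ⟨i.val, Nat.lt_succ_of_le hic⟩) (Fin.last _)
    rw [mul_apply] at h2
    have h3 : (A * T) i c = (1 : Matrix (Fin (c.val+1)) (Fin (c.val+1)) ℝ) ⟨i.val, Nat.lt_succ_of_le hic⟩ (Fin.last _) := by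
      rw [← h2, mul_apply]
      symm
      apply Fintype.sum_of_injective (Fin.castLE (hc c)) (Fin.castLE_injective (hc c))
      · intro s hs
        rw [hT s c, mul_zero]
        rw [Fin.range_castLE] at hs
        simp only [Set.mem_setOf_eq, not_lt] at hs
        exact hs
      · intro s
        have hs : Fin.castLE (hc c) s ≤ c := Nat.le_of_lt_succ s.2
        simp only [T, hs, dif_pos]
        rfl
    rw [h3, one_apply]
    congr 1
    simp [Fin.ext_iff]
  have hL : A * T ∈ Lo1 m := ⟨fun i => by rw [key i i le_rfl]; simp, fun i j hij => by
    rw [key i j hij.le, if_neg hij.ne]⟩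
  have hTU : T ∈ UpInv m := by
    refine ⟨fun i j => hT i j, ?_⟩
    have := Lo1_det hL
    rw [det_mul, mul_comm] at this
    exact IsUnit.of_mul_eq_one _ this
  exact ⟨A * T, hL, T⁻¹, UpInv_inv hTU, by rw [Matrix.mul_assoc, UpInv_mul_inv hTU, Matrix.mul_one]⟩

def Lrow {m : ℕ} (i c : Fin m) : Fin (c.val + 1) → Fin m :=
  Fin.snoc (α := fun _ => Fin m) (fun r : Fin c.val => Fin.castLE c.2.le r) i

noncomputable def Lfac {m : ℕ} (A : Matrix (Fin m) (Fin m) ℝ) : Matrix (Fin m) (Fin m) ℝ := fun i c =>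
  (A.submatrix (Lrow i c) (Fin.castLE (show c.val + 1 ≤ m from c.2))).det /
    (lead A (c.val+1) c.2).det

theorem Lfac_eq {m : ℕ} {L U : Matrix (Fin m) (Fin m) ℝ} (hL : L ∈ Lo1 m) (hU : U ∈ UpInv m) :
    Lfac (L * U) = L := by
  ext i c
  have hc : c.val + 1 ≤ m := c.2
  have h1 := sub_mul_lead hc L hU (Lrow i c)
  have h2 := sub_mul_lead hc L hU (Fin.castLE hc)
  have h3 := lead_lo hc hL
  have h4 : (L.submatrix (Lrow i c) (Fin.castLE hc)).det = L i c := by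
    rw [det_of_isLowerTriangular, Fin.prod_univ_castSucc, Finset.prod_eq_one]
    · simp [Lrow, Fin.snoc_last]; rfl
    · intro s _
      simp [Lrow, Fin.snoc_castSucc]; exact hL.1 _
    · intro s t hst
      have hst : s < t := hst
      induction s using Fin.lastCases with
      | last => exact absurd hst (not_lt.2 (Fin.le_last t))
      | cast s =>
        simp only [Lrow, submatrix_apply, Fin.snoc_castSucc]
        exact hL.2 _ _ hst
  unfold Lfac
  have h5 : (lead (L * U) (c.val+1) hc).det = (lead U (c.val+1) hc).det := by
    have h2' : lead (L * U) (c.val+1) hc = lead L (c.val+1) hc * lead U (c.val+1) hc := h2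
    rw [h2', det_mul, h3, one_mul]
  rw [h1, h5, det_mul, h4]
  exact mul_div_cancel_right₀ _ (lead_up hc hU)

theorem Lfac_cont {m : ℕ} : ContinuousOn (Lfac (m := m)) {A | LUx A} := by
  refine continuousOn_pi.2 fun i => continuousOn_pi.2 fun c => ?_
  unfold Lfac lead
  refine ContinuousOn.div ?_ ?_ ?_
  · exact (Continuous.matrix_det (Continuous.matrix_submatrix continuous_id _ _)).continuousOn
  · exact (Continuous.matrix_det (Continuous.matrix_submatrix continuous_id _ _)).continuousOn
  · intro A hA; exact LUx.minors hA _ _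


theorem permMat_mul {m : ℕ} (w : Equiv.Perm (Fin m)) (B : Matrix (Fin m) (Fin m) ℝ) :
    permMat m w * B = B.submatrix w id := by
  ext i j
  simp [permMat, mul_apply]

theorem mul_permMat {m : ℕ} (w : Equiv.Perm (Fin m)) (B : Matrix (Fin m) (Fin m) ℝ) :
    B * permMat m w = B.submatrix id w.symm := by
  ext i j
  simp [permMat, mul_apply, ← Equiv.eq_symm_apply]

/-- The normal form set -/
def XM (m : ℕ) (w : Equiv.Perm (Fin m)) : Set (Matrix (Fin m) (Fin m) ℝ) :=
  {M | (∀ i, M i (w i) = 1) ∧ (∀ i j, w i < w j → M i (w j) = 0) ∧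
    (∀ i j, j < i → M i (w j) = 0) ∧ LUx M}

theorem perm_LUx {m : ℕ} {w : Equiv.Perm (Fin m)} {L : Matrix (Fin m) (Fin m) ℝ} (h : L ∈ Bru m w) :
    LUx (L.submatrix w.symm id) := by
  obtain ⟨U, hU, V, hV, rfl⟩ := h
  apply LUx.of_minors
  intro k hk
  have e : (U * permMat m w * V).submatrix w.symm id = (U.submatrix w.symm w.symm) * V := by
    rw [mul_permMat]
    ext i j; simp [mul_apply]
  rw [e, lead, sub_mul_lead hk _ hV, det_mul]
  refine mul_ne_zero ?_ (lead_up hk hV)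
  intro h0
  rw [← exists_mulVec_eq_zero_iff] at h0
  obtain ⟨v, hv, hv0⟩ := h0
  obtain ⟨s0, hs0⟩ := Function.ne_iff.1 hv
  obtain ⟨s, hs, hmax⟩ := Finset.exists_max_image (Finset.univ.filter fun s => v s ≠ 0)
    (fun s => w.symm (Fin.castLE hk s)) ⟨s0, by simpa using hs0⟩
  have h1 := congrFun hv0 s
  simp only [mulVec, dotProduct, submatrix_apply, Pi.zero_apply] at h1
  rw [Finset.sum_eq_single s] at h1
  · exact (mul_ne_zero (UpInv_diag hU _) (by simpa using hs)) h1
  · intro t _ hts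
    by_cases ht : v t = 0
    · rw [ht, mul_zero]
    · have := hmax t (by simpa using ht)
      rw [hU.1, zero_mul]
      refine lt_of_le_of_ne this ?_
      intro he
      exact hts (Fin.castLE_injective hk (w.symm.injective he))
  · simp

noncomputable def fX {m : ℕ} (w : Equiv.Perm (Fin m)) (L : Matrix (Fin m) (Fin m) ℝ) :
    Matrix (Fin m) (Fin m) ℝ := (Lfac (L.submatrix w.symm id)).submatrix w id

theorem fX_mem {m : ℕ} {w : Equiv.Perm (Fin m)} {L : Matrix (Fin m) (Fin m) ℝ} (h : L ∈ BL m w) :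
    fX w L ∈ XM m w ∧ Lfac (fX w L) = L := by
  obtain ⟨L', hL', V, hV, e⟩ := perm_LUx h.2
  have e1 : fX w L = L'.submatrix w id := by rw [fX, e, Lfac_eq hL' hV]
  have e2 : L = L'.submatrix w id * V := by
    have : L = (L.submatrix w.symm id).submatrix w id := by ext i j; simp
    rw [this, e]; ext i j; simp [mul_apply]
  have e3 : fX w L = L * V⁻¹ := by
    rw [e1, e2, Matrix.mul_assoc, UpInv_mul_inv hV, Matrix.mul_one]
  obtain ⟨hl, U, hU, U1, hU1, e4⟩ := h
  have e5 : U⁻¹ * fX w L = (U1 * V⁻¹).submatrix w id := by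
    rw [e3, e4, Matrix.mul_assoc, Matrix.mul_assoc, ← Matrix.mul_assoc U⁻¹, UpInv_inv_mul hU, Matrix.one_mul,
      permMat_mul]
  have hT := UpInv_mul hU1 (UpInv_inv hV)
  refine ⟨⟨?_, ?_, ?_, ?_⟩, ?_⟩
  · intro i; rw [e1]; exact hL'.1 _
  · intro i j hij; rw [e1]; exact hL'.2 _ _ hij
  · intro i j hij
    by_contra hne
    obtain ⟨s, hs, hmax⟩ := Finset.exists_max_image (Finset.univ.filter fun s => fX w L s (w j) ≠ 0)
      (fun s => s) ⟨i, by simpa using hne⟩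
    simp only [Finset.mem_filter, Finset.mem_univ, true_and] at hs hmax
    have hjs : j < s := lt_of_lt_of_le hij (hmax i hne)
    have h1 : (U⁻¹ * fX w L) s (w j) ≠ 0 := by
      rw [mul_apply, Finset.sum_eq_single s]
      · exact mul_ne_zero (UpInv_diag (UpInv_inv hU) _) hs
      · intro t _ hts
        rcases lt_or_gt_of_ne hts with ht | ht
        · rw [(UpInv_inv hU).1 _ _ ht, zero_mul]
        · have : fX w L t (w j) = 0 := by
            by_contra h0
            exact absurd (hmax t h0) (not_le.2 ht)
          rw [this, mul_zero]
      · simp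
    rw [e5] at h1
    have h2 : w s ≤ w j := by
      by_contra h0
      exact h1 (hT.1 _ _ (not_le.1 h0))
    have h3 : w s < w j := lt_of_le_of_ne h2 (fun h0 => hjs.ne' (w.injective h0))
    apply hs
    rw [e1]; exact hL'.2 _ _ h3
  · exact ⟨L, hl, _, UpInv_inv hV, e3⟩
  · rw [e3, Lfac_eq hl (UpInv_inv hV)]

theorem gX_mem {m : ℕ} {w : Equiv.Perm (Fin m)} {M : Matrix (Fin m) (Fin m) ℝ} (h : M ∈ XM m w) :
    Lfac M ∈ BL m w ∧ fX w (Lfac M) = M := by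
  obtain ⟨h1, h2, h3, L, hL, U, hU, e⟩ := h
  have e1 : Lfac M = L := by rw [e, Lfac_eq hL hU]
  have e2 : L = M * U⁻¹ := by rw [e, Matrix.mul_assoc, UpInv_mul_inv hU, Matrix.mul_one]
  rw [e1]
  refine ⟨⟨hL, M.submatrix id w, ⟨fun i j => h3 i j, ?_⟩, U⁻¹, UpInv_inv hU, ?_⟩, ?_⟩
  · rw [det_of_isUpperTriangular (M := M.submatrix id w) (fun i j h => h3 _ _ h)]
    simp [h1]
  · rw [mul_permMat]
    have : (M.submatrix id w).submatrix id w.symm = M := by ext i j; simp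
    rw [this, e2]
  · have e3 : L.submatrix w.symm id = M.submatrix w.symm id * U⁻¹ := by
      rw [e2]; ext i j; simp [mul_apply]
    have e4 : M.submatrix w.symm id ∈ Lo1 m := by
      refine ⟨fun i => ?_, fun i j hij => ?_⟩
      · have := h1 (w.symm i); simpa using this
      · have := h2 (w.symm i) (w.symm j); simpa using this (by simpa using hij)
    rw [fX, e3, Lfac_eq e4 (UpInv_inv hU)]
    ext i j; simp

theorem fX_cont {m : ℕ} (w : Equiv.Perm (Fin m)) : ContinuousOn (fX w) (BL m w) := by
  unfold fX
  have h1 : ContinuousOn (fun L : Matrix (Fin m) (Fin m) ℝ => Lfac (L.submatrix w.symm id)) (BL m w) :=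
    Lfac_cont.comp (Continuous.matrix_submatrix continuous_id _ _).continuousOn
      (fun L hL => perm_LUx hL.2)
  exact (Continuous.matrix_submatrix (A := fun X : Matrix (Fin m) (Fin m) ℝ => X)
    continuous_id w id).comp_continuousOn h1

theorem Lfac_contX {m : ℕ} (w : Equiv.Perm (Fin m)) : ContinuousOn Lfac (XM m w) :=
  Lfac_cont.mono fun _ h => h.2.2.2

theorem DC_BL_iff {m : ℕ} (w : Equiv.Perm (Fin m)) : DC (BL m w) ↔ DC (XM m w) := by
  constructor
  · intro h
    exact h.retract Lfac (fX w) (Lfac_contX w) (fX_cont w) (fun M hM => (gX_mem hM).1)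
      (fun L hL => (fX_mem hL).1) (fun M hM => (gX_mem hM).2)
  · intro h
    exact h.retract (fX w) Lfac (fX_cont w) (Lfac_contX w) (fun L hL => (fX_mem hL).1)
      (fun M hM => (gX_mem hM).1) (fun M hM => (fX_mem hM).2)

theorem BL_inv_mem {m : ℕ} {w : Equiv.Perm (Fin m)} {L} (h : L ∈ BL m w) : L.adjugate ∈ BL m w⁻¹ := by
  refine ⟨Lo1_inv h.1, ?_⟩
  have hd := Lo1_det h.1
  have e : L⁻¹ = L.adjugate := by rw [inv_def, hd]; simp
  obtain ⟨hl, U, hU, V, hV, e4⟩ := h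
  refine ⟨V⁻¹, UpInv_inv hV, U⁻¹, UpInv_inv hU, ?_⟩
  rw [← e]
  apply inv_eq_right_inv
  rw [e4]
  have hP : permMat m w * permMat m w⁻¹ = 1 := by
    rw [permMat_mul]; ext i j; simp [permMat, one_apply]
  calc U * permMat m w * V * (V⁻¹ * permMat m w⁻¹ * U⁻¹)
      = U * permMat m w * (V * V⁻¹) * permMat m w⁻¹ * U⁻¹ := by simp only [Matrix.mul_assoc]
    _ = U * (permMat m w * permMat m w⁻¹) * U⁻¹ := by
        rw [UpInv_mul_inv hV, Matrix.mul_one]; simp only [Matrix.mul_assoc]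
    _ = 1 := by rw [hP, Matrix.mul_one, UpInv_mul_inv hU]

theorem DC_inv {m : ℕ} {w : Equiv.Perm (Fin m)} (h : DC (XM m w⁻¹)) : DC (XM m w) := by
  rw [← DC_BL_iff] at *
  refine h.retract adjugate adjugate ?_ ?_ (fun L hL => BL_inv_mem hL) ?_ ?_
  · exact (Continuous.matrix_adjugate continuous_id).continuousOn
  · exact (Continuous.matrix_adjugate continuous_id).continuousOn
  · intro L hL
    have := BL_inv_mem hL
    rwa [inv_inv] at this
  · intro L hL
    have hd := Lo1_det hL.1
    have hd' := Lo1_det (Lo1_inv hL.1)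
    have h1 : L.adjugate * L = 1 := by rw [adjugate_mul, hd, one_smul]
    have h2 : L.adjugate.adjugate * L.adjugate = 1 := by rw [adjugate_mul, hd', one_smul]
    calc L.adjugate.adjugate = L.adjugate.adjugate * (L.adjugate * L) := by rw [h1, Matrix.mul_one]
      _ = L := by rw [← Matrix.mul_assoc, h2, Matrix.one_mul]

def rJ (m : ℕ) : Equiv.Perm (Fin m) := Fin.revPerm

theorem UpInv_J {m : ℕ} {U} (h : U ∈ UpInv m) : (Uᵀ).submatrix (rJ m) (rJ m) ∈ UpInv m := by
  refine ⟨fun i j hij => ?_, ?_⟩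
  · simp only [submatrix_apply, transpose_apply]
    apply h.1
    simpa [rJ] using hij
  · rw [det_submatrix_equiv_self, det_transpose]; exact h.2

theorem BL_J_mem {m : ℕ} {w : Equiv.Perm (Fin m)} {L} (h : L ∈ BL m w) :
    (Lᵀ).submatrix (rJ m) (rJ m) ∈ BL m (rJ m * w⁻¹ * rJ m) := by
  obtain ⟨hl, U, hU, V, hV, e4⟩ := h
  refine ⟨⟨fun i => hl.1 _, fun i j hij => ?_⟩, _, UpInv_J hV, _, UpInv_J hU, ?_⟩
  · simp only [submatrix_apply, transpose_apply]
    apply hl.2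
    simpa [rJ] using hij
  · have hP : permMat m (rJ m * w⁻¹ * rJ m) = ((permMat m w)ᵀ).submatrix (rJ m) (rJ m) := by
      ext i j
      simp only [permMat, submatrix_apply, transpose_apply, Equiv.Perm.mul_apply]
      congr 1
      apply propext
      constructor
      · rintro rfl; simp [rJ]
      · intro h; rw [← h]; simp [rJ]
    rw [hP, submatrix_mul_equiv, submatrix_mul_equiv, e4, transpose_mul, transpose_mul, Matrix.mul_assoc]

theorem DC_J {m : ℕ} {w : Equiv.Perm (Fin m)} (h : DC (XM m (rJ m * w⁻¹ * rJ m))) : DC (XM m w) := by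
  rw [← DC_BL_iff] at *
  have hJ : rJ m * rJ m = 1 := by ext i; simp [rJ]
  have hJ' : (rJ m)⁻¹ = rJ m := inv_eq_of_mul_eq_one_left hJ
  have hc : Continuous (fun L : Matrix (Fin m) (Fin m) ℝ => (Lᵀ).submatrix (rJ m) (rJ m)) :=
    Continuous.matrix_submatrix (Continuous.matrix_transpose continuous_id) _ _
  refine h.retract (fun L => (Lᵀ).submatrix (rJ m) (rJ m)) (fun L => (Lᵀ).submatrix (rJ m) (rJ m))
    hc.continuousOn hc.continuousOn (fun L hL => BL_J_mem hL) ?_ ?_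
  · intro L hL
    have := BL_J_mem hL
    have e : rJ m * (rJ m * w⁻¹ * rJ m)⁻¹ * rJ m = w := by
      simp only [_root_.mul_inv_rev, hJ', inv_inv]
      calc rJ m * (rJ m * (w * rJ m)) * rJ m = (rJ m * rJ m) * w * (rJ m * rJ m) := by group
        _ = w := by rw [hJ, one_mul, mul_one]
    rwa [e] at this
  · intro L _
    ext i j; simp [rJ]


theorem red_perm {m : ℕ} (w : Equiv.Perm (Fin (m+1))) :
    ∃ w' : Equiv.Perm (Fin m), ∀ i, w i.succ = (w 0).succAbove (w' i) := by
  have h : ∀ i : Fin m, ∃ z, (w 0).succAbove z = w i.succ := fun i =>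
    Fin.exists_succAbove_eq (fun h => Fin.succ_ne_zero i (w.injective h))
  choose z hz using h
  have hi : Function.Injective z := fun i j hij => by
    have := hz i
    rw [hij, hz j] at this
    exact (Fin.succ_injective _ (w.injective this)).symm
  exact ⟨Equiv.ofBijective z (Finite.injective_iff_bijective.1 hi), fun i => (hz i).symm⟩

/-- insertion of a first row -/
def insM {m : ℕ} (p : Fin (m+1)) (x : ℝ) (N : Matrix (Fin m) (Fin m) ℝ) :
    Matrix (Fin (m+1)) (Fin (m+1)) ℝ :=
  Fin.cons (p.insertNth (α := fun _ => ℝ) 1 (fun j => if j.castSucc < p then x else 0))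
    (fun i => p.insertNth (α := fun _ => ℝ) 0 (N i))

theorem insM_lead {m : ℕ} (p : Fin (m+1)) (x : ℝ) (N : Matrix (Fin m) (Fin m) ℝ) (k : ℕ) (hk : k + 1 ≤ m + 1)
    (hp : p.val < k + 1) : (lead (insM p x N) (k+1) hk).det =
      (-1) ^ p.val * (lead N k (Nat.le_of_succ_le_succ hk)).det := by
  have hpe : Fin.castLE hk ⟨p.val, hp⟩ = p := by ext; simp
  rw [det_succ_column _ ⟨p.val, hp⟩, Finset.sum_eq_single 0]
  · have h1 : lead (insM p x N) (k+1) hk 0 ⟨p.val, hp⟩ = 1 := by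
      show insM p x N (Fin.castLE hk 0) (Fin.castLE hk ⟨p.val, hp⟩) = 1
      rw [hpe]
      show insM p x N 0 p = 1
      simp [insM]
    have h2 : (lead (insM p x N) (k+1) hk).submatrix (Fin.succAbove 0) (Fin.succAbove ⟨p.val, hp⟩) =
        lead N k (Nat.le_of_succ_le_succ hk) := by
      ext i j
      have : Fin.castLE hk (Fin.succAbove ⟨p.val, hp⟩ j) = p.succAbove (Fin.castLE (Nat.le_of_succ_le_succ hk) j) := by
        ext
        simp only [Fin.succAbove, Fin.lt_def]
        simp
        split_ifs <;> simp
      show insM p x N (Fin.castLE hk (Fin.succAbove 0 i)) (Fin.castLE hk (Fin.succAbove ⟨p.val, hp⟩ j)) = _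
      rw [this]
      show insM p x N (Fin.succ (Fin.castLE (Nat.le_of_succ_le_succ hk) i)) _ = _
      simp [insM, lead]
    rw [h1, h2]
    simp
  · intro i _ hi
    obtain ⟨i, rfl⟩ := Fin.exists_succ_eq_of_ne_zero hi
    have h1 : lead (insM p x N) (k+1) hk i.succ ⟨p.val, hp⟩ = 0 := by
      show insM p x N (Fin.castLE hk i.succ) (Fin.castLE hk ⟨p.val, hp⟩) = 0
      rw [hpe]
      show insM p x N (Fin.succ (Fin.castLE (Nat.le_of_succ_le_succ hk) i)) p = 0
      simp [insM]
    rw [h1]; simp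
  · simp

theorem DC_red {m : ℕ} (hm : ∀ w' : Equiv.Perm (Fin m), DC (XM m w')) (w : Equiv.Perm (Fin (m+1)))
    (hw : (w 0).val ≤ 1) : DC (XM (m+1) w) := by
  obtain ⟨w', hw'⟩ := red_perm w
  set p := w 0 with hp
  have hins : ∀ M ∈ XM (m+1) w, insM p (M 0 0) (M.submatrix Fin.succ p.succAbove) = M := by
    rintro M ⟨h1, h2, h3, -⟩
    ext i j
    induction i using Fin.cases with
    | zero =>
      simp only [insM, Fin.cons_zero]
      induction j using Fin.succAboveCases p with
      | x => simp [hp, h1]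
      | p j =>
        simp only [Fin.insertNth_apply_succAbove]
        split_ifs with hj
        · rw [Fin.succAbove_of_castSucc_lt _ _ hj]
          congr 1
          ext
          have : j.val < p.val := hj
          simp; omega
        · have := h2 0 (w.symm (p.succAbove j))
          simp only [Equiv.apply_symm_apply] at this
          rw [this]
          rw [← hp, Fin.succAbove_of_le_castSucc _ _ (not_lt.1 hj)]
          exact lt_of_le_of_lt (not_lt.1 hj) (Fin.castSucc_lt_succ)
    | succ i =>
      simp only [insM, Fin.cons_succ]
      induction j using Fin.succAboveCases p with
      | x => simp [hp, h3 i.succ 0 (Fin.succ_pos i)]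
      | p j => simp
  have hwn : ∀ j, w j.succ = p.succAbove (w' j) := hw'
  refine (DC_ne.prod (hm w')).retract (fun M => (M 0 0, M.submatrix Fin.succ p.succAbove))
    (fun q => insM p q.1 q.2) ?_ ?_ ?_ ?_ hins
  · refine Continuous.continuousOn (Continuous.prodMk (by fun_prop) ?_)
    exact Continuous.matrix_submatrix continuous_id _ _
  · refine Continuous.continuousOn ?_
    refine continuous_pi fun i => ?_
    induction i using Fin.cases with
    | zero =>
      simp only [insM, Fin.cons_zero]
      refine Continuous.finInsertNth _ continuous_const (continuous_pi fun j => ?_)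
      split_ifs <;> fun_prop
    | succ i =>
      simp only [insM, Fin.cons_succ]
      exact Continuous.finInsertNth _ continuous_const (continuous_pi fun j => by fun_prop)
  · intro M hM
    have hI := hins M hM
    have hlu := hM.2.2.2.minors
    obtain ⟨h1, h2, h3, -⟩ := hM
    refine ⟨?_, ?_, ?_, ?_, ?_⟩
    · have := hlu 1 (by omega)
      rw [det_fin_one] at this
      exact this
    · intro i; simp only [submatrix_apply]; rw [← hwn]; exact h1 _
    · intro i j hij; simp only [submatrix_apply]; rw [← hwn]; apply h2
      rw [hwn, hwn]; simpa using hij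
    · intro i j hij; simp only [submatrix_apply]; rw [← hwn]; apply h3
      simpa using hij
    · apply LUx.of_minors
      intro k hk
      by_cases hpk : p.val < k + 1
      · have h4 := insM_lead p (M 0 0) (M.submatrix Fin.succ p.succAbove) k (by omega) hpk
        have h5 := hlu (k+1) (by omega)
        rw [hI] at h4
        rw [h4] at h5
        exact right_ne_zero_of_mul h5
      · have : k = 0 := by omega
        subst this
        simp
  · rintro ⟨x, N⟩ ⟨hx, h1, h2, h3, h4⟩
    simp only [mem_setOf_eq] at hx
    refine ⟨?_, ?_, ?_, ?_⟩
    · intro i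
      induction i using Fin.cases with
      | zero => simp [insM, ← hp]
      | succ i => simp only [insM, hwn, Fin.cons_succ, Fin.insertNth_apply_succAbove]; exact h1 i
    · intro i j hij
      induction i using Fin.cases with
      | zero =>
        induction j using Fin.cases with
        | zero => simp at hij
        | succ j =>
          rw [← hp, hwn] at hij
          simp only [insM, hwn, Fin.cons_zero, Fin.insertNth_apply_succAbove]
          rw [if_neg]
          intro h0
          rw [Fin.succAbove_of_castSucc_lt _ _ h0] at hij
          exact lt_asymm h0 hij
      | succ i =>
        induction j using Fin.cases with
        | zero => simp [insM, ← hp]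
        | succ j =>
          rw [hwn, hwn] at hij
          simp only [insM, hwn, Fin.cons_succ, Fin.insertNth_apply_succAbove]
          exact h2 _ _ (by simpa using hij)
    · intro i j hij
      induction i using Fin.cases with
      | zero => simp at hij
      | succ i =>
        induction j using Fin.cases with
        | zero => simp [insM, ← hp]
        | succ j =>
          simp only [insM, hwn, Fin.cons_succ, Fin.insertNth_apply_succAbove]
          exact h3 _ _ (by simpa using hij)
    · apply LUx.of_minors
      intro k hk
      rcases k with _ | k
      · simp
      · by_cases hpk : p.val < k + 1
        · rw [insM_lead p x N k hk hpk]
          exact mul_ne_zero (by simp) (h4.minors _ _)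
        · have h0 : k = 0 := by omega
          subst h0
          rw [det_fin_one]
          have hp1 : p.val = 1 := by omega
          have hm0 : 0 < m := by have := p.2; omega
          have : (0 : Fin (m+1)) = p.succAbove ⟨0, hm0⟩ := by
            rw [Fin.succAbove_of_castSucc_lt]
            · rfl
            · show (0:ℕ) < p.val
              omega
          show insM p x N 0 0 ≠ 0
          simp only [insM, Fin.cons_zero]
          rw [this, Fin.insertNth_apply_succAbove, if_pos]
          · exact hx
          · show (0:ℕ) < p.val
            omega

theorem DC_zero (w : Equiv.Perm (Fin 0)) : DC (XM 0 w) := by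
  refine ⟨fun p => p.1, continuousOn_fst, fun x hx _ _ => hx, fun _ _ => rfl, fun x _ => ?_⟩
  exact Filter.Eventually.of_forall fun y => Subsingleton.elim _ _


theorem pat_iff {m : ℕ} (w : Equiv.Perm (Fin m)) (M : Matrix (Fin m) (Fin m) ℝ) :
    M ∈ XM m w ↔ (∀ i j, M i j = if w i = j then 1 else if w i < j ∨ w.symm j < i then 0 else M i j) ∧
      ∀ (k : ℕ) (hk : k < m), (lead M k hk.le).det ≠ 0 := by
  constructor
  · rintro ⟨h1, h2, h3, h4⟩
    refine ⟨fun i j => ?_, fun k hk => h4.minors k hk.le⟩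
    split_ifs with h h'
    · rw [← h, h1]
    · rcases h' with h' | h'
      · have := h2 i (w.symm j); simp only [Equiv.apply_symm_apply] at this; exact this h'
      · have := h3 i (w.symm j) h'; simpa using this
    · rfl
  · rintro ⟨hp, hk⟩
    have h1 : ∀ i, M i (w i) = 1 := fun i => by rw [hp]; simp
    have h3 : ∀ i j, j < i → M i (w j) = 0 := fun i j h => by
      rw [hp, if_neg (fun h' => h.ne' (w.injective h')), if_pos]; right; simpa using h
    refine ⟨h1, fun i j h => ?_, h3, ?_⟩
    · rw [hp, if_neg h.ne, if_pos (Or.inl h)]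
    · apply LUx.of_minors
      intro k hkm
      rcases hkm.lt_or_eq with h | h
      · exact hk k h
      · subst h
        have e : lead M k hkm = M := by ext i j; simp [lead]
        rw [e]
        intro h0
        have : (M.submatrix id w).det = 1 := by
          rw [det_of_isUpperTriangular (M := M.submatrix id w) (fun i j h => h3 _ _ h)]
          simp [h1]
        rw [det_permute', h0, mul_zero] at this
        exact zero_ne_one this

def q2 {m : Type*} (M : Matrix m m ℝ) (a b : m) : ℝ := M a a * M b b - M a b * M b a
def q3 {m : Type*} (M : Matrix m m ℝ) (a b c : m) : ℝ :=
  M a a * (M b b * M c c - M b c * M c b) - M a b * (M b a * M c c - M b c * M c a)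
   + M a c * (M b a * M c b - M b b * M c a)
def q4 {m : Type*} (M : Matrix m m ℝ) (a b c d : m) : ℝ :=
  M a a * (M b b * (M c c * M d d - M c d * M d c) - M b c * (M c b * M d d - M c d * M d b)
    + M b d * (M c b * M d c - M c c * M d b))
  - M a b * (M b a * (M c c * M d d - M c d * M d c) - M b c * (M c a * M d d - M c d * M d a)
    + M b d * (M c a * M d c - M c c * M d a))
  + M a c * (M b a * (M c b * M d d - M c d * M d b) - M b b * (M c a * M d d - M c d * M d a)
    + M b d * (M c a * M d b - M c b * M d a))
  - M a d * (M b a * (M c b * M d c - M c c * M d b) - M b b * (M c a * M d c - M c c * M d a)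
    + M b c * (M c a * M d b - M c b * M d a))

theorem det_q4 (N : Matrix (Fin 4) (Fin 4) ℝ) : N.det = q4 N 0 1 2 3 := by
  rw [det_succ_row_zero]
  simp only [Fin.sum_univ_succ, det_fin_three, q4, Fin.sum_univ_zero, submatrix_apply]
  simp [Fin.succAbove, Fin.succ, Fin.castSucc, Fin.lt_def]
  ring

theorem XM3_iff (w : Equiv.Perm (Fin 3)) (M : Matrix (Fin 3) (Fin 3) ℝ) :
    M ∈ XM 3 w ↔ (∀ i j, M i j = if w i = j then 1 else if w i < j ∨ w.symm j < i then 0 else M i j) ∧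
      M 0 0 ≠ 0 ∧ q2 M 0 1 ≠ 0 := by
  rw [pat_iff]
  refine and_congr_right fun _ => ⟨fun h => ⟨?_, ?_⟩, fun ⟨h1, h2⟩ k hk => ?_⟩
  · have := h 1 (by omega); rw [det_fin_one] at this; exact this
  · have := h 2 (by omega); rw [det_fin_two] at this; exact this
  · rcases k with _ | _ | _ | k
    · simp
    · rw [det_fin_one]; exact h1
    · rw [det_fin_two]; exact h2
    · omega

theorem det_q3 (N : Matrix (Fin 3) (Fin 3) ℝ) : N.det = q3 N 0 1 2 := by
  rw [det_fin_three, q3]; ring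

theorem XM4_iff (w : Equiv.Perm (Fin 4)) (M : Matrix (Fin 4) (Fin 4) ℝ) :
    M ∈ XM 4 w ↔ (∀ i j, M i j = if w i = j then 1 else if w i < j ∨ w.symm j < i then 0 else M i j) ∧
      M 0 0 ≠ 0 ∧ q2 M 0 1 ≠ 0 ∧ q3 M 0 1 2 ≠ 0 := by
  rw [pat_iff]
  refine and_congr_right fun _ => ⟨fun h => ⟨?_, ?_, ?_⟩, fun ⟨h1, h2, h3⟩ k hk => ?_⟩
  · have := h 1 (by omega); rw [det_fin_one] at this; exact this
  · have := h 2 (by omega); rw [det_fin_two] at this; exact this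
  · have := h 3 (by omega); rw [det_q3] at this; exact this
  · rcases k with _ | _ | _ | _ | k
    · simp
    · rw [det_fin_one]; exact h1
    · rw [det_fin_two]; exact h2
    · rw [det_q3]; exact h3
    · omega

theorem XM5_iff (w : Equiv.Perm (Fin 5)) (M : Matrix (Fin 5) (Fin 5) ℝ) :
    M ∈ XM 5 w ↔ (∀ i j, M i j = if w i = j then 1 else if w i < j ∨ w.symm j < i then 0 else M i j) ∧
      M 0 0 ≠ 0 ∧ q2 M 0 1 ≠ 0 ∧ q3 M 0 1 2 ≠ 0 ∧ q4 M 0 1 2 3 ≠ 0 := by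
  rw [pat_iff]
  refine and_congr_right fun _ => ⟨fun h => ⟨?_, ?_, ?_, ?_⟩, fun ⟨h1, h2, h3, h4⟩ k hk => ?_⟩
  · have := h 1 (by omega); rw [det_fin_one] at this; exact this
  · have := h 2 (by omega); rw [det_fin_two] at this; exact this
  · have := h 3 (by omega); rw [det_q3] at this; exact this
  · have := h 4 (by omega); rw [det_q4] at this; exact this
  · rcases k with _ | _ | _ | _ | _ | k
    · simp
    · rw [det_fin_one]; exact h1
    · rw [det_fin_two]; exact h2
    · rw [det_q3]; exact h3
    · rw [det_q4]; exact h4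
    · omega

theorem DC.retract2 {A B : Type*} [TopologicalSpace A] [TopologicalSpace B] {S : Set A} {T : Set B}
    (hT : DC T) (f : A → B) (g : B → A) (hf : Continuous f) (hg : ContinuousOn g T)
    (h : ∀ x ∈ S, f x ∈ T ∧ g (f x) = x) (hgm : ∀ y ∈ T, g y ∈ S) : DC S :=
  hT.retract f g hf.continuousOn hg (fun x hx => (h x hx).1) hgm (fun x hx => (h x hx).2)

theorem contOn_mat {A : Type*} [TopologicalSpace A] {S : Set A} {m : ℕ} {f : A → Matrix (Fin m) (Fin m) ℝ}
    (h : ∀ i j, ContinuousOn (fun x => f x i j) S) : ContinuousOn f S :=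
  continuousOn_pi.2 fun i => continuousOn_pi.2 fun j => h i j

/-- a complex number from its coordinates -/
def cm (a b : ℝ) : ℂ := ⟨a, b⟩

@[simp] theorem cm_re (a b : ℝ) : (cm a b).re = a := rfl
@[simp] theorem cm_im (a b : ℝ) : (cm a b).im = b := rfl

@[fun_prop]
theorem cm_cont {A : Type*} [TopologicalSpace A] {f g : A → ℝ} (hf : Continuous f) (hg : Continuous g) :
    Continuous (fun x => cm (f x) (g x)) :=
  Complex.equivRealProdCLM.symm.continuous.comp (hf.prodMk hg)

theorem cr_cm (a b c d : ℝ) : cr (cm a b) (cm c d) = a * d - b * c := rfl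


def r321 : Equiv.Perm (Fin 3) := ⟨![2,1,0], ![2,1,0], by decide, by decide⟩

theorem DC321 : DC (XM 3 r321) := by
  refine (DC_prodstep (S := {x : ℝ | x ≠ 0}) (fun x => x) (by fun_prop) (fun x hx => hx) DC_ne).retract2
    (fun M => ((M 0 0, M 0 1), M 1 0))
    (fun p => !![p.1.1, p.1.2, 1; p.2, 1, 0; 1, 0, 0]) (by fun_prop) ?_ ?_ ?_
  · refine contOn_mat fun i j => ?_
    fin_cases i <;> fin_cases j <;> simp <;> fun_prop
  · intro M hM
    rw [XM3_iff] at hM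
    obtain ⟨hp, h1, h2⟩ := hM
    obtain ⟨a, b, c, rfl⟩ : ∃ a b c, M = !![a, b, 1; c, 1, 0; 1, 0, 0] :=
      ⟨M 0 0, M 0 1, M 1 0, by ext i j; rw [hp]; fin_cases i <;> fin_cases j <;> rfl⟩
    simp [q2] at h1 h2 ⊢
    exact ⟨h1, h2⟩
  · rintro ⟨⟨a, b⟩, c⟩ ⟨h1, h2⟩
    rw [XM3_iff]
    refine ⟨by intro i j; fin_cases i <;> fin_cases j <;> rfl, ?_, ?_⟩
    · simpa using h1
    · simpa [q2] using h2

def r4321 : Equiv.Perm (Fin 4) := ⟨![3,2,1,0], ![3,2,1,0], by decide, by decide⟩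

theorem cr_ne {a b : ℂ} (h : cr a b ≠ 0) : cr b a ≠ 0 := by
  intro h0; apply h; unfold cr at *; linarith

/-- the quotient used for the move x ↦ x - s a -/
theorem lam_re {x a u : ℂ} (h : cr a u ≠ 0) :
    x.re - cr u x / cr u a * a.re = cr x a / cr u a * u.re := by
  have := cr_ne h
  field_simp
  unfold cr; ring

theorem lam_im {x a u : ℂ} (h : cr a u ≠ 0) :
    x.im - cr u x / cr u a * a.im = cr x a / cr u a * u.im := by
  have := cr_ne h
  field_simp
  unfold cr; ring

theorem move_eq {x1 x2 a1 a2 s : ℝ} (h : x1 * a2 - x2 * a1 ≠ 0) :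
    cr (cm (x1 - s * a1) (x2 - s * a2)) (cm x1 x2) / cr (cm (x1 - s * a1) (x2 - s * a2)) (cm a1 a2) = s := by
  have e : cr (cm (x1 - s * a1) (x2 - s * a2)) (cm a1 a2) = x1 * a2 - x2 * a1 := by rw [cr_cm]; ring
  rw [e, cr_cm, div_eq_iff h]
  ring

theorem quot_contOn {A : Type*} [TopologicalSpace A] {S : Set A} {x a u : A → ℂ} (hx : ContinuousOn x S)
    (ha : ContinuousOn a S) (hu : ContinuousOn u S) (h : ∀ p ∈ S, cr (a p) (u p) ≠ 0) :
    ContinuousOn (fun p => cr (u p) (x p) / cr (u p) (a p)) S :=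
  (cr_continuousOn hu hx).div (cr_continuousOn hu ha) (fun p hp => cr_ne (h p hp))

theorem rat_contOn {A : Type*} [TopologicalSpace A] {S : Set A} {c : A → ℂ} (hc : ContinuousOn c S)
    (h : ∀ p ∈ S, (c p).im ≠ 0) : ContinuousOn (fun p => (c p).re / (c p).im) S :=
  (Complex.continuous_re.comp_continuousOn hc).div (Complex.continuous_im.comp_continuousOn hc) h

theorem DC4321 : DC (XM 4 r4321) := by
  refine (MA.baseRe.step.step.step.close).retract2
    (fun M => (((((), cm (M 0 0) (M 0 1)), cm (M 1 0) (M 1 1)),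
      cm (M 0 0 - M 0 2 * M 1 0) (M 0 1 - M 0 2 * M 1 1)), cm (M 2 0) 1))
    (fun p => !![p.1.1.1.2.re, p.1.1.1.2.im, cr p.1.2 p.1.1.1.2 / cr p.1.2 p.1.1.2, 1;
      p.1.1.2.re, p.1.1.2.im, 1, 0; p.2.re / p.2.im, 1, 0, 0; 1, 0, 0, 0]) (by fun_prop) ?_ ?_ ?_
  · refine contOn_mat fun i j => ?_
    fin_cases i <;> fin_cases j <;> first
      | exact continuousOn_const
      | exact rat_contOn (by fun_prop) (fun p hp => hp.2)
      | exact quot_contOn (by fun_prop) (by fun_prop) (by fun_prop) (fun p hp => hp.1.1.2)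
      | (simp; fun_prop)
  · intro M hM
    rw [XM4_iff] at hM
    obtain ⟨hp, h1, h2, h3⟩ := hM
    obtain ⟨a, b, c, d, e, f, rfl⟩ : ∃ a b c d e f, M = !![a, b, c, 1; d, e, 1, 0; f, 1, 0, 0; 1, 0, 0, 0] :=
      ⟨M 0 0, M 0 1, M 0 2, M 1 0, M 1 1, M 2 0, by ext i j; rw [hp]; fin_cases i <;> fin_cases j <;> rfl⟩
    simp [q2, q3] at h1 h2 h3
    refine ⟨?_, ?_⟩
    · simp [cr_cm]
      refine ⟨⟨⟨h1, h2⟩, ?_⟩, ?_⟩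
      · contrapose! h2; linarith
      · contrapose! h3; linarith
    · simp [move_eq h2]
  · rintro ⟨⟨⟨⟨u, x⟩, y⟩, r⟩, c⟩ ⟨⟨⟨⟨h1, h2⟩, h3⟩, h4⟩, h5⟩
    simp only at h1 h2 h3 h4 h5
    rw [XM4_iff]
    refine ⟨by intro i j; fin_cases i <;> fin_cases j <;> rfl, ?_, ?_, ?_⟩
    · simpa using h1
    · simpa [q2, cr] using h2
    · have e1 := lam_re (x := x) h3
      have e2 := lam_im (x := x) h3
      have e3 : (cr x y / cr r y) * cr r c / c.im ≠ 0 :=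
        div_ne_zero (mul_ne_zero (div_ne_zero h2 (cr_ne h3)) h4) h5
      intro h0
      simp [q3] at h0
      generalize cr r x / cr r y = s at *
      generalize cr x y / cr r y = l at *
      apply e3
      have e4 : l * cr r c / c.im = (x.re - s * y.re) - (x.im - s * y.im) * (c.re / c.im) := by
        rw [e1, e2]; unfold cr; field_simp
      rw [e4]; first | linear_combination h0 | linear_combination -h0


def r4231 : Equiv.Perm (Fin 4) := ⟨![3,1,2,0], ![3,1,2,0], by decide, by decide⟩

theorem DC_ps1 : DC {p : (ℝ × ℝ) × ℝ | p.1.1 ≠ 0 ∧ p.1.1 - p.1.2 * p.2 ≠ 0} :=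
  DC_prodstep (S := {x : ℝ | x ≠ 0}) (fun x => x) (by fun_prop) (fun x hx => hx) DC_ne

theorem DC_ps2 : DC {p : (((ℝ × ℝ) × ℝ) × ℝ) × ℝ | (p.1.1.1.1 ≠ 0 ∧ p.1.1.1.1 - p.1.1.1.2 * p.1.1.2 ≠ 0) ∧
    p.1.1.1.1 - p.1.1.1.2 * p.1.1.2 - p.1.2 * p.2 ≠ 0} :=
  DC_prodstep (fun p : (ℝ × ℝ) × ℝ => p.1.1 - p.1.2 * p.2) (by fun_prop) (fun x hx => hx.2) DC_ps1

theorem DC_ps3 : DC {p : (((((ℝ × ℝ) × ℝ) × ℝ) × ℝ) × ℝ) × ℝ |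
    ((p.1.1.1.1.1.1 ≠ 0 ∧ p.1.1.1.1.1.1 - p.1.1.1.1.1.2 * p.1.1.1.1.2 ≠ 0) ∧
    p.1.1.1.1.1.1 - p.1.1.1.1.1.2 * p.1.1.1.1.2 - p.1.1.1.2 * p.1.1.2 ≠ 0) ∧
    p.1.1.1.1.1.1 - p.1.1.1.1.1.2 * p.1.1.1.1.2 - p.1.1.1.2 * p.1.1.2 - p.1.2 * p.2 ≠ 0} :=
  DC_prodstep (fun p : (((ℝ × ℝ) × ℝ) × ℝ) × ℝ =>
    p.1.1.1.1 - p.1.1.1.2 * p.1.1.2 - p.1.2 * p.2) (by fun_prop) (fun x hx => hx.2) DC_ps2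

theorem DC4231 : DC (XM 4 r4231) := by
  refine DC_ps2.retract2 (fun M => ((((M 0 0, M 0 1), M 1 0), M 0 2), M 2 0))
    (fun p => !![p.1.1.1.1, p.1.1.1.2, p.1.2, 1; p.1.1.2, 1, 0, 0; p.2, 0, 1, 0; 1, 0, 0, 0])
    (by fun_prop) ?_ ?_ ?_
  · refine contOn_mat fun i j => ?_
    fin_cases i <;> fin_cases j <;> simp <;> fun_prop
  · intro M hM
    rw [XM4_iff] at hM
    obtain ⟨hp, h1, h2, h3⟩ := hM
    obtain ⟨a, b, c, d, e, rfl⟩ : ∃ a b c d e, M = !![a, b, c, 1; d, 1, 0, 0; e, 0, 1, 0; 1, 0, 0, 0] :=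
      ⟨M 0 0, M 0 1, M 0 2, M 1 0, M 2 0, by ext i j; rw [hp]; fin_cases i <;> fin_cases j <;> rfl⟩
    simp [q2, q3] at h1 h2 h3
    refine ⟨?_, ?_⟩
    · simp
      refine ⟨⟨h1, h2⟩, ?_⟩
      contrapose! h3; linarith
    · simp
  · rintro ⟨⟨⟨⟨a, b⟩, d⟩, c⟩, e⟩ ⟨⟨h1, h2⟩, h3⟩
    simp only at h1 h2 h3
    rw [XM4_iff]
    refine ⟨by intro i j; fin_cases i <;> fin_cases j <;> rfl, ?_, ?_, ?_⟩
    · simpa using h1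
    · simpa [q2] using h2
    · intro h0
      simp [q3] at h0
      apply h3; linarith

def r3412 : Equiv.Perm (Fin 4) := ⟨![2,3,0,1], ![2,3,0,1], by decide, by decide⟩

theorem DC3412 : DC (XM 4 r3412) := by
  refine (MA.baseRe.step.close).retract2 (fun M => (((), cm (M 0 0) (M 0 1)), cm (M 1 0) (M 1 1)))
    (fun p => !![p.1.2.re, p.1.2.im, 1, 0; p.2.re, p.2.im, 0, 1; 1, 0, 0, 0; 0, 1, 0, 0])
    (by fun_prop) ?_ ?_ ?_
  · refine contOn_mat fun i j => ?_
    fin_cases i <;> fin_cases j <;> simp <;> fun_prop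
  · intro M hM
    rw [XM4_iff] at hM
    obtain ⟨hp, h1, h2, h3⟩ := hM
    obtain ⟨a, b, c, d, rfl⟩ : ∃ a b c d, M = !![a, b, 1, 0; c, d, 0, 1; 1, 0, 0, 0; 0, 1, 0, 0] :=
      ⟨M 0 0, M 0 1, M 1 0, M 1 1, by ext i j; rw [hp]; fin_cases i <;> fin_cases j <;> rfl⟩
    simp [q2, q3] at h1 h2 h3
    refine ⟨?_, ?_⟩
    · simp [cr_cm]
      exact ⟨⟨h1, h2⟩, h3⟩
    · simp
  · rintro ⟨⟨u, x⟩, y⟩ ⟨⟨h1, h2⟩, h3⟩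
    simp only at h1 h2 h3
    rw [XM4_iff]
    refine ⟨by intro i j; fin_cases i <;> fin_cases j <;> rfl, ?_, ?_, ?_⟩
    · simpa using h1
    · simpa [q2, cr] using h2
    · simpa [q3] using h3

/-- closing with a vector c = (t, 1) -/
theorem close_eq {r c : ℂ} (h : c.im ≠ 0) : cr r c / c.im = r.re - r.im * (c.re / c.im) := by
  unfold cr; field_simp

def r3421 : Equiv.Perm (Fin 4) := ⟨![2,3,1,0], ![3,2,0,1], by decide, by decide⟩

theorem DC3421 : DC (XM 4 r3421) := by
  refine (MA.baseRe.step.step.close).retract2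
    (fun M => ((((), cm (M 0 0) (M 0 1)), cm (M 1 0) (M 1 1)), cm (M 2 0) 1))
    (fun p => !![p.1.1.2.re, p.1.1.2.im, 1, 0; p.1.2.re, p.1.2.im, 0, 1; p.2.re / p.2.im, 1, 0, 0; 1, 0, 0, 0])
    (by fun_prop) ?_ ?_ ?_
  · refine contOn_mat fun i j => ?_
    fin_cases i <;> fin_cases j <;> first
      | exact continuousOn_const
      | exact rat_contOn (by fun_prop) (fun p hp => hp.2)
      | (simp; fun_prop)
  · intro M hM
    rw [XM4_iff] at hM
    obtain ⟨hp, h1, h2, h3⟩ := hM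
    obtain ⟨a, b, c, d, e, rfl⟩ : ∃ a b c d e, M = !![a, b, 1, 0; c, d, 0, 1; e, 1, 0, 0; 1, 0, 0, 0] :=
      ⟨M 0 0, M 0 1, M 1 0, M 1 1, M 2 0, by ext i j; rw [hp]; fin_cases i <;> fin_cases j <;> rfl⟩
    simp [q2, q3] at h1 h2 h3
    refine ⟨?_, ?_⟩
    · simp [cr_cm]
      exact ⟨⟨h1, h2⟩, h3⟩
    · simp
  · rintro ⟨⟨⟨u, x⟩, y⟩, c⟩ ⟨⟨⟨h1, h2⟩, h3⟩, h4⟩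
    simp only at h1 h2 h3 h4
    have e := close_eq (r := y) h4
    have e3 := div_ne_zero h3 h4
    rw [XM4_iff]
    refine ⟨by intro i j; fin_cases i <;> fin_cases j <;> rfl, ?_, ?_, ?_⟩
    · simpa using h1
    · simpa [q2, cr] using h2
    · intro h0
      simp [q3] at h0
      apply e3; rw [e]; linarith

def r52341 : Equiv.Perm (Fin 5) := ⟨![4,1,2,3,0], ![4,1,2,3,0], by decide, by decide⟩

theorem DC52341 : DC (XM 5 r52341) := by
  refine DC_ps3.retract2 (fun M => ((((((M 0 0, M 0 1), M 1 0), M 0 2), M 2 0), M 0 3), M 3 0))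
    (fun p => !![p.1.1.1.1.1.1, p.1.1.1.1.1.2, p.1.1.1.2, p.1.2, 1; p.1.1.1.1.2, 1, 0, 0, 0;
      p.1.1.2, 0, 1, 0, 0; p.2, 0, 0, 1, 0; 1, 0, 0, 0, 0])
    (by fun_prop) ?_ ?_ ?_
  · refine contOn_mat fun i j => ?_
    fin_cases i <;> fin_cases j <;> simp <;> fun_prop
  · intro M hM
    rw [XM5_iff] at hM
    obtain ⟨hp, h1, h2, h3, h4⟩ := hM
    obtain ⟨a, b, c, d, e, f, g, rfl⟩ : ∃ a b c d e f g, M = !![a, b, c, d, 1; e, 1, 0, 0, 0;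
      f, 0, 1, 0, 0; g, 0, 0, 1, 0; 1, 0, 0, 0, 0] :=
      ⟨M 0 0, M 0 1, M 0 2, M 0 3, M 1 0, M 2 0, M 3 0, by
        ext i j; rw [hp]; fin_cases i <;> fin_cases j <;> rfl⟩
    simp [q2, q3, q4] at h1 h2 h3 h4
    refine ⟨?_, ?_⟩
    · simp
      refine ⟨⟨⟨h1, h2⟩, ?_⟩, ?_⟩
      · contrapose! h3; linarith
      · contrapose! h4; linarith
    · simp
  · rintro ⟨⟨⟨⟨⟨⟨a, b⟩, e⟩, c⟩, f⟩, d⟩, g⟩ ⟨⟨⟨h1, h2⟩, h3⟩, h4⟩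
    simp only at h1 h2 h3 h4
    rw [XM5_iff]
    refine ⟨by intro i j; fin_cases i <;> fin_cases j <;> rfl, ?_, ?_, ?_, ?_⟩
    · simpa using h1
    · simpa [q2] using h2
    · intro h0
      simp [q3] at h0
      apply h3; linarith
    · intro h0
      simp [q4] at h0
      apply h4; linarith

def r32541 : Equiv.Perm (Fin 5) := ⟨![2,1,4,3,0], ![4,1,0,3,2], by decide, by decide⟩

theorem DC32541 : DC (XM 5 r32541) := by
  refine (DC_ps1.prod DC_ps1).retract2 (fun M => (((M 0 0, M 0 1), M 1 0), ((M 2 0, M 2 3), M 3 0)))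
    (fun p => !![p.1.1.1, p.1.1.2, 1, 0, 0; p.1.2, 1, 0, 0, 0;
      p.2.1.1, 0, 0, p.2.1.2, 1; p.2.2, 0, 0, 1, 0; 1, 0, 0, 0, 0])
    (by fun_prop) ?_ ?_ ?_
  · refine contOn_mat fun i j => ?_
    fin_cases i <;> fin_cases j <;> simp <;> fun_prop
  · intro M hM
    rw [XM5_iff] at hM
    obtain ⟨hp, h1, h2, h3, h4⟩ := hM
    obtain ⟨a, b, c, d, e, f, rfl⟩ : ∃ a b c d e f, M = !![a, b, 1, 0, 0; c, 1, 0, 0, 0;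
      d, 0, 0, e, 1; f, 0, 0, 1, 0; 1, 0, 0, 0, 0] :=
      ⟨M 0 0, M 0 1, M 1 0, M 2 0, M 2 3, M 3 0, by
        ext i j; rw [hp]; fin_cases i <;> fin_cases j <;> rfl⟩
    simp [q2, q3, q4] at h1 h2 h3 h4
    refine ⟨?_, ?_⟩
    · simp
      refine ⟨⟨h1, h2⟩, h3, ?_⟩
      contrapose! h4; linarith
    · simp
  · rintro ⟨⟨⟨a, b⟩, c⟩, ⟨⟨d, e⟩, f⟩⟩ ⟨⟨h1, h2⟩, ⟨h3, h4⟩⟩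
    simp only at h1 h2 h3 h4
    rw [XM5_iff]
    refine ⟨by intro i j; fin_cases i <;> fin_cases j <;> rfl, ?_, ?_, ?_, ?_⟩
    · simpa using h1
    · simpa [q2] using h2
    · simpa [q3] using h3
    · intro h0
      simp [q4] at h0
      apply h4; linarith

def r34512 : Equiv.Perm (Fin 5) := ⟨![2,3,4,0,1], ![3,4,0,1,2], by decide, by decide⟩

theorem DC34512 : DC (XM 5 r34512) := by
  refine (MA.baseRe.step.step.close).retract2
    (fun M => ((((), cm (M 0 0) (M 0 1)), cm (M 1 0) (M 1 1)), cm (M 2 0) (M 2 1)))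
    (fun p => !![p.1.1.2.re, p.1.1.2.im, 1, 0, 0; p.1.2.re, p.1.2.im, 0, 1, 0; p.2.re, p.2.im, 0, 0, 1;
      1, 0, 0, 0, 0; 0, 1, 0, 0, 0])
    (by fun_prop) ?_ ?_ ?_
  · refine contOn_mat fun i j => ?_
    fin_cases i <;> fin_cases j <;> simp <;> fun_prop
  · intro M hM
    rw [XM5_iff] at hM
    obtain ⟨hp, h1, h2, h3, h4⟩ := hM
    obtain ⟨a, b, c, d, e, f, rfl⟩ : ∃ a b c d e f, M = !![a, b, 1, 0, 0; c, d, 0, 1, 0; e, f, 0, 0, 1;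
        1, 0, 0, 0, 0; 0, 1, 0, 0, 0] :=
      ⟨M 0 0, M 0 1, M 1 0, M 1 1, M 2 0, M 2 1, by
        ext i j; rw [hp]; fin_cases i <;> fin_cases j <;> rfl⟩
    simp [q2, q3, q4] at h1 h2 h3 h4
    refine ⟨?_, ?_⟩
    · simp [cr_cm]
      exact ⟨⟨⟨h1, h2⟩, h3⟩, h4⟩
    · simp
  · rintro ⟨⟨⟨u, x⟩, y⟩, n⟩ ⟨⟨⟨h1, h2⟩, h3⟩, h4⟩
    simp only at h1 h2 h3 h4
    rw [XM5_iff]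
    refine ⟨by intro i j; fin_cases i <;> fin_cases j <;> rfl, ?_, ?_, ?_, ?_⟩
    · simpa using h1
    · simpa [q2, cr] using h2
    · simpa [q3, cr] using h3
    · simpa [q4] using h4

def r34521 : Equiv.Perm (Fin 5) := ⟨![2,3,4,1,0], ![4,3,0,1,2], by decide, by decide⟩

theorem DC34521 : DC (XM 5 r34521) := by
  refine (MA.baseRe.step.step.step.close).retract2
    (fun M => (((((), cm (M 0 0) (M 0 1)), cm (M 1 0) (M 1 1)), cm (M 2 0) (M 2 1)), cm (M 3 0) 1))
    (fun p => !![p.1.1.1.2.re, p.1.1.1.2.im, 1, 0, 0; p.1.1.2.re, p.1.1.2.im, 0, 1, 0;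
      p.1.2.re, p.1.2.im, 0, 0, 1; p.2.re / p.2.im, 1, 0, 0, 0; 1, 0, 0, 0, 0])
    (by fun_prop) ?_ ?_ ?_
  · refine contOn_mat fun i j => ?_
    fin_cases i <;> fin_cases j <;> first
      | exact continuousOn_const
      | exact rat_contOn (by fun_prop) (fun p hp => hp.2)
      | (simp; fun_prop)
  · intro M hM
    rw [XM5_iff] at hM
    obtain ⟨hp, h1, h2, h3, h4⟩ := hM
    obtain ⟨a, b, c, d, e, f, t, rfl⟩ : ∃ a b c d e f t, M = !![a, b, 1, 0, 0; c, d, 0, 1, 0; e, f, 0, 0, 1;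
        t, 1, 0, 0, 0; 1, 0, 0, 0, 0] :=
      ⟨M 0 0, M 0 1, M 1 0, M 1 1, M 2 0, M 2 1, M 3 0, by
        ext i j; rw [hp]; fin_cases i <;> fin_cases j <;> rfl⟩
    simp [q2, q3, q4] at h1 h2 h3 h4
    refine ⟨?_, ?_⟩
    · simp [cr_cm]
      exact ⟨⟨⟨h1, h2⟩, h3⟩, h4⟩
    · simp
  · rintro ⟨⟨⟨⟨u, x⟩, y⟩, n⟩, c⟩ ⟨⟨⟨⟨h1, h2⟩, h3⟩, h4⟩, h5⟩
    simp only at h1 h2 h3 h4 h5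
    have e := close_eq (r := n) h5
    have e3 := div_ne_zero h4 h5
    rw [XM5_iff]
    refine ⟨by intro i j; fin_cases i <;> fin_cases j <;> rfl, ?_, ?_, ?_, ?_⟩
    · simpa using h1
    · simpa [q2, cr] using h2
    · simpa [q3, cr] using h3
    · intro h0
      simp [q4] at h0
      apply e3; rw [e]; linarith


def r35412 : Equiv.Perm (Fin 5) := ⟨![2,4,3,0,1], ![3,4,0,2,1], by decide, by decide⟩

theorem DC35412 : DC (XM 5 r35412) := by
  refine (MA.baseRe.step.step.step.close).retract2
    (fun M => (((((), cm (M 0 0) (M 0 1)), cm (M 1 0) (M 1 1)), cm (M 2 0) (M 2 1)),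
      cm (M 1 0 - M 1 3 * M 2 0) (M 1 1 - M 1 3 * M 2 1)))
    (fun p => !![p.1.1.1.2.re, p.1.1.1.2.im, 1, 0, 0;
      p.1.1.2.re, p.1.1.2.im, 0, cr p.2 p.1.1.2 / cr p.2 p.1.2, 1;
      p.1.2.re, p.1.2.im, 0, 1, 0; 1, 0, 0, 0, 0; 0, 1, 0, 0, 0])
    (by fun_prop) ?_ ?_ ?_
  · refine contOn_mat fun i j => ?_
    fin_cases i <;> fin_cases j <;> first
      | exact continuousOn_const
      | exact quot_contOn (by fun_prop) (by fun_prop) (by fun_prop) (fun p hp => hp.1.2)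
      | (simp; fun_prop)
  · intro M hM
    rw [XM5_iff] at hM
    obtain ⟨hp, h1, h2, h3, h4⟩ := hM
    obtain ⟨a, b, c, d, s, e, f, rfl⟩ : ∃ a b c d s e f, M = !![a, b, 1, 0, 0; c, d, 0, s, 1; e, f, 0, 1, 0;
        1, 0, 0, 0, 0; 0, 1, 0, 0, 0] :=
      ⟨M 0 0, M 0 1, M 1 0, M 1 1, M 1 3, M 2 0, M 2 1, by
        ext i j; rw [hp]; fin_cases i <;> fin_cases j <;> rfl⟩
    simp [q2, q3, q4] at h1 h2 h3 h4
    refine ⟨?_, ?_⟩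
    · simp [cr_cm]
      refine ⟨⟨⟨⟨h1, h2⟩, h3⟩, ?_⟩, ?_⟩
      · contrapose! h3; linarith
      · contrapose! h4; linarith
    · simp [move_eq h3]
  · rintro ⟨⟨⟨⟨u, x⟩, y⟩, z⟩, r⟩ ⟨⟨⟨⟨h1, h2⟩, h3⟩, h4⟩, h5⟩
    simp only at h1 h2 h3 h4 h5
    have e2 := lam_im (x := y) h4
    have e3 : (cr y z / cr r z) * r.im ≠ 0 := mul_ne_zero (div_ne_zero h3 (cr_ne h4)) h5
    rw [XM5_iff]
    refine ⟨by intro i j; fin_cases i <;> fin_cases j <;> rfl, ?_, ?_, ?_, ?_⟩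
    · simpa using h1
    · simpa [q2, cr] using h2
    · simpa [q3, cr] using h3
    · intro h0
      simp [q4] at h0
      apply e3; rw [← e2]; linarith

def r35421 : Equiv.Perm (Fin 5) := ⟨![2,4,3,1,0], ![4,3,0,2,1], by decide, by decide⟩

theorem DC35421 : DC (XM 5 r35421) := by
  refine (MA.baseRe.step.step.step.step.close).retract2
    (fun M => ((((((), cm (M 0 0) (M 0 1)), cm (M 1 0) (M 1 1)), cm (M 2 0) (M 2 1)),
      cm (M 1 0 - M 1 3 * M 2 0) (M 1 1 - M 1 3 * M 2 1)), cm (M 3 0) 1))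
    (fun p => !![p.1.1.1.1.2.re, p.1.1.1.1.2.im, 1, 0, 0;
      p.1.1.1.2.re, p.1.1.1.2.im, 0, cr p.1.2 p.1.1.1.2 / cr p.1.2 p.1.1.2, 1;
      p.1.1.2.re, p.1.1.2.im, 0, 1, 0; p.2.re / p.2.im, 1, 0, 0, 0; 1, 0, 0, 0, 0])
    (by fun_prop) ?_ ?_ ?_
  · refine contOn_mat fun i j => ?_
    fin_cases i <;> fin_cases j <;> first
      | exact continuousOn_const
      | exact rat_contOn (by fun_prop) (fun p hp => hp.2)
      | exact quot_contOn (by fun_prop) (by fun_prop) (by fun_prop) (fun p hp => hp.1.1.2)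
      | (simp; fun_prop)
  · intro M hM
    rw [XM5_iff] at hM
    obtain ⟨hp, h1, h2, h3, h4⟩ := hM
    obtain ⟨a, b, c, d, s, e, f, t, rfl⟩ : ∃ a b c d s e f t, M = !![a, b, 1, 0, 0; c, d, 0, s, 1; e, f, 0, 1, 0;
        t, 1, 0, 0, 0; 1, 0, 0, 0, 0] :=
      ⟨M 0 0, M 0 1, M 1 0, M 1 1, M 1 3, M 2 0, M 2 1, M 3 0, by
        ext i j; rw [hp]; fin_cases i <;> fin_cases j <;> rfl⟩
    simp [q2, q3, q4] at h1 h2 h3 h4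
    refine ⟨?_, ?_⟩
    · simp [cr_cm]
      refine ⟨⟨⟨⟨h1, h2⟩, h3⟩, ?_⟩, ?_⟩
      · contrapose! h3; linarith
      · contrapose! h4; linarith
    · simp [move_eq h3]
  · rintro ⟨⟨⟨⟨⟨u, x⟩, y⟩, z⟩, r⟩, c⟩ ⟨⟨⟨⟨⟨h1, h2⟩, h3⟩, h4⟩, h5⟩, h6⟩
    simp only at h1 h2 h3 h4 h5 h6
    have e1 := lam_re (x := y) h4
    have e2 := lam_im (x := y) h4
    have e := close_eq (r := r) h6
    have e3 : (cr y z / cr r z) * (cr r c / c.im) ≠ 0 :=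
      mul_ne_zero (div_ne_zero h3 (cr_ne h4)) (div_ne_zero h5 h6)
    rw [XM5_iff]
    refine ⟨by intro i j; fin_cases i <;> fin_cases j <;> rfl, ?_, ?_, ?_, ?_⟩
    · simpa using h1
    · simpa [q2, cr] using h2
    · simpa [q3, cr] using h3
    · intro h0
      simp [q4] at h0
      apply e3; rw [e, mul_sub, ← mul_assoc, ← e1, ← e2]; linarith

def r53412 : Equiv.Perm (Fin 5) := ⟨![4,2,3,0,1], ![3,4,1,2,0], by decide, by decide⟩

theorem move_one {x1 x2 a1 a2 s : ℝ} (h : x1 * a2 - x2 * a1 ≠ 0) :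
    cr (cm x1 x2) (cm a1 a2) / cr (cm (x1 - s * a1) (x2 - s * a2)) (cm a1 a2) = 1 := by
  have e : cr (cm (x1 - s * a1) (x2 - s * a2)) (cm a1 a2) = x1 * a2 - x2 * a1 := by rw [cr_cm]; ring
  rw [e, cr_cm, div_self h]

theorem DC53412 : DC (XM 5 r53412) := by
  refine (MA.baseRe.step.step.step.step.close).retract2
    (fun M => ((((((), cm (M 0 0) (M 0 1)), cm (M 1 0) (M 1 1)),
      cm (M 0 0 - M 0 2 * M 1 0) (M 0 1 - M 0 2 * M 1 1)), cm (M 2 0) (M 2 1)),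
      cm (M 0 0 - M 0 2 * M 1 0 - M 0 3 * M 2 0) (M 0 1 - M 0 2 * M 1 1 - M 0 3 * M 2 1)))
    (fun p => !![p.1.1.1.1.2.re, p.1.1.1.1.2.im, cr p.1.1.2 p.1.1.1.1.2 / cr p.1.1.2 p.1.1.1.2,
        cr p.1.1.1.1.2 p.1.1.1.2 / cr p.1.1.2 p.1.1.1.2 * (cr p.2 p.1.1.2 / cr p.2 p.1.2), 1;
      p.1.1.1.2.re, p.1.1.1.2.im, 1, 0, 0;
      p.1.2.re, p.1.2.im, 0, 1, 0; 1, 0, 0, 0, 0; 0, 1, 0, 0, 0])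
    (by fun_prop) ?_ ?_ ?_
  · refine contOn_mat fun i j => ?_
    fin_cases i <;> fin_cases j <;> first
      | exact continuousOn_const
      | exact quot_contOn (by fun_prop) (by fun_prop) (by fun_prop) (fun p hp => hp.1.1.1.2)
      | exact ((cr_continuousOn (by fun_prop) (by fun_prop)).div (cr_continuousOn (by fun_prop) (by fun_prop))
          (fun p hp => cr_ne hp.1.1.1.2)).mul
          (quot_contOn (by fun_prop) (by fun_prop) (by fun_prop) (fun p hp => hp.1.2))
      | (simp; fun_prop)
  · intro M hM
    rw [XM5_iff] at hM
    obtain ⟨hp, h1, h2, h3, h4⟩ := hM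
    obtain ⟨a, b, s, t, c, d, e, f, rfl⟩ : ∃ a b s t c d e f, M = !![a, b, s, t, 1; c, d, 1, 0, 0; e, f, 0, 1, 0;
        1, 0, 0, 0, 0; 0, 1, 0, 0, 0] :=
      ⟨M 0 0, M 0 1, M 0 2, M 0 3, M 1 0, M 1 1, M 2 0, M 2 1, by
        ext i j; rw [hp]; fin_cases i <;> fin_cases j <;> rfl⟩
    simp [q2, q3, q4] at h1 h2 h3 h4
    have h5 : (a - s * c) * f - (b - s * d) * e ≠ 0 := by contrapose! h3; linarith
    refine ⟨?_, ?_⟩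
    · simp [cr_cm]
      refine ⟨⟨⟨⟨⟨h1, h2⟩, ?_⟩, h5⟩, ?_⟩, ?_⟩
      · contrapose! h2; linarith
      · contrapose! h5; linarith
      · contrapose! h4; linarith
    · simp [move_eq h2, move_one h2, move_eq h5]
  · rintro ⟨⟨⟨⟨⟨o, x⟩, a⟩, u⟩, b⟩, r⟩ ⟨⟨⟨⟨⟨h1, h2⟩, h3⟩, h4⟩, h5⟩, h6⟩
    simp only at h1 h2 h3 h4 h5 h6
    have e1 := lam_re (x := x) h3
    have e2 := lam_im (x := x) h3
    have f2 := lam_im (x := u) h5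
    have hl : cr x a / cr u a ≠ 0 := div_ne_zero h2 (cr_ne h3)
    have hm : cr u b / cr r b ≠ 0 := div_ne_zero h4 (cr_ne h5)
    rw [XM5_iff]
    refine ⟨by intro i j; fin_cases i <;> fin_cases j <;> rfl, ?_, ?_, ?_, ?_⟩
    · simpa using h1
    · simpa [q2, cr] using h2
    · intro h0
      simp [q3] at h0
      apply mul_ne_zero hl h4
      have : cr x a / cr u a * cr u b = (cr x a / cr u a * u.re) * b.im - (cr x a / cr u a * u.im) * b.re := by
        unfold cr; ring
      rw [this, ← e1, ← e2]; linarith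
    · intro h0
      simp [q4] at h0
      apply mul_ne_zero hl (mul_ne_zero hm h6)
      rw [← f2, mul_sub, ← e2]; linarith

def r53421 : Equiv.Perm (Fin 5) := ⟨![4,2,3,1,0], ![4,3,1,2,0], by decide, by decide⟩

theorem DC53421 : DC (XM 5 r53421) := by
  refine (MA.baseRe.step.step.step.step.step.close).retract2
    (fun M => (((((((), cm (M 0 0) (M 0 1)), cm (M 1 0) (M 1 1)),
      cm (M 0 0 - M 0 2 * M 1 0) (M 0 1 - M 0 2 * M 1 1)), cm (M 2 0) (M 2 1)),
      cm (M 0 0 - M 0 2 * M 1 0 - M 0 3 * M 2 0) (M 0 1 - M 0 2 * M 1 1 - M 0 3 * M 2 1)), cm (M 3 0) 1))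
    (fun p => !![p.1.1.1.1.1.2.re, p.1.1.1.1.1.2.im, cr p.1.1.1.2 p.1.1.1.1.1.2 / cr p.1.1.1.2 p.1.1.1.1.2,
        cr p.1.1.1.1.1.2 p.1.1.1.1.2 / cr p.1.1.1.2 p.1.1.1.1.2 * (cr p.1.2 p.1.1.1.2 / cr p.1.2 p.1.1.2), 1;
      p.1.1.1.1.2.re, p.1.1.1.1.2.im, 1, 0, 0;
      p.1.1.2.re, p.1.1.2.im, 0, 1, 0; p.2.re / p.2.im, 1, 0, 0, 0; 1, 0, 0, 0, 0])
    (by fun_prop) ?_ ?_ ?_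
  · refine contOn_mat fun i j => ?_
    fin_cases i <;> fin_cases j <;> first
      | exact continuousOn_const
      | exact rat_contOn (by fun_prop) (fun p hp => hp.2)
      | exact quot_contOn (by fun_prop) (by fun_prop) (by fun_prop) (fun p hp => hp.1.1.1.1.2)
      | exact ((cr_continuousOn (by fun_prop) (by fun_prop)).div (cr_continuousOn (by fun_prop) (by fun_prop))
          (fun p hp => cr_ne hp.1.1.1.1.2)).mul
          (quot_contOn (by fun_prop) (by fun_prop) (by fun_prop) (fun p hp => hp.1.1.2))
      | (simp; fun_prop)
  · intro M hM
    rw [XM5_iff] at hM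
    obtain ⟨hp, h1, h2, h3, h4⟩ := hM
    obtain ⟨a, b, s, t, c, d, e, f, k, rfl⟩ : ∃ a b s t c d e f k, M = !![a, b, s, t, 1; c, d, 1, 0, 0;
        e, f, 0, 1, 0; k, 1, 0, 0, 0; 1, 0, 0, 0, 0] :=
      ⟨M 0 0, M 0 1, M 0 2, M 0 3, M 1 0, M 1 1, M 2 0, M 2 1, M 3 0, by
        ext i j; rw [hp]; fin_cases i <;> fin_cases j <;> rfl⟩
    simp [q2, q3, q4] at h1 h2 h3 h4
    have h5 : (a - s * c) * f - (b - s * d) * e ≠ 0 := by contrapose! h3; linarith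
    refine ⟨?_, ?_⟩
    · simp [cr_cm]
      refine ⟨⟨⟨⟨⟨h1, h2⟩, ?_⟩, h5⟩, ?_⟩, ?_⟩
      · contrapose! h2; linarith
      · contrapose! h5; linarith
      · contrapose! h4; linarith
    · simp [move_eq h2, move_one h2, move_eq h5]
  · rintro ⟨⟨⟨⟨⟨⟨o, x⟩, a⟩, u⟩, b⟩, r⟩, c⟩ ⟨⟨⟨⟨⟨⟨h1, h2⟩, h3⟩, h4⟩, h5⟩, h6⟩, h7⟩
    simp only at h1 h2 h3 h4 h5 h6 h7
    have e1 := lam_re (x := x) h3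
    have e2 := lam_im (x := x) h3
    have f1 := lam_re (x := u) h5
    have f2 := lam_im (x := u) h5
    have e := close_eq (r := r) h7
    have hl : cr x a / cr u a ≠ 0 := div_ne_zero h2 (cr_ne h3)
    have hm : cr u b / cr r b ≠ 0 := div_ne_zero h4 (cr_ne h5)
    rw [XM5_iff]
    refine ⟨by intro i j; fin_cases i <;> fin_cases j <;> rfl, ?_, ?_, ?_, ?_⟩
    · simpa using h1
    · simpa [q2, cr] using h2
    · intro h0
      simp [q3] at h0
      apply mul_ne_zero hl h4
      have : cr x a / cr u a * cr u b = (cr x a / cr u a * u.re) * b.im - (cr x a / cr u a * u.im) * b.re := by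
        unfold cr; ring
      rw [this, ← e1, ← e2]; linarith
    · intro h0
      simp [q4] at h0
      apply mul_ne_zero hl (mul_ne_zero hm (div_ne_zero h6 h7))
      rw [e, mul_sub, ← mul_assoc, ← f1, ← f2, mul_sub, ← mul_assoc, mul_sub, mul_sub, ← e1, ← e2]; linarith


def r35142 : Equiv.Perm (Fin 5) := ⟨![2,4,0,3,1], ![2,4,0,3,1], by decide, by decide⟩

theorem DC35142 : DC (XM 5 r35142) := by
  refine (DC_prodstep (fun p => p.2.im) (by fun_prop) (fun x hx => hx.2)
    MA.baseRe.step.close).retract2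
    (fun M => (((((), cm (M 0 0) (M 0 1)), cm (M 1 0) (M 1 1)), M 1 3), M 3 1))
    (fun p => !![p.1.1.1.2.re, p.1.1.1.2.im, 1, 0, 0;
      p.1.1.2.re, p.1.1.2.im, 0, p.1.2, 1;
      1, 0, 0, 0, 0; 0, p.2, 0, 1, 0; 0, 1, 0, 0, 0])
    (by fun_prop) ?_ ?_ ?_
  · refine contOn_mat fun i j => ?_
    fin_cases i <;> fin_cases j <;> first
      | exact continuousOn_const
      | (simp; fun_prop)
  · intro M hM
    rw [XM5_iff] at hM
    obtain ⟨hp, h1, h2, h3, h4⟩ := hM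
    obtain ⟨a, b, c, d, s, k, rfl⟩ : ∃ a b c d s k, M = !![a, b, 1, 0, 0; c, d, 0, s, 1; 1, 0, 0, 0, 0;
        0, k, 0, 1, 0; 0, 1, 0, 0, 0] :=
      ⟨M 0 0, M 0 1, M 1 0, M 1 1, M 1 3, M 3 1, by
        ext i j; rw [hp]; fin_cases i <;> fin_cases j <;> rfl⟩
    simp [q2, q3, q4] at h1 h2 h3 h4
    refine ⟨?_, ?_⟩
    · simp [cr_cm]
      refine ⟨⟨⟨h1, h2⟩, h3⟩, ?_⟩
      contrapose! h4; linarith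
    · simp
  · rintro ⟨⟨⟨⟨u, x⟩, y⟩, s⟩, k⟩ ⟨⟨⟨h1, h2⟩, h3⟩, h4⟩
    simp only at h1 h2 h3 h4
    rw [XM5_iff]
    refine ⟨by intro i j; fin_cases i <;> fin_cases j <;> rfl, ?_, ?_, ?_, ?_⟩
    · simpa using h1
    · simpa [q2, cr] using h2
    · simpa [q3, cr] using h3
    · intro h0
      simp [q4] at h0
      apply h4; linarith

def r35241 : Equiv.Perm (Fin 5) := ⟨![2,4,1,3,0], ![4,2,0,3,1], by decide, by decide⟩

theorem DC35241 : DC (XM 5 r35241) := by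
  refine (DC_prodstep (fun p => cr p.1.2 p.2 / p.2.im)
    (ContinuousOn.div (f := fun p : ((Unit × ℂ) × ℂ) × ℂ => cr p.1.2 p.2) (g := fun p : ((Unit × ℂ) × ℂ) × ℂ => p.2.im)
      (cr_continuousOn (f := fun p : ((Unit × ℂ) × ℂ) × ℂ => p.1.2) (g := fun p : ((Unit × ℂ) × ℂ) × ℂ => p.2) (by fun_prop) (by fun_prop))
      (by fun_prop) (fun x hx => hx.2))
    (fun x hx => div_ne_zero hx.1.2 hx.2) MA.baseRe.step.step.close).retract2
    (fun M => ((((((), cm (M 0 0) (M 0 1)), cm (M 1 0) (M 1 1)), cm (M 2 0) 1), M 1 3), M 3 0))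
    (fun p => !![p.1.1.1.1.2.re, p.1.1.1.1.2.im, 1, 0, 0;
      p.1.1.1.2.re, p.1.1.1.2.im, 0, p.1.2, 1;
      p.1.1.2.re / p.1.1.2.im, 1, 0, 0, 0; p.2, 0, 0, 1, 0; 1, 0, 0, 0, 0])
    (by fun_prop) ?_ ?_ ?_
  · refine contOn_mat fun i j => ?_
    fin_cases i <;> fin_cases j <;> first
      | exact continuousOn_const
      | exact rat_contOn (by fun_prop) (fun p hp => hp.1.2)
      | (simp; fun_prop)
  · intro M hM
    rw [XM5_iff] at hM
    obtain ⟨hp, h1, h2, h3, h4⟩ := hM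
    obtain ⟨a, b, c, d, s, t, k, rfl⟩ : ∃ a b c d s t k, M = !![a, b, 1, 0, 0; c, d, 0, s, 1; t, 1, 0, 0, 0;
        k, 0, 0, 1, 0; 1, 0, 0, 0, 0] :=
      ⟨M 0 0, M 0 1, M 1 0, M 1 1, M 1 3, M 2 0, M 3 0, by
        ext i j; rw [hp]; fin_cases i <;> fin_cases j <;> rfl⟩
    simp [q2, q3, q4] at h1 h2 h3 h4
    refine ⟨?_, ?_⟩
    · simp [cr_cm]
      refine ⟨⟨⟨h1, h2⟩, ?_⟩, ?_⟩
      · contrapose! h3; linarith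
      · contrapose! h4; linarith
    · simp
  · rintro ⟨⟨⟨⟨⟨u, x⟩, y⟩, c⟩, s⟩, k⟩ ⟨⟨⟨⟨h1, h2⟩, h3⟩, h5⟩, h4⟩
    simp only at h1 h2 h3 h4 h5
    have e3 := div_ne_zero h3 h5
    rw [close_eq h5] at h4 e3
    rw [XM5_iff]
    refine ⟨by intro i j; fin_cases i <;> fin_cases j <;> rfl, ?_, ?_, ?_, ?_⟩
    · simpa using h1
    · simpa [q2, cr] using h2
    · simpa [q3, cr] using e3
    · intro h0
      simp [q4] at h0
      apply h4; linarith

def r52431 : Equiv.Perm (Fin 5) := ⟨![4,1,3,2,0], ![4,1,3,2,0], by decide, by decide⟩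

theorem DC52431 : DC (XM 5 r52431) := by
  refine (DC_prodstep (fun p => p.1.1.1.2.re) (by fun_prop)
    (fun x hx => hx.1.1.1.1) MA.baseRe.step.step.step.close).retract2
    (fun M => (((((((), cm (M 0 0 - M 0 1 * M 1 0) (M 0 2)), cm (M 2 0) (M 2 2)),
      cm (M 0 0 - M 0 1 * M 1 0 - M 0 3 * M 2 0) (M 0 2 - M 0 3 * M 2 2)), cm (M 3 0) 1), M 0 1), - M 1 0))
    (fun p => !![p.1.1.1.1.1.2.re - p.1.2 * p.2, p.1.2, p.1.1.1.1.1.2.im,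
        cr p.1.1.1.2 p.1.1.1.1.1.2 / cr p.1.1.1.2 p.1.1.1.1.2, 1;
      - p.2, 1, 0, 0, 0;
      p.1.1.1.1.2.re, 0, p.1.1.1.1.2.im, 1, 0;
      p.1.1.2.re / p.1.1.2.im, 0, 1, 0, 0; 1, 0, 0, 0, 0])
    (by fun_prop) ?_ ?_ ?_
  · refine contOn_mat fun i j => ?_
    fin_cases i <;> fin_cases j <;> first
      | exact continuousOn_const
      | exact rat_contOn (by fun_prop) (fun p hp => hp.1.2)
      | exact quot_contOn (by fun_prop) (by fun_prop) (by fun_prop) (fun p hp => hp.1.1.1.2)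
      | (simp; fun_prop)
  · intro M hM
    rw [XM5_iff] at hM
    obtain ⟨hp, h1, h2, h3, h4⟩ := hM
    obtain ⟨a, b, c, d, e, f, g, h, rfl⟩ : ∃ a b c d e f g h, M = !![a, b, c, d, 1; e, 1, 0, 0, 0; f, 0, g, 1, 0;
        h, 0, 1, 0, 0; 1, 0, 0, 0, 0] :=
      ⟨M 0 0, M 0 1, M 0 2, M 0 3, M 1 0, M 2 0, M 2 2, M 3 0, by
        ext i j; rw [hp]; fin_cases i <;> fin_cases j <;> rfl⟩
    simp [q2, q3, q4] at h1 h2 h3 h4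
    have h5 : (a - b * e) * g - c * f ≠ 0 := by contrapose! h3; linarith
    refine ⟨?_, ?_⟩
    · simp [cr_cm]
      refine ⟨⟨⟨⟨h2, h5⟩, ?_⟩, ?_⟩, h1⟩
      · contrapose! h3; linarith
      · contrapose! h4; linarith
    · simp [move_eq h5]
  · rintro ⟨⟨⟨⟨⟨⟨o, x⟩, y⟩, u⟩, c⟩, s⟩, k⟩ ⟨⟨⟨⟨⟨h1, h2⟩, h3⟩, h4⟩, h5⟩, h6⟩
    simp only at h1 h2 h3 h4 h5 h6
    have e1 := lam_re (x := x) h3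
    have e2 := lam_im (x := x) h3
    have e := close_eq (r := u) h5
    have e3 : (cr x y / cr u y) * (cr u c / c.im) ≠ 0 :=
      mul_ne_zero (div_ne_zero h2 (cr_ne h3)) (div_ne_zero h4 h5)
    rw [XM5_iff]
    refine ⟨by intro i j; fin_cases i <;> fin_cases j <;> rfl, ?_, ?_, ?_, ?_⟩
    · simpa using h6
    · simpa [q2, cr] using h1
    · intro h0
      simp [q3] at h0
      apply h2; unfold cr; linarith
    · intro h0
      simp [q4] at h0
      apply e3; rw [e, mul_sub, ← mul_assoc, ← e1, ← e2]; linarith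

theorem Qcase {A B : Type*} [TopologicalSpace A] [TopologicalSpace B] [TopologicalSpace.MetrizableSpace A]
    [TopologicalSpace.MetrizableSpace B] {S : Set A} {T : Set B}
    {w : A → ℂ} {v : B → ℂ} (h : MA S w) (k : MA T v) {e f : ℝ}
    (he : e = 1 ∨ e = -1) (hf : f = 1 ∨ f = -1) :
    DC {p : (((A × B) × ℂ) × ℝ) × ℝ | p.1.1.1 ∈ S ×ˢ T ∧
      0 < e * (cr (w p.1.1.1.1) (v p.1.1.1.2) - p.1.2 * cr p.1.1.2 (v p.1.1.1.2)) ∧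
      0 < f * (cr (w p.1.1.1.1) (v p.1.1.1.2) + p.2 * cr (w p.1.1.1.1) p.1.1.2)} := by
  have he0 : e ≠ 0 := by rcases he with rfl | rfl <;> norm_num
  have hf0 : f ≠ 0 := by rcases hf with rfl | rfl <;> norm_num
  have hw : ContinuousOn (fun p : (A × B) × ℂ => w p.1.1) {p | p.1 ∈ S ×ˢ T} :=
    h.1.comp (by fun_prop) (fun p hp => hp.1)
  have hv : ContinuousOn (fun p : (A × B) × ℂ => v p.1.2) {p | p.1 ∈ S ×ˢ T} :=
    k.1.comp (by fun_prop) (fun p hp => hp.2)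
  have hz : ContinuousOn (fun p : (A × B) × ℂ => p.2) {p | p.1 ∈ S ×ˢ T} := by fun_prop
  have c1 := cr_continuousOn hw hv
  have c2 := cr_continuousOn hz hv
  have c3 := cr_continuousOn hw hz
  have s1 := DC_elim (S := {p : (A × B) × ℂ | p.1 ∈ S ×ˢ T ∧
      (cr (w p.1.1) p.2 ≠ 0 ∨ 0 < f * cr (w p.1.1) (v p.1.2))})
    (fun p => - e * cr p.2 (v p.1.2)) (fun p => e * cr (w p.1.1) (v p.1.2))
    (continuousOn_const.mul (c2.mono (fun p hp => hp.1)))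
    (continuousOn_const.mul (c1.mono (fun p hp => hp.1)))
    (by convert MA.Q h k he hf using 1
        ext p
        simp [he0]
        tauto)
  have m : MapsTo (Prod.fst : ((A × B) × ℂ) × ℝ → (A × B) × ℂ)
    {p : ((A × B) × ℂ) × ℝ | p.1.1 ∈ S ×ˢ T ∧
      0 < e * (cr (w p.1.1.1) (v p.1.1.2) - p.2 * cr p.1.2 (v p.1.1.2))} {p | p.1 ∈ S ×ˢ T} := fun p hp => hp.1
  have s2 := DC_elim (S := {p : ((A × B) × ℂ) × ℝ | p.1.1 ∈ S ×ˢ T ∧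
      0 < e * (cr (w p.1.1.1) (v p.1.1.2) - p.2 * cr p.1.2 (v p.1.1.2))})
    (fun p => f * cr (w p.1.1.1) p.1.2) (fun p => f * cr (w p.1.1.1) (v p.1.1.2))
    (continuousOn_const.mul (c3.comp continuousOn_fst m))
    (continuousOn_const.mul (c1.comp continuousOn_fst m))
    (by convert s1 using 1
        ext p
        have : e * cr (w p.1.1.1) (v p.1.1.2) + p.2 * (- e * cr p.1.2 (v p.1.1.2)) =
          e * (cr (w p.1.1.1) (v p.1.1.2) - p.2 * cr p.1.2 (v p.1.1.2)) := by ring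
        simp only [mem_setOf_eq, this]
        simp [hf0]
        tauto)
  convert s2 using 1
  ext p
  have : f * cr (w p.1.1.1.1) (v p.1.1.1.2) + p.2 * (f * cr (w p.1.1.1.1) p.1.1.2) =
     f * (cr (w p.1.1.1.1) (v p.1.1.1.2) + p.2 * cr (w p.1.1.1.1) p.1.1.2) := by ring
  simp only [mem_setOf_eq, this]
  tauto


theorem q_split {w : Equiv.Perm (Fin 5)}
    (h : ∀ e f : ℝ, (e = 1 ∨ e = -1) → (f = 1 ∨ f = -1) →
      DC {M ∈ XM 5 w | 0 < e * q3 M 0 1 2 ∧ 0 < f * q2 M 0 1}) : DC (XM 5 w) := by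
  refine DC_sign (fun M => q3 M 0 1 2) (by unfold q3; fun_prop) (fun M hM => ((XM5_iff w M).1 hM).2.2.2.1) ?_
  intro e he
  refine DC_sign (fun M => q2 M 0 1) (by unfold q2; fun_prop) (fun M hM => ((XM5_iff w M).1 hM.1).2.2.1) ?_
  intro f hf
  convert h e f he hf using 1
  ext M; simp; tauto

def r45312 : Equiv.Perm (Fin 5) := ⟨![3,4,2,0,1], ![3,4,2,0,1], by decide, by decide⟩

theorem DC45312 : DC (XM 5 r45312) := by
  apply q_split
  intro e f he hf
  refine (Qcase MA.baseRe MA.baseIm he hf).retract2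
    (fun M => ((((((), cm (M 0 0) (M 0 1)), ((), cm (M 1 0 - M 1 2 * M 2 0) (M 1 1 - M 1 2 * M 2 1))),
      cm (M 2 0) (M 2 1)), M 0 2), M 1 2))
    (fun p => !![p.1.1.1.1.2.re, p.1.1.1.1.2.im, p.1.2, 1, 0;
      p.1.1.1.2.2.re + p.2 * p.1.1.2.re, p.1.1.1.2.2.im + p.2 * p.1.1.2.im, p.2, 0, 1;
      p.1.1.2.re, p.1.1.2.im, 1, 0, 0; 1, 0, 0, 0, 0; 0, 1, 0, 0, 0])
    (by fun_prop) ?_ ?_ ?_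
  · refine contOn_mat fun i j => ?_
    fin_cases i <;> fin_cases j <;> first
      | exact continuousOn_const
      | (simp; fun_prop)
  · rintro M ⟨hM, k3, k2⟩
    rw [XM5_iff] at hM
    obtain ⟨hp, h1, h2, h3, h4⟩ := hM
    obtain ⟨x1, x2, x3, y1, y2, y3, z1, z2, rfl⟩ : ∃ x1 x2 x3 y1 y2 y3 z1 z2, M = !![x1, x2, x3, 1, 0;
        y1, y2, y3, 0, 1; z1, z2, 1, 0, 0; 1, 0, 0, 0, 0; 0, 1, 0, 0, 0] :=
      ⟨M 0 0, M 0 1, M 0 2, M 1 0, M 1 1, M 1 2, M 2 0, M 2 1, by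
        ext i j; rw [hp]; fin_cases i <;> fin_cases j <;> rfl⟩
    simp [q2, q3, q4] at h1 h2 h3 h4 k2 k3
    refine ⟨?_, ?_⟩
    · simp [cr_cm]
      refine ⟨⟨h1, ?_⟩, ?_, ?_⟩
      · contrapose! h4; linarith
      · convert k3 using 2; ring
      · convert k2 using 2; ring
    · simp
  · rintro ⟨⟨⟨⟨⟨o, x⟩, ⟨o', v⟩⟩, z⟩, p⟩, q⟩ ⟨⟨h1, h2⟩, h3, h4⟩
    simp only [mem_setOf_eq] at h1 h2 h3 h4
    have k3 : cr x v - p * cr z v ≠ 0 := by intro h0; rw [h0] at h3; simp at h3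
    have k4 : cr x v + q * cr x z ≠ 0 := by intro h0; rw [h0] at h4; simp at h4
    refine ⟨?_, ?_, ?_⟩
    · rw [XM5_iff]
      refine ⟨by intro i j; fin_cases i <;> fin_cases j <;> rfl, ?_, ?_, ?_, ?_⟩
      · simpa using h1
      · intro h0
        simp [q2] at h0
        apply k4; unfold cr; linarith
      · intro h0
        simp [q3] at h0
        apply k3; unfold cr; linarith
      · intro h0
        simp [q4] at h0
        apply h2; linarith
    · convert h3 using 2
      simp [q3, cr]; ring
    · convert h4 using 2
      simp [q2, cr]; ring

def r54312 : Equiv.Perm (Fin 5) := ⟨![4,3,2,0,1], ![3,4,2,1,0], by decide, by decide⟩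

theorem DC54312 : DC (XM 5 r54312) := by
  apply q_split
  intro e f he hf
  refine (Qcase MA.baseRe MA.baseIm.step he hf).retract2
    (fun M => ((((((), cm (M 0 0) (M 0 1)), (((), cm (M 0 0 - M 0 2 * M 2 0 - M 0 3 * (M 1 0 - M 1 2 * M 2 0))
        (M 0 1 - M 0 2 * M 2 1 - M 0 3 * (M 1 1 - M 1 2 * M 2 1))),
        cm (M 1 0 - M 1 2 * M 2 0) (M 1 1 - M 1 2 * M 2 1))),
      cm (M 2 0) (M 2 1)), M 0 2), M 1 2))
    (fun p => !![p.1.1.1.1.2.re, p.1.1.1.1.2.im, p.1.2,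
        cr p.1.1.1.2.1.2 (cm (p.1.1.1.1.2.re - p.1.2 * p.1.1.2.re) (p.1.1.1.1.2.im - p.1.2 * p.1.1.2.im)) /
          cr p.1.1.1.2.1.2 p.1.1.1.2.2, 1;
      p.1.1.1.2.2.re + p.2 * p.1.1.2.re, p.1.1.1.2.2.im + p.2 * p.1.1.2.im, p.2, 1, 0;
      p.1.1.2.re, p.1.1.2.im, 1, 0, 0; 1, 0, 0, 0, 0; 0, 1, 0, 0, 0])
    (by fun_prop) ?_ ?_ ?_
  · refine contOn_mat fun i j => ?_
    fin_cases i <;> fin_cases j <;> first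
      | exact continuousOn_const
      | exact quot_contOn (by fun_prop) (by fun_prop) (by fun_prop) (fun p hp => cr_ne hp.1.2.2)
      | (simp; fun_prop)
  · rintro M ⟨hM, k3, k2⟩
    rw [XM5_iff] at hM
    obtain ⟨hp, h1, h2, h3, h4⟩ := hM
    obtain ⟨x1, x2, x3, x4, y1, y2, y3, z1, z2, rfl⟩ : ∃ x1 x2 x3 x4 y1 y2 y3 z1 z2, M = !![x1, x2, x3, x4, 1;
        y1, y2, y3, 1, 0; z1, z2, 1, 0, 0; 1, 0, 0, 0, 0; 0, 1, 0, 0, 0] :=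
      ⟨M 0 0, M 0 1, M 0 2, M 0 3, M 1 0, M 1 1, M 1 2, M 2 0, M 2 1, by
        ext i j; rw [hp]; fin_cases i <;> fin_cases j <;> rfl⟩
    simp [q2, q3, q4] at h1 h2 h3 h4 k2 k3
    have h5 : (x1 - x3 * z1) * (y2 - y3 * z2) - (x2 - x3 * z2) * (y1 - y3 * z1) ≠ 0 := by
      contrapose! h3; linarith
    refine ⟨?_, ?_⟩
    · simp [cr_cm]
      refine ⟨⟨h1, ?_, ?_⟩, ?_, ?_⟩
      · contrapose! h4; linarith
      · contrapose! h5; linarith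
      · convert k3 using 2; ring
      · convert k2 using 2; ring
    · simp [move_eq h5]
  · rintro ⟨⟨⟨⟨⟨o, x⟩, ⟨⟨o', r⟩, v⟩⟩, z⟩, p⟩, q⟩ ⟨⟨h1, h2, h5⟩, h3, h4⟩
    simp only [mem_setOf_eq] at h1 h2 h3 h4 h5
    have k3 : cr x v - p * cr z v ≠ 0 := by intro h0; rw [h0] at h3; simp at h3
    have k4 : cr x v + q * cr x z ≠ 0 := by intro h0; rw [h0] at h4; simp at h4
    have e2 := lam_im (x := cm (x.re - p * z.re) (x.im - p * z.im)) (cr_ne h5)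
    have e4 : cr (cm (x.re - p * z.re) (x.im - p * z.im)) v = cr x v - p * cr z v := by simp [cr]; ring
    rw [← e4] at k3
    have e3 := mul_ne_zero (div_ne_zero k3 h5) h2
    rw [← e2] at e3
    rw [e4] at k3
    simp only [cm_im] at e3
    refine ⟨?_, ?_, ?_⟩
    · rw [XM5_iff]
      refine ⟨by intro i j; fin_cases i <;> fin_cases j <;> rfl, ?_, ?_, ?_, ?_⟩
      · simpa using h1
      · intro h0
        simp [q2] at h0
        apply k4; unfold cr; linarith
      · intro h0
        simp [q3] at h0
        apply k3; unfold cr; linarith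
      · intro h0
        simp [q4] at h0
        apply e3; linarith
    · convert h3 using 2
      simp [q3, cr]; ring
    · convert h4 using 2
      simp [q2, cr]; ring

def r54321 : Equiv.Perm (Fin 5) := ⟨![4,3,2,1,0], ![4,3,2,1,0], by decide, by decide⟩

theorem DC54321 : DC (XM 5 r54321) := by
  apply q_split
  intro e f he hf
  refine (Qcase MA.baseRe MA.baseIm.step.step he hf).retract2
    (fun M => ((((((), cm (M 0 0) (M 0 1)), ((((), cm (M 3 0) 1),
        cm (M 0 0 - M 0 2 * M 2 0 - M 0 3 * (M 1 0 - M 1 2 * M 2 0))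
        (M 0 1 - M 0 2 * M 2 1 - M 0 3 * (M 1 1 - M 1 2 * M 2 1))),
        cm (M 1 0 - M 1 2 * M 2 0) (M 1 1 - M 1 2 * M 2 1))),
      cm (M 2 0) (M 2 1)), M 0 2), M 1 2))
    (fun p => !![p.1.1.1.1.2.re, p.1.1.1.1.2.im, p.1.2,
        cr p.1.1.1.2.1.2 (cm (p.1.1.1.1.2.re - p.1.2 * p.1.1.2.re) (p.1.1.1.1.2.im - p.1.2 * p.1.1.2.im)) /
          cr p.1.1.1.2.1.2 p.1.1.1.2.2, 1;
      p.1.1.1.2.2.re + p.2 * p.1.1.2.re, p.1.1.1.2.2.im + p.2 * p.1.1.2.im, p.2, 1, 0;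
      p.1.1.2.re, p.1.1.2.im, 1, 0, 0; p.1.1.1.2.1.1.2.re / p.1.1.1.2.1.1.2.im, 1, 0, 0, 0; 1, 0, 0, 0, 0])
    (by fun_prop) ?_ ?_ ?_
  · refine contOn_mat fun i j => ?_
    fin_cases i <;> fin_cases j <;> first
      | exact continuousOn_const
      | exact rat_contOn (by fun_prop) (fun p hp => hp.1.2.1.1)
      | exact quot_contOn (by fun_prop) (by fun_prop) (by fun_prop) (fun p hp => cr_ne hp.1.2.2)
      | (simp; fun_prop)
  · rintro M ⟨hM, k3, k2⟩
    rw [XM5_iff] at hM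
    obtain ⟨hp, h1, h2, h3, h4⟩ := hM
    obtain ⟨x1, x2, x3, x4, y1, y2, y3, z1, z2, t, rfl⟩ : ∃ x1 x2 x3 x4 y1 y2 y3 z1 z2 t, M = !![x1, x2, x3, x4, 1;
        y1, y2, y3, 1, 0; z1, z2, 1, 0, 0; t, 1, 0, 0, 0; 1, 0, 0, 0, 0] :=
      ⟨M 0 0, M 0 1, M 0 2, M 0 3, M 1 0, M 1 1, M 1 2, M 2 0, M 2 1, M 3 0, by
        ext i j; rw [hp]; fin_cases i <;> fin_cases j <;> rfl⟩
    simp [q2, q3, q4] at h1 h2 h3 h4 k2 k3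
    have h5 : (x1 - x3 * z1) * (y2 - y3 * z2) - (x2 - x3 * z2) * (y1 - y3 * z1) ≠ 0 := by
      contrapose! h3; linarith
    refine ⟨?_, ?_⟩
    · simp [cr_cm]
      refine ⟨⟨h1, ?_, ?_⟩, ?_, ?_⟩
      · contrapose! h4; linarith
      · contrapose! h5; linarith
      · convert k3 using 2; ring
      · convert k2 using 2; ring
    · simp [move_eq h5]
  · rintro ⟨⟨⟨⟨⟨o, x⟩, ⟨⟨⟨o', c⟩, r⟩, v⟩⟩, z⟩, p⟩, q⟩ ⟨⟨h1, ⟨h2, h6⟩, h5⟩, h3, h4⟩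
    simp only [mem_setOf_eq] at h1 h2 h3 h4 h5 h6
    have k3 : cr x v - p * cr z v ≠ 0 := by intro h0; rw [h0] at h3; simp at h3
    have k4 : cr x v + q * cr x z ≠ 0 := by intro h0; rw [h0] at h4; simp at h4
    have e1 := lam_re (x := cm (x.re - p * z.re) (x.im - p * z.im)) (cr_ne h5)
    have e2 := lam_im (x := cm (x.re - p * z.re) (x.im - p * z.im)) (cr_ne h5)
    have e4 : cr (cm (x.re - p * z.re) (x.im - p * z.im)) v = cr x v - p * cr z v := by simp [cr]; ring
    rw [← e4] at k3
    have e3 := mul_ne_zero (div_ne_zero k3 h5) (div_ne_zero (cr_ne h6) h2)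
    rw [close_eq h2, mul_sub, ← mul_assoc, ← e1, ← e2] at e3
    rw [e4] at k3
    simp only [cm_im, cm_re] at e3
    refine ⟨?_, ?_, ?_⟩
    · rw [XM5_iff]
      refine ⟨by intro i j; fin_cases i <;> fin_cases j <;> rfl, ?_, ?_, ?_, ?_⟩
      · simpa using h1
      · intro h0
        simp [q2] at h0
        apply k4; unfold cr; linarith
      · intro h0
        simp [q3] at h0
        apply k3; unfold cr; linarith
      · intro h0
        simp [q4] at h0
        apply e3; linarith
    · convert h3 using 2
      simp [q3, cr]; ring
    · convert h4 using 2
      simp [q2, cr]; ring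


theorem DC_JJ {m : ℕ} {w : Equiv.Perm (Fin m)} (h : DC (XM m (rJ m * w * rJ m))) : DC (XM m w) := by
  apply DC_inv
  apply DC_J
  rwa [inv_inv]

theorem DC_four {m : ℕ} (G : Equiv.Perm (Fin m) → Prop) (hG : ∀ w, G w → DC (XM m w))
    (h : ∀ w, G w ∨ G w⁻¹ ∨ G (rJ m * w⁻¹ * rJ m) ∨ G (rJ m * w * rJ m)) : ∀ w, DC (XM m w) := by
  intro w
  rcases h w with h | h | h | h
  · exact hG w h
  · exact DC_inv (hG _ h)
  · exact DC_J (hG _ h)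
  · exact DC_JJ (hG _ h)

theorem P0 : ∀ w, DC (XM 0 w) := DC_zero
theorem P1 : ∀ w, DC (XM 1 w) := fun w => DC_red P0 w (by omega)
theorem P2 : ∀ w, DC (XM 2 w) := fun w => DC_red P1 w (by omega)

theorem P3 : ∀ w, DC (XM 3 w) := by
  refine DC_four (fun w => (w 0).val ≤ 1 ∨ w = r321) ?_ (by unfold rJ; decide +kernel)
  rintro w (h | rfl)
  · exact DC_red P2 w h
  · exact DC321

theorem P4 : ∀ w, DC (XM 4 w) := by
  refine DC_four (fun w => (w 0).val ≤ 1 ∨ w = r4231 ∨ w = r3412 ∨ w = r3421 ∨ w = r4321) ?_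
    (by unfold rJ; decide +kernel)
  rintro w (h | rfl | rfl | rfl | rfl)
  · exact DC_red P3 w h
  · exact DC4231
  · exact DC3412
  · exact DC3421
  · exact DC4321

theorem P5 : ∀ w, DC (XM 5 w) := by
  refine DC_four (fun w => (w 0).val ≤ 1 ∨ w ∈ [r52341, r52431, r32541, r35241, r35142,
      r34512, r34521, r35412, r35421, r53412, r53421, r45312, r54312, r54321]) ?_
    (by unfold rJ; decide +kernel)
  intro w hw
  simp only [List.mem_cons, List.not_mem_nil, or_false] at hw
  revert w
  rintro w (h | rfl | rfl | rfl | rfl | rfl | rfl | rfl | rfl | rfl | rfl | rfl | rfl | rfl | rfl)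
  · exact DC_red P4 w h
  · exact DC52341
  · exact DC52431
  · exact DC32541
  · exact DC35241
  · exact DC35142
  · exact DC34512
  · exact DC34521
  · exact DC35412
  · exact DC35421
  · exact DC53412
  · exact DC53421
  · exact DC45312
  · exact DC54312
  · exact DC54321

theorem main_BL (σ : Equiv.Perm (Fin 5)) (L : ↥(BL 5 σ)) : ContractibleSpace ↥(connectedComponent L) :=
  ((DC_BL_iff σ).2 (P5 σ)).contractible L


end helpers

/-- for every permutation `σ ∈ S₅`, every connected component of
`BL_σ ⊂ Lo¹₅` is contractible. -/
theorem stmt8 (σ : Equiv.Perm (Fin 5)) :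
    ∀ L : ↥(BL 5 σ), ContractibleSpace ↥(connectedComponent L) := by
  intro L
  exact main_BL σ L
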